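/- arXiv:2410.07098 — 2 statements merged into one kernel-verified Lean document; each statement's English description precedes it below -/
import Mathlib

section
/- For every ε > 0 there exists c > 0 such that the following holds for all sufficiently large n. Let G be an ordered graph on n vertices containing no induced monotone path P_5. If the complement Ḡ of G contains at least ε·n³ copies of K_3 (triangles), then Ḡ contains the complete bipartite graph K_2[t] with t = ⌈c·n/log n⌉. -/
/-- The number of `r`-element vertex subsets of `G` inducing a complete subgraph
(copies of `K_r`). -/
noncomputable def cliqueCount {V : Type*} [Fintype V] (G : SimpleGraph V) (r : ℕ) : ℕ :=
  Set.ncard {s : Finset V | s.card = r ∧ G.IsClique (s : Set V)}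

/-- `G` contains `K_r[t]`: `r` pairwise disjoint vertex sets of size `t` with all
pairs of vertices from distinct sets adjacent. -/
def ContainsBlowup {V : Type*} (G : SimpleGraph V) (r t : ℕ) : Prop :=
  ∃ A : Fin r → Finset V,
    (∀ i, (A i).card = t) ∧
    (∀ i j, i ≠ j → Disjoint (A i) (A j)) ∧
    (∀ i j, i ≠ j → ∀ x ∈ A i, ∀ y ∈ A j, G.Adj x y)

/-- The ordered graph `G` on `Fin n` contains an induced monotone path with `m`
vertices: `v 0 < v 1 < ⋯ < v (m-1)` with adjacency exactly between consecutive
vertices. -/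
def HasIndMonPath {n : ℕ} (G : SimpleGraph (Fin n)) (m : ℕ) : Prop :=
  ∃ v : Fin m → Fin n, StrictMono v ∧
    ∀ i j : Fin m, G.Adj (v i) (v j) ↔ ((i : ℕ) + 1 = (j : ℕ) ∨ (j : ℕ) + 1 = (i : ℕ))

section
open Finset Classical
universe u
variable {V : Type u} [LinearOrder V]

/-- `Reach G S x y`: there is an increasing path of `G` from `x` to `y` with all vertices after `x`
in `S`. -/
def Reach (G : SimpleGraph V) (S : Finset V) : V → V → Prop :=
  Relation.TransGen fun a b => a < b ∧ G.Adj a b ∧ b ∈ S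

theorem Reach.mem {G : SimpleGraph V} {S : Finset V} {x y : V} (h : Reach G S x y) : y ∈ S := by
  cases h with
  | single h => exact h.2.2
  | tail _ h => exact h.2.2

theorem Reach.lt {G : SimpleGraph V} {S : Finset V} {x y : V} (h : Reach G S x y) : x < y := by
  induction h with
  | single h => exact h.1
  | tail _ h ih => exact ih.trans h.1

theorem Reach.mono {G : SimpleGraph V} {S T : Finset V} (hST : S ⊆ T) {x y : V}
    (h : Reach G S x y) : Reach G T x y :=
  Relation.TransGen.mono (fun _ _ h => ⟨h.1, h.2.1, hST h.2.2⟩) _ _ h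

/-- Along a path from `x` to a non-neighbour of `x` there is an induced path on three vertices
starting at `x`. -/
theorem Reach.exists_induced {G : SimpleGraph V} {S : Finset V} {x w : V} (h : Reach G S x w)
    (hw : ¬ G.Adj x w) :
    ∃ y ∈ S, ∃ z ∈ S, x < y ∧ y < z ∧ G.Adj x y ∧ G.Adj y z ∧ ¬ G.Adj x z := by
  induction h with
  | single h => exact absurd h.2.1 hw
  | @tail b c hb hc ih =>
    by_cases hxb : G.Adj x b
    · exact ⟨b, Reach.mem hb, c, hc.2.2, Reach.lt hb, hc.1, hxb, hc.2.1, hw⟩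
    · exact ih hxb

/-- A path from `x` to a non-neighbour of `x` can be shortened so that it avoids the neighbours of
`x` after its first step. -/
theorem Reach.exists_step {G : SimpleGraph V} {S : Finset V} {x w : V} (h : Reach G S x w)
    (hw : ¬ G.Adj x w) :
    ∃ v ∈ S, x < v ∧ G.Adj x v ∧ Reach G (S.filter fun y => ¬ G.Adj x y) v w := by
  induction h with
  | single h => exact absurd h.2.1 hw
  | @tail b c hb hc ih =>
    by_cases hxb : G.Adj x b
    · exact ⟨b, Reach.mem hb, Reach.lt hb, hxb, .single ⟨hc.1, hc.2.1, by simp [hc.2.2, hw]⟩⟩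
    · obtain ⟨v, hv, hlt, hadj, hr⟩ := ih hxb
      exact ⟨v, hv, hlt, hadj, .tail hr ⟨hc.1, hc.2.1, by simp [hc.2.2, hw]⟩⟩

theorem exists_initial_segment (F : Finset V) (k : ℕ) (hk : k ≤ #F) :
    ∃ I ⊆ F, #I = k ∧ ∀ x ∈ I, ∀ y ∈ F \ I, x < y := by
  induction k with
  | zero => exact ⟨∅, by simp, by simp, by simp⟩
  | succ k ih =>
    obtain ⟨I, hI, hc, hlt⟩ := ih (by omega)
    have hne : (F \ I).Nonempty := by
      rw [← card_pos, card_sdiff_of_subset hI]; omega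
    set m := (F \ I).min' hne with hm
    have hmem := (F \ I).min'_mem hne
    rw [← hm] at hmem
    refine ⟨insert m I, ?_, ?_, ?_⟩
    · intro y hy
      rcases mem_insert.1 hy with rfl | hy
      · exact (mem_sdiff.1 hmem).1
      · exact hI hy
    · rw [card_insert_of_notMem (mem_sdiff.1 hmem).2, hc]
    · intro x hx y hy
      simp only [mem_sdiff, mem_insert, not_or] at hy
      rcases mem_insert.1 hx with rfl | hx
      · exact lt_of_le_of_ne (min'_le _ _ (by simp [hy])) (Ne.symm hy.2.1)
      · exact hlt x hx y (by simp [hy])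

theorem exists_card_filter_le_eq (F : Finset V) (k : ℕ) (hk : k ≤ #F) (hk0 : 0 < k) :
    ∃ p, #(F.filter (· ≤ p)) = k := by
  obtain ⟨I, hI, hc, hlt⟩ := exists_initial_segment F k hk
  have hne : I.Nonempty := by rw [← card_pos]; omega
  refine ⟨I.max' hne, ?_⟩
  rw [← hc]
  congr 1
  ext y
  simp only [mem_filter]
  constructor
  · rintro ⟨hy, hle⟩
    by_contra hn
    exact absurd (hlt _ (I.max'_mem hne) y (by simp [hy, hn])) (not_lt.2 hle)
  · exact fun hy => ⟨hI hy, le_max' _ _ hy⟩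

/-- Any two sets of size `t`, one of which precedes the other, are joined by an edge. -/
def HoleFree (G : SimpleGraph V) (t : ℕ) : Prop :=
  ∀ X Y : Finset V, (∀ x ∈ X, ∀ y ∈ Y, x < y) → t ≤ #X → t ≤ #Y → ∃ x ∈ X, ∃ y ∈ Y, G.Adj x y

theorem HoleFree.card_lt {G : SimpleGraph V} {t : ℕ} (h : HoleFree G t) {X Y : Finset V}
    (hXY : ∀ x ∈ X, ∀ y ∈ Y, x < y) (hX : t ≤ #X) (hn : ∀ x ∈ X, ∀ y ∈ Y, ¬ G.Adj x y) :
    #Y < t := by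
  by_contra! hY
  obtain ⟨x, hx, y, hy, ha⟩ := h X Y hXY hX hY
  exact hn x hx y hy ha

theorem HoleFree.card_unreached_lt {G : SimpleGraph V} {t : ℕ} (h : HoleFree G t) {X S : Finset V}
    {p : V} (hX : t ≤ #(S.filter fun y => y ≤ p ∧ ∃ x ∈ X, Reach G S x y)) :
    #(S.filter fun y => p < y ∧ ∀ x ∈ X, ¬ Reach G S x y) < t := by
  refine h.card_lt ?_ hX ?_
  · intro x hx y hy
    exact (mem_filter.1 hx).2.1.trans_lt (mem_filter.1 hy).2.1
  · intro x hx y hy ha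
    obtain ⟨_, hxp, z, hz, hr⟩ := mem_filter.1 hx
    obtain ⟨hyS, hpy, hno⟩ := mem_filter.1 hy
    exact hno z hz (.tail hr ⟨hxp.trans_lt hpy, ha, hyS⟩)

/-- If a set `X` reaches many vertices of `S` then a single vertex of `X` reaches almost all of the
later vertices of `S`. -/
theorem HoleFree.exists_reach {G : SimpleGraph V} {t : ℕ} (h : HoleFree G t) (ht : 1 ≤ t)
    (S : Finset V) (L : ℕ) : ∀ (X : Finset V) (p : V), #X ≤ 2 ^ L →
    t ≤ #(S.filter fun y => y ≤ p ∧ ∃ x ∈ X, Reach G S x y) →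
    ∃ x ∈ X, #(S.filter fun y => p < y ∧ ¬ Reach G S x y) ≤ (3 * L + 1) * t := by
  induction L with
  | zero =>
    intro X p hX hr
    have hlt := h.card_unreached_lt hr
    obtain ⟨y, hy⟩ := card_pos.1 (ht.trans hr)
    obtain ⟨_, _, x, hx, _⟩ := mem_filter.1 hy
    refine ⟨x, hx, ?_⟩
    have hX1 : ∀ z ∈ X, z = x := fun z hz => card_le_one.1 (by simpa using hX) z hz x hx
    refine (card_le_card fun y hy => ?_).trans (hlt.le.trans (by omega))
    simp only [mem_filter] at hy ⊢
    exact ⟨hy.1, hy.2.1, fun z hz => hX1 z hz ▸ hy.2.2⟩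
  | succ L ih =>
    intro X p hX hr
    have hlt := h.card_unreached_lt hr
    obtain ⟨y, hy⟩ := card_pos.1 (ht.trans hr)
    obtain ⟨_, _, x, hx, _⟩ := mem_filter.1 hy
    rcases le_total (#(S.filter (p < ·))) (3 * t) with hsm | hbig
    · refine ⟨x, hx, le_trans (card_le_card fun y hy => ?_) (hsm.trans (by nlinarith))⟩
      simp only [mem_filter] at hy ⊢
      exact ⟨hy.1, hy.2.1⟩
    · obtain ⟨q, hq⟩ := exists_card_filter_le_eq _ _ hbig (by omega)
      rw [filter_filter] at hq
      obtain ⟨X₁, hX₁, hc⟩ := exists_subset_card_eq (Nat.div_le_self #X 2)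
      have hc₂ := card_sdiff_of_subset hX₁
      rw [pow_succ] at hX
      have key : ∃ X' ⊆ X, #X' ≤ 2 ^ L ∧
          t ≤ #(S.filter fun y => y ≤ q ∧ ∃ x ∈ X', Reach G S x y) := by
        by_contra! hno
        have h1 := hno X₁ hX₁ (by omega)
        have h2 := hno (X \ X₁) sdiff_subset (by omega)
        have hsub : (S.filter fun y => p < y ∧ y ≤ q) ⊆
            (S.filter fun y => y ≤ q ∧ ∃ x ∈ X₁, Reach G S x y) ∪
            ((S.filter fun y => y ≤ q ∧ ∃ x ∈ X \ X₁, Reach G S x y) ∪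
            (S.filter fun y => p < y ∧ ∀ x ∈ X, ¬ Reach G S x y)) := by
          intro y hy
          simp only [mem_filter, mem_union] at hy ⊢
          by_cases hall : ∀ x ∈ X, ¬ Reach G S x y
          · exact .inr (.inr ⟨hy.1, hy.2.1, hall⟩)
          · push Not at hall
            obtain ⟨z, hz, hzr⟩ := hall
            by_cases hz1 : z ∈ X₁
            · exact .inl ⟨hy.1, hy.2.2, z, hz1, hzr⟩
            · exact .inr (.inl ⟨hy.1, hy.2.2, z, by simp [hz, hz1], hzr⟩)
        have := (card_le_card hsub).trans ((card_union_le _ _).trans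
          (Nat.add_le_add_left (card_union_le _ _) _))
        omega
      obtain ⟨X', hX', hcX', hrX'⟩ := key
      obtain ⟨z, hz, hle⟩ := ih X' q hcX' hrX'
      refine ⟨z, hX' hz, ?_⟩
      have hsub : (S.filter fun y => p < y ∧ ¬ Reach G S z y) ⊆
          (S.filter fun y => p < y ∧ y ≤ q) ∪ (S.filter fun y => q < y ∧ ¬ Reach G S z y) := by
        intro y hy
        simp only [mem_filter, mem_union] at hy ⊢
        rcases le_or_gt y q with hyq | hyq
        · exact .inl ⟨hy.1, hy.2.1, hyq⟩
        · exact .inr ⟨hy.1, hyq, hy.2.2⟩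
      have := (card_le_card hsub).trans (card_union_le _ _)
      nlinarith

/-- `G` has no induced monotone path on five vertices, and pairs of sets of size about
`σ / log |V|` are joined by edges. -/
structure Tame (G : SimpleGraph V) (σ : ℝ) : Prop where
  noPath : ∀ a b c d e : V, a < b → b < c → c < d → d < e →
    G.Adj a b → G.Adj b c → G.Adj c d → G.Adj d e →
    ¬ G.Adj a c → ¬ G.Adj a d → ¬ G.Adj a e → ¬ G.Adj b d → ¬ G.Adj b e → ¬ G.Adj c e → False
  exists_holeFree : ∃ t L : ℕ, 1 ≤ t ∧ (∀ X : Finset V, #X ≤ 2 ^ L) ∧ HoleFree G t ∧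
    ((3 * L + 1) * t : ℝ) ≤ σ

namespace Tame
variable {G : SimpleGraph V} {σ : ℝ}

theorem one_le (h : Tame G σ) : 1 ≤ σ := by
  obtain ⟨t, L, ht, -, -, hσ⟩ := h.exists_holeFree
  have : (1 : ℝ) ≤ t := by exact_mod_cast ht
  nlinarith [mul_nonneg (Nat.cast_nonneg (α := ℝ) L) (Nat.cast_nonneg (α := ℝ) t)]

theorem card_lt (h : Tame G σ) {X Y : Finset V}
    (hXY : ∀ x ∈ X, ∀ y ∈ Y, x < y) (hX : σ ≤ #X) (hn : ∀ x ∈ X, ∀ y ∈ Y, ¬ G.Adj x y) :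
    (#Y : ℝ) < σ := by
  obtain ⟨t, L, ht, -, hole, hσ⟩ := h.exists_holeFree
  have htσ : (t : ℝ) ≤ σ := by
    nlinarith [mul_nonneg (Nat.cast_nonneg (α := ℝ) L) (Nat.cast_nonneg (α := ℝ) t)]
  have := hole.card_lt hXY (by exact_mod_cast htσ.trans hX) hn
  exact lt_of_lt_of_le (by exact_mod_cast this) htσ

theorem exists_reach (h : Tame G σ) (S X : Finset V) (p : V)
    (hr : σ ≤ #(S.filter fun y => y ≤ p ∧ ∃ x ∈ X, Reach G S x y)) :
    ∃ x ∈ X, (#(S.filter fun y => p < y ∧ ¬ Reach G S x y) : ℝ) ≤ σ := by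
  obtain ⟨t, L, ht, hL, hole, hσ⟩ := h.exists_holeFree
  have htσ : (t : ℝ) ≤ σ := by
    nlinarith [mul_nonneg (Nat.cast_nonneg (α := ℝ) L) (Nat.cast_nonneg (α := ℝ) t)]
  obtain ⟨x, hx, hle⟩ := hole.exists_reach ht S L X p (hL X) (by exact_mod_cast htσ.trans hr)
  exact ⟨x, hx, le_trans (by exact_mod_cast hle) hσ⟩

theorem exists_reach_of_lt (h : Tame G σ) {S X : Finset V} (hXS : ∀ x ∈ X, ∀ y ∈ S, x < y)
    (hX : σ ≤ #X) : ∃ x ∈ X, (#(S.filter fun y => ¬ Reach G S x y) : ℝ) ≤ 4 * σ := by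
  have h1 := h.one_le
  rcases le_total (#S : ℝ) (4 * σ) with hS | hS
  · obtain ⟨x, hx⟩ := card_pos.1 (by exact_mod_cast h1.trans hX : 0 < #X)
    exact ⟨x, hx, le_trans (by exact_mod_cast card_le_card (filter_subset _ _)) hS⟩
  · have hc1 := Nat.le_ceil (2 * σ)
    have hc2 := Nat.ceil_lt_add_one (by linarith : 0 ≤ 2 * σ)
    obtain ⟨p, hp⟩ := exists_card_filter_le_eq S ⌈2 * σ⌉₊
      (by have : (⌈2 * σ⌉₊ : ℝ) ≤ #S := by linarith
          exact_mod_cast this) (Nat.ceil_pos.2 (by linarith))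
    have hp' : (#(S.filter (· ≤ p)) : ℝ) = ⌈2 * σ⌉₊ := by exact_mod_cast hp
    have hmiss : (#(S.filter fun y => ∀ x ∈ X, ¬ G.Adj x y) : ℝ) < σ := by
      refine h.card_lt (fun x hx y hy => hXS x hx y (mem_filter.1 hy).1) hX ?_
      exact fun x hx y hy => (mem_filter.1 hy).2 x hx
    have hsub : S.filter (· ≤ p) ⊆ (S.filter fun y => y ≤ p ∧ ∃ x ∈ X, Reach G S x y) ∪
        (S.filter fun y => ∀ x ∈ X, ¬ G.Adj x y) := by
      intro y hy
      simp only [mem_filter, mem_union] at hy ⊢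
      by_cases hall : ∀ x ∈ X, ¬ G.Adj x y
      · exact .inr ⟨hy.1, hall⟩
      · push Not at hall
        obtain ⟨x, hx, ha⟩ := hall
        exact .inl ⟨hy.1, hy.2, x, hx, .single ⟨hXS x hx y hy.1, ha, hy.1⟩⟩
    have hle : (#(S.filter (· ≤ p)) : ℝ) ≤
        #(S.filter fun y => y ≤ p ∧ ∃ x ∈ X, Reach G S x y) +
        #(S.filter fun y => ∀ x ∈ X, ¬ G.Adj x y) := by
      exact_mod_cast (card_le_card hsub).trans (card_union_le _ _)
    obtain ⟨x, hx, hxr⟩ := h.exists_reach S X p (by linarith)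
    refine ⟨x, hx, ?_⟩
    have hsub2 : (S.filter fun y => ¬ Reach G S x y) ⊆
        S.filter (· ≤ p) ∪ (S.filter fun y => p < y ∧ ¬ Reach G S x y) := by
      intro y hy
      simp only [mem_filter, mem_union] at hy ⊢
      rcases le_or_gt y p with hyp | hyp
      · exact .inl ⟨hy.1, hyp⟩
      · exact .inr ⟨hy.1, hyp, hy.2⟩
    have hle2 : (#(S.filter fun y => ¬ Reach G S x y) : ℝ) ≤
        #(S.filter (· ≤ p)) + #(S.filter fun y => p < y ∧ ¬ Reach G S x y) := by
      exact_mod_cast (card_le_card hsub2).trans (card_union_le _ _)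
    linarith

end Tame

end

section
open Finset Classical
universe u
variable {V : Type u}

theorem card_le_filter_not_add (B : Finset V) (P : V → Prop) [DecidablePred P]
    [DecidablePred fun y => ¬ P y] :
    (#B : ℝ) ≤ #(B.filter fun y => ¬ P y) + #(B.filter P) := by
  have h := card_filter_add_card_filter_not (s := B) P
  exact_mod_cast (by omega : #B ≤ _)

theorem card_le_filter_not_and_add (B : Finset V) (P Q : V → Prop) [DecidablePred P]
    [DecidablePred Q] [DecidablePred fun y => ¬ P y ∧ ¬ Q y] :
    (#B : ℝ) ≤ #(B.filter fun y => ¬ P y ∧ ¬ Q y) + #(B.filter P) + #(B.filter Q) := by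
  norm_cast
  rw [add_assoc]
  refine (card_le_card fun y hy => ?_).trans
    ((card_union_le _ _).trans (Nat.add_le_add_left (card_union_le _ _) _))
  simp only [mem_union, mem_filter]
  tauto

theorem card_filter_lt_mul_le (X : Finset V) (f : V → ℝ) (hf : ∀ x ∈ X, 0 ≤ f x) (k : ℝ) :
    #(X.filter (k < f ·)) * k ≤ ∑ x ∈ X, f x := by
  calc #(X.filter (k < f ·)) * k = ∑ x ∈ X.filter (k < f ·), k := by simp
    _ ≤ ∑ x ∈ X.filter (k < f ·), f x := sum_le_sum fun x hx => (mem_filter.1 hx).2.le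
    _ ≤ _ := sum_le_sum_of_subset_of_nonneg (filter_subset _ _) fun x hx _ => hf x hx

/-- The number of edges between `X` and `Y`. -/
noncomputable def edges (G : SimpleGraph V) (X Y : Finset V) : ℝ :=
  ∑ x ∈ X, (#(Y.filter (G.Adj x ·)) : ℝ)

theorem edges_comm (G : SimpleGraph V) (X Y : Finset V) : edges G X Y = edges G Y X := by
  simp only [edges, card_filter, Nat.cast_sum]
  rw [sum_comm]
  simp only [G.adj_comm]

theorem edges_mono (G : SimpleGraph V) {X X' Y Y' : Finset V} (hX : X' ⊆ X) (hY : Y' ⊆ Y) :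
    edges G X' Y' ≤ edges G X Y :=
  (sum_le_sum fun _ _ => by
    exact_mod_cast card_le_card (filter_subset_filter _ hY)).trans
    (sum_le_sum_of_subset_of_nonneg hX fun _ _ _ => Nat.cast_nonneg _)

theorem edges_heavy {G : SimpleGraph V} {X Y : Finset V} {θ k : ℝ} (hY : 0 < #Y)
    (h : edges G X Y ≤ θ * (#X * #Y)) (hk : 0 < k) :
    (#(X.filter fun x => k * #Y < #(Y.filter (G.Adj x ·))) : ℝ) ≤ θ / k * #X := by
  have h1 := card_filter_lt_mul_le X (fun x => (#(Y.filter (G.Adj x ·)) : ℝ))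
    (fun _ _ => Nat.cast_nonneg _) (k * #Y)
  have hY' : (0 : ℝ) < #Y := by exact_mod_cast hY
  have h2 := h1.trans h
  rw [div_mul_eq_mul_div, le_div_iff₀ hk]
  refine le_of_mul_le_mul_right ?_ hY'
  linarith

variable [LinearOrder V]

theorem exists_split (F : Finset V) (hF : 2 ≤ #F) :
    ∃ p, (#F : ℝ) ≤ 2 * #(F.filter (· ≤ p)) + 1 ∧ (#F : ℝ) ≤ 2 * #(F.filter (p < ·)) := by
  obtain ⟨p, hp⟩ := exists_card_filter_le_eq F (#F / 2) (Nat.div_le_self _ _) (by omega)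
  have h := card_filter_add_card_filter_not (s := F) (· ≤ p)
  simp only [not_le] at h
  exact ⟨p, by norm_cast; omega, by norm_cast; omega⟩

namespace Tame
variable {G : SimpleGraph V} {σ : ℝ}

/-- Completing an edge `u x` to an induced path: `x` reaches many non-neighbours of itself outside
the neighbourhood of `u`, and the vertices there leave many common non-neighbours in `C`. -/
theorem false_of_reach (h : Tame G σ) {u x p : V} {S C : Finset V} (hux : u < x)
    (ha : G.Adj u x) (hS : ∀ y ∈ S, ¬ G.Adj u y) (hSp : ∀ y ∈ S, y ≤ p) (hCp : ∀ c ∈ C, p < c)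
    (hr : σ ≤ #(S.filter fun y => ¬ G.Adj x y ∧ Reach G S x y))
    (hC : ∀ v ∈ S, σ < #(C.filter fun c => ¬ G.Adj u c ∧ ¬ G.Adj x c ∧ ¬ G.Adj v c)) :
    False := by
  set S₂ := (S ∪ C.filter fun c => ¬ G.Adj u c).filter fun y => ¬ G.Adj x y with hS₂
  obtain ⟨v, hv, hvr⟩ := h.exists_reach S₂ (S.filter fun v => x < v ∧ G.Adj x v) p (by
    refine hr.trans ?_
    norm_cast
    refine card_le_card fun y hy => ?_
    obtain ⟨hyS, hxy, hy⟩ := mem_filter.1 hy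
    obtain ⟨v, hv, hlt, hadj, hvy⟩ := hy.exists_step hxy
    refine mem_filter.2 ⟨by simp [hS₂, hyS, hxy], hSp y hyS, v, by simp [hv, hlt, hadj], ?_⟩
    exact hvy.mono (filter_subset_filter _ subset_union_left))
  obtain ⟨hvS, hxv, hav⟩ := mem_filter.1 hv
  have hex : ∃ c ∈ C, (¬ G.Adj u c ∧ ¬ G.Adj x c ∧ ¬ G.Adj v c) ∧ Reach G S₂ v c := by
    by_contra! hno
    refine absurd (hC v hvS) (not_lt.2 (le_trans ?_ hvr))
    norm_cast
    refine card_le_card fun c hc => ?_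
    obtain ⟨hc, hn⟩ := mem_filter.1 hc
    exact mem_filter.2 ⟨by simp [hS₂, hc, hn], hCp c hc, hno c hc hn⟩
  obtain ⟨c, -, ⟨-, -, hvc⟩, hreach⟩ := hex
  obtain ⟨y, hy, z, hz, hvy, hyz, h1, h2, h3⟩ := hreach.exists_induced hvc
  have hu : ∀ w ∈ S₂, ¬ G.Adj u w ∧ ¬ G.Adj x w := by
    intro w hw
    obtain ⟨hw, hxw⟩ := mem_filter.1 hw
    refine ⟨?_, hxw⟩
    rcases mem_union.1 hw with hw | hw
    · exact hS w hw
    · exact (mem_filter.1 hw).2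
  exact h.noPath u x v y z hux hxv hvy hyz ha hav h1 h2 (hS v hvS) (hu y hy).1 (hu z hz).1
    (hu y hy).2 (hu z hz).2 h3

/-- A tame graph contains no three large sets with few edges between them. -/
theorem false_of_sparse_triple (h : Tame G σ) {A B C : Finset V}
    (hAB : ∀ a ∈ A, ∀ b ∈ B, a < b) (hBC : ∀ b ∈ B, ∀ c ∈ C, b < c)
    (hA : 100 * σ ≤ #A) (hB : 100 * σ ≤ #B) (hC : 100 * σ ≤ #C)
    (eAB : edges G A B ≤ 1 / 100 * (#A * #B)) (eAC : edges G A C ≤ 1 / 100 * (#A * #C))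
    (eBC : edges G B C ≤ 1 / 100 * (#B * #C)) : False := by
  have h1 := h.one_le
  have hB0 : 0 < #B := by exact_mod_cast (by linarith : (0 : ℝ) < #B)
  have hC0 : 0 < #C := by exact_mod_cast (by linarith : (0 : ℝ) < #C)
  have k1 := edges_heavy hB0 eAB (by norm_num : (0 : ℝ) < 1 / 10)
  have k2 := edges_heavy hC0 eAC (by norm_num : (0 : ℝ) < 1 / 10)
  have k3 := edges_heavy hC0 eBC (by norm_num : (0 : ℝ) < 1 / 10)
  set A' := A.filter fun x => ¬ (1 / 10 : ℝ) * #B < #(B.filter (G.Adj x ·)) ∧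
    ¬ (1 / 10 : ℝ) * #C < #(C.filter (G.Adj x ·)) with hA'
  set B' := B.filter fun x => ¬ (1 / 10 : ℝ) * #C < #(C.filter (G.Adj x ·)) with hB'
  have cA : (#A : ℝ) ≤ _ := card_le_filter_not_and_add A
    (fun x => (1 / 10 : ℝ) * #B < #(B.filter (G.Adj x ·)))
    (fun x => (1 / 10 : ℝ) * #C < #(C.filter (G.Adj x ·)))
  have cB : (#B : ℝ) ≤ _ := card_le_filter_not_add B
    (fun x => (1 / 10 : ℝ) * #C < #(C.filter (G.Adj x ·)))
  rw [← hA'] at cA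
  rw [← hB'] at cB
  obtain ⟨q, hq0, hq1⟩ := exists_split A' (by exact_mod_cast (by linarith : (2 : ℝ) ≤ #A'))
  obtain ⟨p, hp0, hp1⟩ := exists_split B' (by exact_mod_cast (by linarith : (2 : ℝ) ≤ #B'))
  set A₀ := A'.filter (· ≤ q)
  set A₁ := A'.filter (q < ·)
  set B₀ := B'.filter (· ≤ p)
  set B₁ := B'.filter (p < ·)
  have sA₀ : A₀ ⊆ A' := filter_subset _ _
  have sA₁ : A₁ ⊆ A' := filter_subset _ _
  have sB₀ : B₀ ⊆ B' := filter_subset _ _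
  have sB₁ : B₁ ⊆ B' := filter_subset _ _
  have sA : A' ⊆ A := filter_subset _ _
  have sB : B' ⊆ B := filter_subset _ _
  have dAB : ∀ x ∈ A', (#(B.filter (G.Adj x ·)) : ℝ) ≤ 1 / 10 * #B :=
    fun x hx => not_lt.1 (mem_filter.1 hx).2.1
  have dAC : ∀ x ∈ A', (#(C.filter (G.Adj x ·)) : ℝ) ≤ 1 / 10 * #C :=
    fun x hx => not_lt.1 (mem_filter.1 hx).2.2
  have dBC : ∀ x ∈ B', (#(C.filter (G.Adj x ·)) : ℝ) ≤ 1 / 10 * #C :=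
    fun x hx => not_lt.1 (mem_filter.1 hx).2
  have dsub : ∀ x ∈ A', ∀ D ⊆ B, (#(D.filter (G.Adj x ·)) : ℝ) ≤ 1 / 10 * #B :=
    fun x hx D hD => le_trans (by exact_mod_cast card_le_card (filter_subset_filter _ hD))
      (dAB x hx)
  obtain ⟨u, hu, hur⟩ := h.exists_reach_of_lt (S := A₁) (X := A₀)
    (fun x hx y hy => (mem_filter.1 hx).2.trans_lt (mem_filter.1 hy).2) (by linarith)
  have huA := sA₀ hu
  set R := A₁.filter fun y => Reach G A₁ u y
  have cR : (#A₁ : ℝ) ≤ _ := card_le_filter_not_add A₁ (fun y => Reach G A₁ u y)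
  set Bu := B₀.filter fun y => ¬ G.Adj u y with hBu
  have sBu : Bu ⊆ B₀ := filter_subset _ _
  have cBu : (#B₀ : ℝ) ≤ _ := card_le_filter_not_add B₀ (fun y => G.Adj u y)
  rw [← hBu] at cBu
  have dBu := dsub u huA B₀ (sB₀.trans sB)
  have cW : (#(Bu.filter fun y => ∀ r ∈ R, ¬ G.Adj r y) : ℝ) < σ := by
    refine h.card_lt (X := R) (fun x hx y hy => ?_) (by linarith) ?_
    · exact hAB x (sA (sA₁ (mem_filter.1 hx).1)) y (sB (sB₀ (sBu (mem_filter.1 hy).1)))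
    · exact fun x hx y hy => (mem_filter.1 hy).2 x hx
  have cBu2 : (#Bu : ℝ) ≤ _ := card_le_filter_not_add Bu (fun y => ∀ r ∈ R, ¬ G.Adj r y)
  set S := (A₁ ∪ B').filter fun y => ¬ G.Adj u y with hS
  obtain ⟨x, hx, hxr⟩ := h.exists_reach S (A₁.filter fun x => u < x ∧ G.Adj u x) p (by
    refine le_trans (by linarith : σ ≤ #(Bu.filter fun y => ¬ ∀ r ∈ R, ¬ G.Adj r y)) ?_
    norm_cast
    refine card_le_card fun y hy => ?_
    obtain ⟨hyB, hyr⟩ := mem_filter.1 hy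
    push Not at hyr
    obtain ⟨r, hr, hry⟩ := hyr
    obtain ⟨hyB0, huy⟩ := mem_filter.1 hyB
    obtain ⟨hrA, hr⟩ := mem_filter.1 hr
    have hreach : Reach G (A₁ ∪ Bu) u y := .tail (hr.mono subset_union_left)
      ⟨hAB r (sA (sA₁ hrA)) y (sB (sB₀ hyB0)), hry, mem_union_right _ hyB⟩
    obtain ⟨x, hx, hux, hax, hxy⟩ := hreach.exists_step huy
    have hxA : x ∈ A₁ := (mem_union.1 hx).resolve_right fun hx => (mem_filter.1 hx).2 hax
    refine mem_filter.2 ⟨mem_filter.2 ⟨mem_union_right _ (sB₀ hyB0), huy⟩,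
      (mem_filter.1 hyB0).2, x, mem_filter.2 ⟨hxA, hux, hax⟩, hxy.mono ?_⟩
    exact filter_subset_filter _ (union_subset_union subset_rfl (sBu.trans sB₀)))
  obtain ⟨hxA, hux, hax⟩ := mem_filter.1 hx
  refine h.false_of_reach (S := S) (C := C) (p := B.max' (card_pos.1 hB0)) hux hax
    (fun y hy => (mem_filter.1 hy).2) ?_ (fun c hc => hBC _ (max'_mem _ _) c hc) ?_ ?_
  · intro y hy
    rcases mem_union.1 (mem_filter.1 hy).1 with hy | hy
    · exact (hAB y (sA (sA₁ hy)) _ (max'_mem _ (card_pos.1 hB0))).le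
    · exact le_max' _ _ (sB hy)
  · have c1 := card_le_filter_not_and_add B₁ (G.Adj u ·) (G.Adj x ·)
    have c2 := dsub u huA B₁ (sB₁.trans sB)
    have c3 := dsub x (sA₁ hxA) B₁ (sB₁.trans sB)
    have c4 : (#(B₁.filter fun y => ¬ G.Adj u y ∧ ¬ G.Adj x y) : ℝ) ≤
        #(S.filter fun y => ¬ G.Adj x y ∧ Reach G S x y) +
        #(S.filter fun y => p < y ∧ ¬ Reach G S x y) := by
      norm_cast
      refine (card_le_card fun y hy => ?_).trans (card_union_le _ _)
      obtain ⟨hyB, huy, hxy⟩ := mem_filter.1 hy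
      have hyS : y ∈ S := mem_filter.2 ⟨mem_union_right _ (sB₁ hyB), huy⟩
      rw [mem_union]
      by_cases hR : Reach G S x y
      · exact .inl (mem_filter.2 ⟨hyS, hxy, hR⟩)
      · exact .inr (mem_filter.2 ⟨hyS, (mem_filter.1 hyB).2, hR⟩)
    linarith
  · intro v hv
    have c1 : (#C : ℝ) ≤ #(C.filter fun c => ¬ G.Adj u c ∧ ¬ G.Adj x c ∧ ¬ G.Adj v c) +
        #(C.filter (G.Adj u ·)) + #(C.filter fun c => G.Adj x c ∨ G.Adj v c) := by
      simpa only [not_or] using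
        card_le_filter_not_and_add C (G.Adj u ·) fun c => G.Adj x c ∨ G.Adj v c
    have c2 : (#(C.filter fun c => G.Adj x c ∨ G.Adj v c) : ℝ) ≤
        #(C.filter (G.Adj x ·)) + #(C.filter (G.Adj v ·)) := by
      rw [filter_or]
      exact_mod_cast card_union_le _ _
    have c3 := dAC u huA
    have c4 := dAC x (sA₁ hxA)
    have c5 : (#(C.filter (G.Adj v ·)) : ℝ) ≤ 1 / 10 * #C := by
      rcases mem_union.1 (mem_filter.1 hv).1 with hv | hv
      · exact dAC v (sA₁ hv)
      · exact dBC v hv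
    linarith

end Tame

end

section
open Finset Classical
universe u
variable {V : Type u}

/-- The number of triples in `A × B × C` which are pairwise non-adjacent. -/
noncomputable def tri (G : SimpleGraph V) (A B C : Finset V) : ℝ :=
  ∑ a ∈ A, ∑ b ∈ B, ∑ c ∈ C, if ¬ G.Adj a b ∧ ¬ G.Adj a c ∧ ¬ G.Adj b c then 1 else 0

/-- The number of common non-neighbours of `u` and `v` in `C`. -/
noncomputable def codeg (G : SimpleGraph V) (C : Finset V) (u v : V) : ℝ :=
  #(C.filter fun w => ¬ G.Adj u w ∧ ¬ G.Adj v w)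

/-- The number of common non-neighbours of `u`, `x` and `v` in `C`. -/
noncomputable def codeg₃ (G : SimpleGraph V) (C : Finset V) (u x v : V) : ℝ :=
  #(C.filter fun w => ¬ G.Adj u w ∧ ¬ G.Adj x w ∧ ¬ G.Adj v w)

theorem tri_eq_sum_codeg (G : SimpleGraph V) (A B C : Finset V) :
    tri G A B C = ∑ a ∈ A, ∑ b ∈ B, if G.Adj a b then 0 else codeg G C a b := by
  refine sum_congr rfl fun a _ => sum_congr rfl fun b _ => ?_
  by_cases h : G.Adj a b <;> simp [h, codeg]

theorem tri_rotate (G : SimpleGraph V) (A B C : Finset V) : tri G A B C = tri G B C A := by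
  rw [tri, tri, sum_comm]
  refine sum_congr rfl fun b _ => ?_
  rw [sum_comm]
  refine sum_congr rfl fun c _ => sum_congr rfl fun a _ => ?_
  simp only [G.adj_comm a b, G.adj_comm a c]
  congr 1
  rw [eq_iff_iff]
  tauto

theorem tri_swap (G : SimpleGraph V) (A B C : Finset V) : tri G A B C = tri G B A C := by
  rw [tri, tri, sum_comm]
  refine sum_congr rfl fun b _ => sum_congr rfl fun a _ => sum_congr rfl fun c _ => ?_
  simp only [G.adj_comm a b]
  congr 1
  rw [eq_iff_iff]
  tauto

theorem sum_piFinset_ite_forall (C : Finset V) (K : ℕ) (P : V → Prop) [DecidablePred P]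
    [DecidablePred fun f : Fin K → V => ∀ i, P (f i)] :
    ∑ f ∈ Fintype.piFinset fun _ : Fin K => C, (if ∀ i, P (f i) then 1 else 0 : ℝ) =
      (#(C.filter P) : ℝ) ^ K := by
  rw [sum_boole, ← Nat.cast_pow, ← Fintype.card_piFinset_const]
  congr 2
  ext f
  simp [forall_and]

/-- Dependent random choice over tuples of `K` vertices. -/
theorem exists_tuple_choice {G : SimpleGraph V} {A B C : Finset V} {ε : ℝ} (hε : 0 < ε)
    (K : ℕ) (hK : K ≠ 0) (hA : A.Nonempty) (hB : B.Nonempty) (hC : C.Nonempty)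
    (h : ε * (#A * #B * #C) ≤ tri G A B C) :
    ∃ A' ⊆ A, ∃ B' ⊆ B,
      (ε ^ K) ^ 6 * (#A * #A * #B) ≤
        2 * (ε ^ K) ^ 5 * #A * ∑ u ∈ A', (#(B'.filter fun v => ¬ G.Adj u v) : ℝ) -
        ∑ u ∈ A', ∑ x ∈ A', (#(B'.filter fun v => codeg₃ G C u x v < ε ^ 6 * #C) : ℝ) := by
  set Ω := Fintype.piFinset fun _ : Fin K => C with hΩ
  have hΩne : Ω.Nonempty := Fintype.piFinset_nonempty.2 fun _ => hC
  have a0 : (0 : ℝ) < #A := by exact_mod_cast card_pos.2 hA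
  have b0 : (0 : ℝ) < #B := by exact_mod_cast card_pos.2 hB
  have c0 : (0 : ℝ) < #C := by exact_mod_cast card_pos.2 hC
  let S (X : Finset V) (f : Fin K → V) : Finset V := X.filter fun x => ∀ i, ¬ G.Adj x (f i)
  have key0 : ε ^ K * (#A * #B) * (#C : ℝ) ^ K ≤
      ∑ f ∈ Ω, ∑ u ∈ S A f, (#((S B f).filter fun v => ¬ G.Adj u v) : ℝ) := by
    have e1 : ∑ f ∈ Ω, ∑ u ∈ S A f, (#((S B f).filter fun v => ¬ G.Adj u v) : ℝ) =
        ∑ p ∈ A ×ˢ B, (if G.Adj p.1 p.2 then 0 else codeg G C p.1 p.2) ^ K := by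
      rw [sum_product]
      simp only [S, card_filter, sum_filter, Nat.cast_sum]
      rw [sum_comm]
      refine sum_congr rfl fun u _ => ?_
      have : ∀ f ∈ Ω, (if ∀ i, ¬ G.Adj u (f i) then ∑ v ∈ B, ((if ∀ i, ¬ G.Adj v (f i) then
          if ¬ G.Adj u v then 1 else 0 else 0 : ℕ) : ℝ) else 0) =
          ∑ v ∈ B, if ¬ G.Adj u v ∧ ∀ i, ¬ G.Adj u (f i) ∧ ¬ G.Adj v (f i) then 1 else 0 := by
        intro f _
        simp only [forall_and]
        split_ifs with hf
        · refine sum_congr rfl fun v _ => ?_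
          push_cast
          split_ifs <;> simp_all
        · simp [hf]
      rw [sum_congr rfl this, sum_comm]
      refine sum_congr rfl fun v _ => ?_
      by_cases hv : G.Adj u v
      · simp [hv, hK]
      · simp only [hv, not_false_eq_true, true_and, if_false, codeg]
        exact sum_piFinset_ite_forall C K fun w => ¬ G.Adj u w ∧ ¬ G.Adj v w
    rw [e1]
    obtain ⟨m, rfl⟩ := Nat.exists_eq_succ_of_ne_zero hK
    have e2 := pow_sum_div_card_le_sum_pow (s := A ×ˢ B)
      (f := fun p => if G.Adj p.1 p.2 then 0 else codeg G C p.1 p.2) (n := m)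
      (fun p _ => by split_ifs; exacts [le_rfl, Nat.cast_nonneg _])
    refine le_trans ?_ e2
    rw [sum_product, ← tri_eq_sum_codeg, card_product, Nat.cast_mul,
      le_div_iff₀ (by positivity)]
    calc ε ^ (m + 1) * (#A * #B) * (#C : ℝ) ^ (m + 1) * (#A * #B) ^ m
        = (ε * (#A * #B * #C)) ^ (m + 1) := by ring
      _ ≤ _ := pow_le_pow_left₀ (by positivity) h _
  have key1 : ∑ f ∈ Ω, ∑ u ∈ S A f, ∑ x ∈ S A f,
      (#((S B f).filter fun v => codeg₃ G C u x v < ε ^ 6 * #C) : ℝ) ≤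
      (ε ^ K) ^ 6 * (#A * #A * #B) * (#C : ℝ) ^ K := by
    have e1 : ∑ f ∈ Ω, ∑ u ∈ S A f, ∑ x ∈ S A f,
        (#((S B f).filter fun v => codeg₃ G C u x v < ε ^ 6 * #C) : ℝ) =
        ∑ u ∈ A, ∑ x ∈ A, ∑ v ∈ B,
          if codeg₃ G C u x v < ε ^ 6 * #C then codeg₃ G C u x v ^ K else 0 := by
      simp only [S, card_filter, sum_filter, Nat.cast_sum]
      rw [sum_comm]
      refine sum_congr rfl fun u _ => ?_
      have : ∀ f ∈ Ω, (if ∀ i, ¬ G.Adj u (f i) then ∑ x ∈ A, if ∀ i, ¬ G.Adj x (f i) then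
          ∑ v ∈ B, ((if ∀ i, ¬ G.Adj v (f i) then
          if codeg₃ G C u x v < ε ^ 6 * #C then 1 else 0 else 0 : ℕ) : ℝ) else 0 else 0) =
          ∑ x ∈ A, ∑ v ∈ B, if codeg₃ G C u x v < ε ^ 6 * #C then
            if ∀ i, ¬ G.Adj u (f i) ∧ ¬ G.Adj x (f i) ∧ ¬ G.Adj v (f i) then 1 else 0
            else 0 := by
        intro f _
        simp only [forall_and]
        split_ifs with hf
        · refine sum_congr rfl fun x _ => ?_
          split_ifs with hx
          · refine sum_congr rfl fun v _ => ?_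
            push_cast
            split_ifs <;> simp_all
          · simp [hx]
        · simp [hf]
      rw [sum_congr rfl this, sum_comm]
      refine sum_congr rfl fun x _ => ?_
      rw [sum_comm]
      refine sum_congr rfl fun v _ => ?_
      split_ifs with hv
      · exact sum_piFinset_ite_forall C K fun w => ¬ G.Adj u w ∧ ¬ G.Adj x w ∧ ¬ G.Adj v w
      · simp
    rw [e1]
    calc _ ≤ ∑ u ∈ A, ∑ x ∈ A, ∑ v ∈ B, (ε ^ 6 * #C) ^ K := by
          refine sum_le_sum fun u _ => sum_le_sum fun x _ => sum_le_sum fun v _ => ?_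
          split_ifs with hv
          · exact pow_le_pow_left₀ (Nat.cast_nonneg _) hv.le _
          · positivity
      _ = _ := by
          simp only [sum_const, nsmul_eq_mul]
          ring
  have hcard : (#Ω : ℝ) = (#C : ℝ) ^ K := by
    rw [hΩ, Fintype.card_piFinset_const, Nat.cast_pow]
  obtain ⟨f, -, hf⟩ := exists_le_of_sum_le hΩne
    (f := fun _ => (ε ^ K) ^ 6 * (#A * #A * #B))
    (g := fun f => 2 * (ε ^ K) ^ 5 * #A * ∑ u ∈ S A f,
      (#((S B f).filter fun v => ¬ G.Adj u v) : ℝ) - ∑ u ∈ S A f, ∑ x ∈ S A f,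
      (#((S B f).filter fun v => codeg₃ G C u x v < ε ^ 6 * #C) : ℝ)) (by
    rw [sum_const, nsmul_eq_mul, hcard, sum_sub_distrib, ← mul_sum]
    have := mul_le_mul_of_nonneg_left key0 (by positivity : 0 ≤ 2 * (ε ^ K) ^ 5 * (#A : ℝ))
    have e : 2 * (ε ^ K) ^ 5 * (#A : ℝ) * (ε ^ K * (#A * #B) * (#C : ℝ) ^ K) =
      2 * ((ε ^ K) ^ 6 * (#A * #A * #B) * (#C : ℝ) ^ K) := by ring
    have e' : (#C : ℝ) ^ K * ((ε ^ K) ^ 6 * (#A * #A * #B)) =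
      (ε ^ K) ^ 6 * (#A * #A * #B) * (#C : ℝ) ^ K := by ring
    linarith)
  exact ⟨S A f, filter_subset _ _, S B f, filter_subset _ _, hf⟩

/-- Dependent random choice: large `A'` and `B'` with many non-adjacent pairs between them and
with few pairs and triples having few common non-neighbours in `C`. -/
theorem exists_random_choice (ε : ℝ) (hε : 0 < ε) :
    ∃ δ : ℝ, 0 < δ ∧ δ ≤ 1 ∧ ∀ α₀ : ℝ, 0 < α₀ → ∃ α : ℝ, 0 < α ∧ α ≤ α₀ ∧
      ∀ {V : Type u} (G : SimpleGraph V) (A B C : Finset V),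
      A.Nonempty → B.Nonempty → C.Nonempty → ε * (#A * #B * #C) ≤ tri G A B C →
      ∃ A' ⊆ A, ∃ B' ⊆ B, α * #A ≤ #A' ∧ α * #B ≤ #B' ∧
        α * (#A * #B) ≤ ∑ u ∈ A', (#(B'.filter fun v => ¬ G.Adj u v) : ℝ) ∧
        ∑ u ∈ A', ∑ x ∈ A', (#(B'.filter fun v => codeg₃ G C u x v < δ * #C) : ℝ) ≤
          α ^ 4 * (#A * #A * #B) ∧
        ∑ u ∈ A', (#(A'.filter fun x => codeg G C u x < δ * #C) : ℝ) ≤ α ^ 3 * (#A * #A) ∧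
        ∑ u ∈ A', (#(B'.filter fun v => codeg G C u v < δ * #C) : ℝ) ≤ α ^ 3 * (#A * #B) := by
  wlog hε2 : ε ≤ 1 / 2 generalizing ε
  · obtain ⟨δ, h0, h1, hδ⟩ := this (1 / 2) (by norm_num) le_rfl
    refine ⟨δ, h0, h1, fun α₀ hα₀ => ?_⟩
    obtain ⟨α, h2, h3, hα⟩ := hδ α₀ hα₀
    refine ⟨α, h2, h3, fun G A B C hA hB hC h => hα G A B C hA hB hC (le_trans ?_ h)⟩
    exact mul_le_mul_of_nonneg_right (not_le.1 hε2).le (by positivity)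
  refine ⟨ε ^ 6, by positivity, pow_le_one₀ hε.le (by linarith), fun α₀ hα₀ => ?_⟩
  obtain ⟨K, hK⟩ := exists_pow_lt_of_lt_one (lt_min hα₀ (by norm_num : (0 : ℝ) < 1 / 32))
    (by linarith : ε < 1)
  have hK1 : ε ^ (K + 1) < min α₀ (1 / 32) :=
    (pow_le_pow_of_le_one hε.le (by linarith) (Nat.le_succ K)).trans_lt hK
  set e := ε ^ (K + 1) with he
  have he0 : 0 < e := by positivity
  have h1 := lt_min_iff.1 hK1
  refine ⟨e / 2, by positivity, by linarith, fun G A B C hA hB hC h => ?_⟩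
  obtain ⟨A', hA', B', hB', hmain⟩ := exists_tuple_choice hε (K + 1) (by omega) hA hB hC h
  rw [← he] at hmain
  clear_value e
  have a0 : (0 : ℝ) < #A := by exact_mod_cast card_pos.2 hA
  have b0 : (0 : ℝ) < #B := by exact_mod_cast card_pos.2 hB
  have a1 : (#A' : ℝ) ≤ #A := by exact_mod_cast card_le_card hA'
  have b1 : (#B' : ℝ) ≤ #B := by exact_mod_cast card_le_card hB'
  set E₀ := ∑ u ∈ A', (#(B'.filter fun v => ¬ G.Adj u v) : ℝ) with hE₀
  set E₁ := ∑ u ∈ A', ∑ x ∈ A', (#(B'.filter fun v => codeg₃ G C u x v < ε ^ 6 * #C) : ℝ)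
  have hE₁ : 0 ≤ E₁ := sum_nonneg fun _ _ => sum_nonneg fun _ _ => Nat.cast_nonneg _
  have hE₀le : E₀ ≤ #A' * #B' := by
    calc E₀ ≤ ∑ u ∈ A', (#B' : ℝ) :=
          sum_le_sum fun u _ => by exact_mod_cast card_le_card (filter_subset _ _)
      _ = _ := by rw [sum_const, nsmul_eq_mul]
  have hE₀ge : e / 2 * (#A * #B) ≤ E₀ := by
    have : (2 * e ^ 5 * #A) * (e / 2 * (#A * #B)) ≤ (2 * e ^ 5 * #A) * E₀ := by
      calc (2 * e ^ 5 * #A) * (e / 2 * (#A * #B)) = e ^ 6 * (#A * #A * #B) := by ring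
        _ ≤ _ := by linarith
    exact le_of_mul_le_mul_left this (by positivity)
  have hA'ge : e / 2 * #A ≤ #A' := by
    refine le_of_mul_le_mul_right ?_ b0
    nlinarith [mul_le_mul_of_nonneg_left b1 (Nat.cast_nonneg (α := ℝ) #A')]
  have hB'ge : e / 2 * #B ≤ #B' := by
    refine le_of_mul_le_mul_left ?_ a0
    nlinarith [mul_le_mul_of_nonneg_right a1 (Nat.cast_nonneg (α := ℝ) #B')]
  have hE₁le : E₁ ≤ (e / 2) ^ 4 * (#A * #A * #B) := by
    have i1 : (#A' : ℝ) * #B' ≤ #A * #B := by gcongr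
    calc E₁ ≤ 2 * e ^ 5 * #A * E₀ := by
          have : 0 ≤ e ^ 6 * (#A * #A * #B : ℝ) := by positivity
          linarith
      _ ≤ 2 * e ^ 5 * #A * (#A * #B) := by gcongr; linarith
      _ = (2 * e) * (e ^ 4 * (#A * #A * #B)) := by ring
      _ ≤ (1 / 16) * (e ^ 4 * (#A * #A * #B)) := by gcongr; linarith
      _ = _ := by ring
  refine ⟨A', hA', B', hB', hA'ge, hB'ge, hE₀ge, hE₁le, ?_, ?_⟩
  · refine le_of_mul_le_mul_right ?_ (by positivity : 0 < e / 2 * (#B : ℝ))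
    calc _ ≤ (∑ u ∈ A', (#(A'.filter fun x => codeg G C u x < ε ^ 6 * #C) : ℝ)) * #B' :=
          mul_le_mul_of_nonneg_left hB'ge (sum_nonneg fun _ _ => Nat.cast_nonneg _)
      _ ≤ E₁ := by
          rw [sum_mul]
          refine sum_le_sum fun u _ => ?_
          rw [card_filter, Nat.cast_sum, sum_mul]
          refine sum_le_sum fun x _ => ?_
          split_ifs with hx
          · simp only [Nat.cast_one, one_mul, Nat.cast_le]
            refine card_le_card fun v hv => mem_filter.2 ⟨hv, lt_of_le_of_lt ?_ hx⟩
            unfold codeg₃ codeg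
            norm_cast
            exact card_le_card (monotone_filter_right _ fun w _ hw => ⟨hw.1, hw.2.1⟩)
          · simp
      _ ≤ _ := hE₁le
      _ = _ := by ring
  · refine le_of_mul_le_mul_right ?_ (by positivity : 0 < e / 2 * (#A : ℝ))
    calc _ ≤ (∑ u ∈ A', (#(B'.filter fun v => codeg G C u v < ε ^ 6 * #C) : ℝ)) * #A' :=
          mul_le_mul_of_nonneg_left hA'ge (sum_nonneg fun _ _ => Nat.cast_nonneg _)
      _ ≤ E₁ := by
          rw [sum_mul]
          refine sum_le_sum fun u _ => ?_
          rw [mul_comm, ← nsmul_eq_mul]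
          refine card_nsmul_le_sum _ _ _ fun x _ => ?_
          norm_cast
          refine card_le_card (monotone_filter_right _ fun v _ hv => lt_of_le_of_lt ?_ hv)
          unfold codeg₃ codeg
          norm_cast
          exact card_le_card (monotone_filter_right _ fun w _ hw => ⟨hw.1, hw.2.2⟩)
      _ ≤ _ := hE₁le
      _ = _ := by ring

end

section
open Finset Classical
universe u

theorem le_tri_of_sparse {V : Type u} {G : SimpleGraph V} {X Y C : Finset V} {δ : ℝ} (hδ : 0 ≤ δ)
    (he : edges G X Y ≤ 1 / 4 * (#X * #Y))
    (hb : ∑ u ∈ X, (#(Y.filter fun v => codeg G C u v < δ * #C) : ℝ) ≤ 1 / 4 * (#X * #Y)) :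
    δ / 2 * (#X * #Y * #C) ≤ tri G X Y C := by
  have key : ∑ u ∈ X, ((#Y : ℝ) - #(Y.filter (G.Adj u ·)) -
      #(Y.filter fun v => codeg G C u v < δ * #C)) * (δ * #C) ≤ tri G X Y C := by
    rw [tri_eq_sum_codeg]
    refine sum_le_sum fun u _ => ?_
    have e : (#Y : ℝ) - #(Y.filter (G.Adj u ·)) - #(Y.filter fun v => codeg G C u v < δ * #C) =
        ∑ v ∈ Y, ((1 : ℝ) - (if G.Adj u v then 1 else 0) -
          if codeg G C u v < δ * #C then 1 else 0) := by
      simp [sum_sub_distrib]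
    rw [e, sum_mul]
    refine sum_le_sum fun v _ => ?_
    have h0 : 0 ≤ δ * (#C : ℝ) := by positivity
    have h1 : 0 ≤ codeg G C u v := Nat.cast_nonneg _
    split_ifs <;> linarith
  rw [← sum_mul, sum_sub_distrib, sum_sub_distrib, sum_const, nsmul_eq_mul] at key
  refine le_trans ?_ key
  calc _ = (1 / 2 * (#X * #Y)) * (δ * #C) := by ring
    _ ≤ _ := mul_le_mul_of_nonneg_right (by unfold edges at he; linarith) (by positivity)

variable {V : Type u} [LinearOrder V] {G : SimpleGraph V} {σ : ℝ}

theorem Tame.card_private_nbr_lt (h : Tame G σ) {B C : Finset V} {u x : V} {k : ℝ} (hux : u < x)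
    (ha : G.Adj u x) (hxB : ∀ v ∈ B, x < v) (hBC : ∀ b ∈ B, ∀ c ∈ C, b < c) (hk : 4 * σ < k) :
    (#(B.filter fun v => ¬ G.Adj u v ∧ G.Adj x v ∧ k ≤ codeg₃ G C u x v) : ℝ) < σ := by
  by_contra! hσ
  obtain ⟨v, hv, hr⟩ := h.exists_reach_of_lt
    (S := C.filter fun w => ¬ G.Adj u w ∧ ¬ G.Adj x w)
    (fun v hv w hw => hBC v (mem_filter.1 hv).1 w (mem_filter.1 hw).1) hσ
  obtain ⟨hvB, huv, hxv, hkv⟩ := mem_filter.1 hv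
  have hex : ∃ w, ¬ G.Adj v w ∧ Reach G (C.filter fun w => ¬ G.Adj u w ∧ ¬ G.Adj x w) v w := by
    by_contra! hno
    refine absurd (hk.trans_le hkv) (not_lt.2 (le_trans ?_ hr))
    unfold codeg₃
    norm_cast
    refine card_le_card fun w hw => ?_
    obtain ⟨hw, h1, h2, h3⟩ := mem_filter.1 hw
    exact mem_filter.2 ⟨mem_filter.2 ⟨hw, h1, h2⟩, hno w h3⟩
  obtain ⟨w, hvw, hw⟩ := hex
  obtain ⟨y, hy, z, hz, hvy, hyz, h1, h2, h3⟩ := hw.exists_induced hvw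
  have hy := (mem_filter.1 hy).2
  have hz := (mem_filter.1 hz).2
  exact h.noPath u x v y z hux (hxB v hvB) hvy hyz ha hxv h1 h2 huv hy.1 hz.1 hy.2 hz.2 h3

/-- Increasing edges `u x` such that `x` is a neighbour of `v` and `u` is not, summed over `v`. -/
theorem Tame.sum_private_edges_le (h : Tame G σ) {A B C : Finset V} {k : ℝ}
    (hAB : ∀ a ∈ A, ∀ b ∈ B, a < b) (hBC : ∀ b ∈ B, ∀ c ∈ C, b < c) (hk : 4 * σ < k) :
    ∑ v ∈ B, ∑ u ∈ A.filter (¬ G.Adj · v),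
      (#(A.filter fun x => G.Adj x v ∧ u < x ∧ G.Adj u x) : ℝ) ≤
    ∑ u ∈ A, ∑ x ∈ A, (#(B.filter fun v => codeg₃ G C u x v < k) : ℝ) + σ * (#A * #A) := by
  have e : ∑ v ∈ B, ∑ u ∈ A.filter (¬ G.Adj · v),
      (#(A.filter fun x => G.Adj x v ∧ u < x ∧ G.Adj u x) : ℝ) =
      ∑ u ∈ A, ∑ x ∈ A, if u < x ∧ G.Adj u x then
        (#(B.filter fun v => ¬ G.Adj u v ∧ G.Adj x v) : ℝ) else 0 := by
    simp only [card_filter, sum_filter, Nat.cast_sum]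
    rw [sum_comm]
    refine sum_congr rfl fun u _ => ?_
    have : ∀ v ∈ B, (if ¬ G.Adj u v then ∑ x ∈ A, ((if G.Adj x v ∧ u < x ∧ G.Adj u x then 1
        else 0 : ℕ) : ℝ) else 0) = ∑ x ∈ A, if u < x ∧ G.Adj u x then
          ((if ¬ G.Adj u v ∧ G.Adj x v then 1 else 0 : ℕ) : ℝ) else 0 := by
      intro v _
      by_cases hv : G.Adj u v
      · simp [hv]
      · rw [if_pos hv]
        refine sum_congr rfl fun x _ => ?_
        by_cases h1 : G.Adj x v <;> simp [hv, h1]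
    rw [sum_congr rfl this, sum_comm]
    refine sum_congr rfl fun x _ => ?_
    split_ifs <;> simp
  have h1 := h.one_le
  have e2 : σ * (#A * #A : ℝ) = ∑ u ∈ A, ∑ x ∈ A, σ := by
    simp only [sum_const, nsmul_eq_mul]; ring
  rw [e, e2, ← sum_add_distrib]
  refine sum_le_sum fun u _ => ?_
  rw [← sum_add_distrib]
  refine sum_le_sum fun x hx => ?_
  split_ifs with hux
  · refine le_trans ?_ (add_le_add_right
      (h.card_private_nbr_lt hux.1 hux.2 (hAB x hx) hBC hk).le _)
    norm_cast
    refine (card_le_card fun v hv => ?_).trans (card_union_le _ _)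
    obtain ⟨hv, hv'⟩ := mem_filter.1 hv
    rw [mem_union, mem_filter, mem_filter]
    rcases lt_or_ge (codeg₃ G C u x v) k with hc | hc
    · exact .inl ⟨hv, hc⟩
    · exact .inr ⟨hv, hv'.1, hv'.2, hc⟩
  · positivity

end

section
open Finset Classical
universe u

theorem le_card_filter_of_sum {V : Type u} (B : Finset V) (f g : V → ℝ) {α a b s : ℝ}
    (ha : 0 < a) (hs : 0 < s) (hb : #B ≤ b) (hf : ∀ v ∈ B, f v ≤ a)
    (hg : ∀ v ∈ B, 0 ≤ g v) (hα : 0 ≤ α) (hfs : α * (a * b) ≤ ∑ v ∈ B, f v)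
    (hgs : ∑ v ∈ B, g v ≤ α / 4 * b * s) :
    α / 4 * b ≤ #(B.filter fun v => α / 2 * a ≤ f v ∧ g v ≤ s) := by
  have h1 := (card_filter_lt_mul_le B g hg s).trans hgs
  have h2 : (#(B.filter (s < g ·)) : ℝ) ≤ α / 4 * b := le_of_mul_le_mul_right h1 hs
  have h3 : ∑ v ∈ B, f v ≤ ∑ v ∈ B, (α / 2 * a +
      (if α / 2 * a ≤ f v ∧ g v ≤ s then 1 else 0) * a + (if s < g v then 1 else 0) * a) := by
    refine sum_le_sum fun v hv => ?_
    have h4 := hf v hv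
    have h5 : 0 ≤ α / 2 * a := by positivity
    rcases lt_or_ge s (g v) with h6 | h6
    · simp only [h6, if_true]
      split_ifs <;> linarith
    · rcases lt_or_ge (f v) (α / 2 * a) with h7 | h7
      · split_ifs <;> linarith
      · simp [h6, h7, h6.not_gt]
        linarith
  rw [sum_add_distrib, sum_add_distrib, sum_const, nsmul_eq_mul, ← sum_mul, ← sum_mul,
    sum_boole, sum_boole] at h3
  have h8 := mul_le_mul_of_nonneg_right hb (by positivity : 0 ≤ α / 2 * a)
  refine le_of_mul_le_mul_right ?_ ha
  have h9 := mul_le_mul_of_nonneg_right h2 ha.le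
  linarith

theorem sparse_pair_across {V : Type u} {G : SimpleGraph V} {A B C X Y : Finset V}
    {α δ η a b : ℝ} (hα : 0 < α) (hη : 0 < η) (hη1 : η ≤ 1 / 4) (hα1 : α ≤ 1 / 64)
    (ha : 0 < a) (hb : 0 < b) (hδ : 0 ≤ δ) (hXA : X ⊆ A) (hYB : Y ⊆ B)
    (hX : α / 4 * a ≤ #X) (hY : α / 4 * b ≤ #Y)
    (hdeg : ∀ v ∈ Y, (#(X.filter (G.Adj · v)) : ℝ) < η * α / 4 * a)
    (hAB : ∑ u ∈ A, (#(B.filter fun v => codeg G C u v < δ * #C) : ℝ) ≤ α ^ 3 * (a * b)) :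
    edges G X Y ≤ η * (#X * #Y) ∧ δ / 2 * (#X * #Y * #C) ≤ tri G X Y C := by
  have hedge : edges G X Y ≤ η * (#X * #Y) := by
    rw [edges_comm]
    calc edges G Y X ≤ ∑ v ∈ Y, η * #X := by
          refine sum_le_sum fun v hv => ?_
          simp only [G.adj_comm v]
          refine (hdeg v hv).le.trans ?_
          calc η * α / 4 * a = η * (α / 4 * a) := by ring
            _ ≤ _ := mul_le_mul_of_nonneg_left hX hη.le
      _ = _ := by rw [sum_const, nsmul_eq_mul]; ring
  refine ⟨hedge, le_tri_of_sparse hδ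
      (hedge.trans (mul_le_mul_of_nonneg_right hη1 (by positivity))) ?_⟩
  have hprod : α / 4 * a * (α / 4 * b) ≤ (#X * #Y : ℝ) :=
    mul_le_mul hX hY (by positivity) (by positivity)
  calc _ ≤ ∑ u ∈ A, (#(B.filter fun v => codeg G C u v < δ * #C) : ℝ) :=
        (sum_le_sum fun u _ => by
          exact_mod_cast card_le_card (filter_subset_filter _ hYB)).trans
          (sum_le_sum_of_subset_of_nonneg hXA fun _ _ _ => Nat.cast_nonneg _)
    _ ≤ α ^ 3 * (a * b) := hAB
    _ = (α * 64) * (1 / 4 * (α / 4 * a * (α / 4 * b))) := by ring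
    _ ≤ 1 * (1 / 4 * (α / 4 * a * (α / 4 * b))) :=
        mul_le_mul_of_nonneg_right (by linarith) (by positivity)
    _ = 1 / 4 * (α / 4 * a * (α / 4 * b)) := by ring
    _ ≤ _ := mul_le_mul_of_nonneg_left hprod (by norm_num)

theorem exists_card_filter_gt_eq {V : Type u} [LinearOrder V] (F : Finset V) (k : ℕ)
    (hk : k < #F) : ∃ p, #(F.filter (p < ·)) = k := by
  obtain ⟨p, hp⟩ := exists_card_filter_le_eq F (#F - k) (Nat.sub_le _ _) (by omega)
  have h := card_filter_add_card_filter_not (s := F) (· ≤ p)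
  simp only [not_le] at h
  exact ⟨p, by omega⟩

/-- The number of increasing edges `u x` in `A` such that `x` is a neighbour of `v` and `u` is
not. -/
noncomputable def privateEdges {V : Type u} [LinearOrder V] (G : SimpleGraph V) (A : Finset V)
    (v : V) : ℝ :=
  ∑ u ∈ A.filter (¬ G.Adj · v), (#(A.filter fun x => G.Adj x v ∧ u < x ∧ G.Adj u x) : ℝ)

section
variable {V : Type u} [LinearOrder V] {G : SimpleGraph V} {A B C : Finset V} {α δ η a b : ℝ}

theorem Tame.le_card_dense {σ : ℝ} (h : Tame G σ) (hAB : ∀ a ∈ A, ∀ b ∈ B, a < b)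
    (hBC : ∀ b ∈ B, ∀ c ∈ C, b < c) (hα : 0 < α) (ha : 0 < a) (hb : 0 < b) (hA : #A ≤ a)
    (hB : #B ≤ b) (hσ : σ ≤ α ^ 4 * b) (hσC : 4 * σ < δ * #C)
    (hnon : α * (a * b) ≤ ∑ u ∈ A, (#(B.filter fun v => ¬ G.Adj u v) : ℝ))
    (htrip : ∑ u ∈ A, ∑ x ∈ A, (#(B.filter fun v => codeg₃ G C u x v < δ * #C) : ℝ) ≤
      α ^ 4 * (a * a * b)) :
    α / 4 * b ≤ #(B.filter fun v => α / 2 * a ≤ #(A.filter (¬ G.Adj · v)) ∧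
      privateEdges G A v ≤ 8 * α ^ 3 * a ^ 2) := by
  have hsub := h.sum_private_edges_le hAB hBC hσC
  refine le_card_filter_of_sum B (fun v => (#(A.filter (¬ G.Adj · v)) : ℝ)) (privateEdges G A) ha
    (by positivity) hB (fun v _ => le_trans (by exact_mod_cast card_le_card (filter_subset _ _)) hA)
    (fun v _ => sum_nonneg fun _ _ => Nat.cast_nonneg _) hα.le ?_ ?_
  · refine hnon.trans (le_of_eq ?_)
    simp only [card_filter, Nat.cast_sum]
    exact sum_comm
  · have : σ * (#A * #A : ℝ) ≤ (α ^ 4 * b) * (a * a) := by gcongr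
    refine hsub.trans ((add_le_add htrip this).trans (le_of_eq ?_))
    ring

theorem exists_sparse_pair_inside (hα : 0 < α) (hη : 0 < η) (hη1 : η ≤ 1 / 4)
    (hαη : α ≤ η ^ 2 / 256) (ha : 8 ≤ α * a) (hδ : 0 ≤ δ) {v p : V}
    (hX : (#(A.filter (p < ·)) : ℝ) ≤ α / 4 * a + 1)
    (hvJ : α / 2 * a ≤ #(A.filter (¬ G.Adj · v)))
    (hve : privateEdges G A v ≤ 8 * α ^ 3 * a ^ 2)
    (hvX : η * α / 4 * a ≤ #((A.filter (p < ·)).filter (G.Adj · v)))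
    (hAA : ∑ u ∈ A, (#(A.filter fun x => codeg G C u x < δ * #C) : ℝ) ≤ α ^ 3 * (a * a)) :
    ∃ X ⊆ A, ∃ Y ⊆ A, (∀ x ∈ X, ∀ y ∈ Y, x < y) ∧ α / 8 * a ≤ #X ∧ η * α / 4 * a ≤ #Y ∧
      edges G X Y ≤ η * (#X * #Y) ∧ δ / 2 * (#X * #Y * #C) ≤ tri G X Y C := by
  have hαη' : α ≤ η / 1024 := hαη.trans (by nlinarith)
  have a0 : 0 < a := pos_of_mul_pos_right (by linarith : 0 < α * a) hα.le
  set J := A.filter (¬ G.Adj · v) with hJ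
  set X := A.filter (p < ·) with hXdef
  set I := X.filter (G.Adj · v)
  set J' := J.filter (· ≤ p) with hJ'
  have hJ'c : α / 8 * a ≤ (#J' : ℝ) := by
    have h2 : (#J : ℝ) ≤ #J' + #X := by
      norm_cast
      refine (card_le_card fun y hy => mem_union.2 ?_).trans (card_union_le _ _)
      rcases le_or_gt y p with hyp | hyp
      · exact .inl (mem_filter.2 ⟨hy, hyp⟩)
      · exact .inr (mem_filter.2 ⟨(mem_filter.1 hy).1, hyp⟩)
    linarith
  have hJA : J' ⊆ A := (filter_subset _ _).trans (filter_subset _ _)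
  have hIA : I ⊆ A := (filter_subset _ _).trans (filter_subset _ _)
  have hlt : ∀ x ∈ J', ∀ y ∈ I, x < y := fun x hx y hy =>
    (mem_filter.1 hx).2.trans_lt (mem_filter.1 (mem_filter.1 hy).1).2
  have hprod : α / 8 * a * (η * α / 4 * a) ≤ (#J' * #I : ℝ) :=
    mul_le_mul hJ'c hvX (by positivity) (by positivity)
  have hedge : edges G J' I ≤ η * (#J' * #I) := by
    calc edges G J' I ≤ ∑ u ∈ J', (#(A.filter fun x => G.Adj x v ∧ u < x ∧ G.Adj u x) : ℝ) := by
          refine sum_le_sum fun u hu => ?_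
          norm_cast
          refine card_le_card fun x hx => ?_
          obtain ⟨hx, hux⟩ := mem_filter.1 hx
          exact mem_filter.2 ⟨hIA hx, (mem_filter.1 hx).2, hlt u hu x hx, hux⟩
      _ ≤ privateEdges G A v := sum_le_sum_of_subset_of_nonneg (filter_subset _ _)
          fun _ _ _ => Nat.cast_nonneg _
      _ ≤ 8 * α ^ 3 * a ^ 2 := hve
      _ = (α * 256) * (α ^ 2 * a ^ 2 / 32) := by ring
      _ ≤ η ^ 2 * (α ^ 2 * a ^ 2 / 32) :=
          mul_le_mul_of_nonneg_right (by linarith) (by positivity)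
      _ = η * (α / 8 * a * (η * α / 4 * a)) := by ring
      _ ≤ _ := mul_le_mul_of_nonneg_left hprod hη.le
  refine ⟨J', hJA, I, hIA, hlt, hJ'c, hvX, hedge, le_tri_of_sparse hδ
      (hedge.trans (mul_le_mul_of_nonneg_right hη1 (by positivity))) ?_⟩
  calc _ ≤ ∑ u ∈ A, (#(A.filter fun v => codeg G C u v < δ * #C) : ℝ) :=
        (sum_le_sum fun u _ => by
          exact_mod_cast card_le_card (filter_subset_filter _ hIA)).trans
          (sum_le_sum_of_subset_of_nonneg hJA fun _ _ _ => Nat.cast_nonneg _)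
    _ ≤ α ^ 3 * (a * a) := hAA
    _ = (α * 128) * (1 / 4 * (α ^ 2 * a ^ 2 / 32)) := by ring
    _ ≤ η * (1 / 4 * (α ^ 2 * a ^ 2 / 32)) :=
        mul_le_mul_of_nonneg_right (by linarith) (by positivity)
    _ = 1 / 4 * (α / 8 * a * (η * α / 4 * a)) := by ring
    _ ≤ _ := mul_le_mul_of_nonneg_left hprod (by norm_num)

end

/-- A tame graph contains a sparse pair of large sets having many common non-neighbours. -/
theorem Tame.exists_sparse_pair (ε : ℝ) (hε : 0 < ε) :
    ∃ ε' : ℝ, 0 < ε' ∧ ∀ η : ℝ, 0 < η → ∃ ρ : ℝ, 0 < ρ ∧ ρ ≤ 1 ∧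
      ∀ {V : Type u} [LinearOrder V] (G : SimpleGraph V) (σ : ℝ) (A B C : Finset V),
      Tame G σ → (∀ a ∈ A, ∀ b ∈ B, a < b) → (∀ b ∈ B, ∀ c ∈ C, b < c) →
      ε * (#A * #B * #C) ≤ tri G A B C → σ ≤ ρ * #A → σ ≤ ρ * #B → σ ≤ ρ * #C →
      ∃ X ⊆ A, ∃ Y, (Y ⊆ A ∧ ρ * #A ≤ #Y ∨ Y ⊆ B ∧ ρ * #B ≤ #Y) ∧
        (∀ x ∈ X, ∀ y ∈ Y, x < y) ∧ ρ * #A ≤ #X ∧ edges G X Y ≤ η * (#X * #Y) ∧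
        ε' * (#X * #Y * #C) ≤ tri G X Y C := by
  obtain ⟨δ, hδ0, hδ1, hδ⟩ := exists_random_choice ε hε
  refine ⟨δ / 2, by positivity, fun η hη => ?_⟩
  wlog hη1 : η ≤ 1 / 4 generalizing η
  · obtain ⟨ρ, h0, h1, hρ⟩ := this (1 / 4) (by norm_num) le_rfl
    refine ⟨ρ, h0, h1, fun G σ A B C h hAB hBC ht ha hb hc => ?_⟩
    obtain ⟨X, hX, Y, hY, hXY, hXc, he, htri⟩ := hρ G σ A B C h hAB hBC ht ha hb hc
    exact ⟨X, hX, Y, hY, hXY, hXc, he.trans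
      (mul_le_mul_of_nonneg_right (not_le.1 hη1).le (by positivity)), htri⟩
  obtain ⟨α, hα0, hα1, hα⟩ := hδ (η ^ 2 / 256) (by positivity)
  have hαη : α ≤ η / 1024 := hα1.trans (by nlinarith)
  have hα' : α ≤ 1 / 4096 := by linarith
  have hρα : α ^ 4 * δ / 8 ≤ α ^ 4 := by
    have : α ^ 4 * δ ≤ α ^ 4 * 1 := by gcongr
    have : 0 < α ^ 4 := by positivity
    linarith
  have hα4 : α ^ 4 ≤ η * α / 8 := by
    have : α ^ 3 ≤ η / 8 := by
      calc α ^ 3 ≤ α ^ 1 := pow_le_pow_of_le_one hα0.le (by linarith) (by norm_num)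
        _ ≤ _ := by linarith
    calc α ^ 4 = α ^ 3 * α := by ring
      _ ≤ η / 8 * α := by gcongr
      _ = _ := by ring
  have hηα : η * α ≤ α := by nlinarith
  have hρα' : α ^ 4 * δ / 8 ≤ α / 8 := by linarith
  refine ⟨α ^ 4 * δ / 8, by positivity, by linarith,
    fun {V} _ G σ A B C h hAB hBC ht ha hb hc => ?_⟩
  have h1 := h.one_le
  have ρ0 : 0 ≤ α ^ 4 * δ / 8 := by positivity
  have a0 : (0 : ℝ) < #A := pos_of_mul_pos_right (h1.trans ha |>.trans_lt' zero_lt_one) ρ0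
  have b0 : (0 : ℝ) < #B := pos_of_mul_pos_right (h1.trans hb |>.trans_lt' zero_lt_one) ρ0
  have c0 : (0 : ℝ) < #C := pos_of_mul_pos_right (h1.trans hc |>.trans_lt' zero_lt_one) ρ0
  obtain ⟨A', hA', B', hB', hA'c, hB'c, hnon, htrip, hAA, hAB'⟩ := hα G A B C
    (card_pos.1 (by exact_mod_cast a0)) (card_pos.1 (by exact_mod_cast b0))
    (card_pos.1 (by exact_mod_cast c0)) ht
  have hlt : ∀ a ∈ A', ∀ b ∈ B', a < b := fun a ha b hb => hAB a (hA' ha) b (hB' hb)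
  have hσC : 4 * σ < δ * #C := by
    have : α ^ 4 * δ / 8 * (#C : ℝ) < δ / 4 * #C := by
      refine mul_lt_mul_of_pos_right ?_ c0
      have : α ^ 4 < 1 := by linarith
      nlinarith
    linarith
  have hD := h.le_card_dense (C := C) hlt (fun b hb => hBC b (hB' hb)) hα0 a0 b0
    (by exact_mod_cast card_le_card hA') (by exact_mod_cast card_le_card hB')
    (hb.trans (mul_le_mul_of_nonneg_right hρα b0.le)) hσC hnon htrip
  set D := B'.filter fun v => α / 2 * #A ≤ #(A'.filter (¬ G.Adj · v)) ∧
    privateEdges G A' v ≤ 8 * α ^ 3 * #A ^ 2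
  have hαa : 8 ≤ α * #A := by
    have := mul_le_mul_of_nonneg_right hρα' a0.le
    linarith
  have hm0 := Nat.le_ceil (α / 4 * #A)
  have hm1 := (Nat.ceil_lt_add_one (by positivity : 0 ≤ α / 4 * (#A : ℝ))).le
  obtain ⟨p, hp⟩ := exists_card_filter_gt_eq A' ⌈α / 4 * (#A : ℝ)⌉₊ (by
    exact_mod_cast (by linarith : (⌈α / 4 * (#A : ℝ)⌉₊ : ℝ) < #A'))
  rw [← hp] at hm0 hm1
  by_cases hcase : ∃ v ∈ D, η * α / 4 * #A ≤ #((A'.filter (p < ·)).filter (G.Adj · v))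
  · obtain ⟨v, hv, hvX⟩ := hcase
    obtain ⟨-, hvJ, hve⟩ := mem_filter.1 hv
    obtain ⟨X, hX, Y, hY, hXY, hXc, hYc, hedge, htri⟩ := exists_sparse_pair_inside hα0 hη hη1 hα1
      hαa hδ0.le hm1 hvJ hve hvX hAA
    refine ⟨X, hX.trans hA', Y, .inl ⟨hY.trans hA', ?_⟩, hXY, ?_, hedge, htri⟩
    · exact le_trans (mul_le_mul_of_nonneg_right (by linarith) a0.le) hYc
    · exact le_trans (mul_le_mul_of_nonneg_right (by linarith) a0.le) hXc
  · push Not at hcase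
    have hXA : A'.filter (p < ·) ⊆ A' := filter_subset _ _
    have hDB : D ⊆ B' := filter_subset _ _
    obtain ⟨hedge, htri⟩ := sparse_pair_across hα0 hη hη1 (by linarith) a0 b0 hδ0.le hXA hDB hm0 hD
      hcase hAB'
    refine ⟨_, hXA.trans hA', D, .inr ⟨hDB.trans hB', ?_⟩,
      fun x hx y hy => hlt x (hXA hx) y (hDB hy), ?_, hedge, htri⟩
    · exact le_trans (mul_le_mul_of_nonneg_right (by linarith) b0.le) hD
    · exact le_trans (mul_le_mul_of_nonneg_right (by linarith) a0.le) hm0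

end

section
open Finset Classical
universe u

theorem Tame.dual {V : Type u} [LinearOrder V] {G : SimpleGraph V} {σ : ℝ} (h : Tame G σ) :
    @Tame V (inferInstanceAs (LinearOrder Vᵒᵈ)) G σ := by
  refine @Tame.mk V (inferInstanceAs (LinearOrder Vᵒᵈ)) G σ ?_ ?_
  · intro a b c d e hab hbc hcd hde h1 h2 h3 h4 n1 n2 n3 n4 n5 n6
    exact h.noPath e d c b a hde hcd hbc hab h4.symm h3.symm h2.symm h1.symm
      (fun h => n6 h.symm) (fun h => n5 h.symm) (fun h => n3 h.symm) (fun h => n4 h.symm)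
      (fun h => n2 h.symm) (fun h => n1 h.symm)
  · obtain ⟨t, L, ht, hL, hole, hσ⟩ := h.exists_holeFree
    refine ⟨t, L, ht, hL, fun X Y hXY hX hY => ?_, hσ⟩
    obtain ⟨y, hy, x, hx, ha⟩ := hole Y X (fun y hy x hx => hXY x hx y hy) hY hX
    exact ⟨x, hx, y, hy, ha.symm⟩

theorem tri_reverse {V : Type u} (G : SimpleGraph V) (A B C : Finset V) :
    tri G A B C = tri G C B A :=
  ((tri_rotate G C B A).trans (tri_swap G B A C)).symm

/-- The mirror image of `Tame.exists_sparse_pair`. -/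
theorem Tame.exists_sparse_pair_right (ε : ℝ) (hε : 0 < ε) :
    ∃ ε' : ℝ, 0 < ε' ∧ ∀ η : ℝ, 0 < η → ∃ ρ : ℝ, 0 < ρ ∧ ρ ≤ 1 ∧
      ∀ {V : Type u} [LinearOrder V] (G : SimpleGraph V) (σ : ℝ) (A B C : Finset V),
      Tame G σ → (∀ a ∈ A, ∀ b ∈ B, a < b) → (∀ b ∈ B, ∀ c ∈ C, b < c) →
      ε * (#A * #B * #C) ≤ tri G A B C → σ ≤ ρ * #A → σ ≤ ρ * #B → σ ≤ ρ * #C →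
      ∃ Z ⊆ C, ∃ Y, (Y ⊆ C ∧ ρ * #C ≤ #Y ∨ Y ⊆ B ∧ ρ * #B ≤ #Y) ∧
        (∀ y ∈ Y, ∀ z ∈ Z, y < z) ∧ ρ * #C ≤ #Z ∧ edges G Y Z ≤ η * (#Y * #Z) ∧
        ε' * (#A * #Y * #Z) ≤ tri G A Y Z := by
  obtain ⟨ε', h0, h⟩ := Tame.exists_sparse_pair.{u} ε hε
  refine ⟨ε', h0, fun η hη => ?_⟩
  obtain ⟨ρ, h1, h2, hρ⟩ := h η hη
  refine ⟨ρ, h1, h2, fun {V} _ G σ A B C hG hAB hBC ht ha hb hc => ?_⟩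
  obtain ⟨Z, hZ, Y, hY, hlt, hZc, he, htri⟩ :=
    @hρ V (inferInstanceAs (LinearOrder Vᵒᵈ)) G σ C B A hG.dual
      (fun c hc b hb => hBC b hb c hc) (fun b hb a ha => hAB a ha b hb)
      (by rw [tri_reverse]; convert ht using 1; ring) hc hb ha
  refine ⟨Z, hZ, Y, hY, fun y hy z hz => hlt z hz y hy, hZc, ?_, ?_⟩
  · rw [edges_comm, mul_comm (#Y : ℝ)]
    exact he
  · rw [tri_reverse]
    convert htri using 1
    ring

/-- In a tame graph there is no large set `X` of up-neighbours `x` of `u` such that `u` and `x` have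
many common non-neighbours, provided that `B` is sparse to `C` and to `X`. -/
theorem Tame.false_of_common_nonneighbors
    {V : Type u} [LinearOrder V] {G : SimpleGraph V} {σ δ : ℝ}
    (h : Tame G σ) (hδ : 0 < δ) {u : V} {X B C : Finset V} (hb0 : 0 < #B) (hc0 : 0 < #C)
    (hX : ∀ x ∈ X, u < x ∧ G.Adj u x ∧ δ * #C ≤ codeg G C u x ∧
      (#(B.filter (G.Adj x ·)) : ℝ) ≤ 1 / 10 * #B)
    (hu : (#(B.filter (G.Adj u ·)) : ℝ) ≤ 1 / 10 * #B)
    (hXB : ∀ x ∈ X, ∀ b ∈ B, x < b) (hBC : ∀ b ∈ B, ∀ c ∈ C, b < c)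
    (eBC : edges G B C ≤ δ / 20 * (#B * #C)) (hXσ : σ ≤ #X) (hb₁ : σ ≤ 1 / 800 * #B)
    (hc₁ : σ ≤ δ / 800 * #C) : False := by
  have b0 : (0 : ℝ) < #B := by exact_mod_cast hb0
  have c0 : (0 : ℝ) < #C := by exact_mod_cast hc0
  set B₀ := B.filter fun v => ¬ δ / 2 * #C < #(C.filter (G.Adj v ·)) with hB₀
  have cB₀ : (#B : ℝ) ≤ _ := card_le_filter_not_add B
    (fun v => δ / 2 * #C < #(C.filter (G.Adj v ·)))
  rw [← hB₀] at cB₀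
  have kB := edges_heavy hc0 eBC (by positivity : 0 < δ / 2)
  have kB' : δ / 20 / (δ / 2) * (#B : ℝ) ≤ 1 / 10 * #B :=
    mul_le_mul_of_nonneg_right (by rw [div_le_iff₀ (by positivity)]; linarith) b0.le
  have sB₀ : B₀ ⊆ B := filter_subset _ _
  set S := B₀.filter fun y => ¬ G.Adj u y with hS
  have sS : S ⊆ B := (filter_subset _ _).trans sB₀
  obtain ⟨x, hx, hxr⟩ := h.exists_reach_of_lt (S := S)
    (fun x hx y hy => hXB x hx y (sS hy)) hXσ
  obtain ⟨hux, hax, hcod, dx⟩ := hX x hx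
  refine h.false_of_reach (S := S) (C := C) (p := B.max' (card_pos.1 hb0)) hux hax
    (fun y hy => (mem_filter.1 hy).2) (fun y hy => le_max' _ _ (sS hy))
    (fun c hc => hBC _ (max'_mem _ _) c hc) ?_ ?_
  · have c1 := card_le_filter_not_and_add B₀ (G.Adj u ·) (G.Adj x ·)
    have c2 : (#(B₀.filter (G.Adj u ·)) : ℝ) ≤ 1 / 10 * #B :=
      le_trans (by exact_mod_cast card_le_card (filter_subset_filter _ sB₀)) hu
    have c3 : (#(B₀.filter (G.Adj x ·)) : ℝ) ≤ 1 / 10 * #B :=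
      le_trans (by exact_mod_cast card_le_card (filter_subset_filter _ sB₀)) dx
    have c4 : (#(B₀.filter fun y => ¬ G.Adj u y ∧ ¬ G.Adj x y) : ℝ) ≤
        #(S.filter fun y => ¬ G.Adj x y ∧ Reach G S x y) +
        #(S.filter fun y => ¬ Reach G S x y) := by
      norm_cast
      refine (card_le_card fun y hy => mem_union.2 ?_).trans (card_union_le _ _)
      obtain ⟨hyB, huy, hxy⟩ := mem_filter.1 hy
      have hyS : y ∈ S := mem_filter.2 ⟨hyB, huy⟩
      by_cases hR : Reach G S x y
      · exact .inl (mem_filter.2 ⟨hyS, hxy, hR⟩)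
      · exact .inr (mem_filter.2 ⟨hyS, hR⟩)
    linarith
  · intro v hv
    have c1 : (#(C.filter (G.Adj v ·)) : ℝ) ≤ δ / 2 * #C :=
      not_lt.1 (mem_filter.1 (mem_filter.1 hv).1).2
    have c2 : codeg G C u x ≤
        #(C.filter fun c => ¬ G.Adj u c ∧ ¬ G.Adj x c ∧ ¬ G.Adj v c) +
        #(C.filter (G.Adj v ·)) := by
      unfold codeg
      norm_cast
      refine (card_le_card fun y hy => ?_).trans (card_union_le _ _)
      simp only [mem_union, mem_filter] at hy ⊢
      tauto
    have c3 : 0 < δ * (#C : ℝ) := by positivity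
    linarith

/-- A tame graph contains no three large consecutive sets with a positive density of non-adjacent
triples such that the middle set has few edges to the other two. -/
theorem Tame.false_of_sparse_middle (ε : ℝ) (hε : 0 < ε) :
    ∃ θ : ℝ, 0 < θ ∧ ∃ κ : ℝ, 0 < κ ∧
      ∀ {V : Type u} [LinearOrder V] (G : SimpleGraph V) (σ : ℝ) (A B C : Finset V),
      Tame G σ → (∀ a ∈ A, ∀ b ∈ B, a < b) → (∀ b ∈ B, ∀ c ∈ C, b < c) →
      ε * (#A * #B * #C) ≤ tri G A B C → edges G A B ≤ θ * (#A * #B) →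
      edges G B C ≤ θ * (#B * #C) → σ ≤ κ * #A → σ ≤ κ * #B → σ ≤ κ * #C → False := by
  obtain ⟨δ, hδ0, hδ1, hδ⟩ := exists_random_choice.{u} ε hε
  obtain ⟨α, hα0, hα1, hα⟩ := hδ (1 / 12800) (by norm_num)
  have hα3 : α ^ 3 ≤ α := by
    simpa using pow_le_pow_of_le_one hα0.le (by linarith) (by norm_num : 1 ≤ 3)
  have α3 : 0 < α ^ 3 := by positivity
  have hαδ : α * δ ≤ α := by nlinarith
  have hαδ' : α * δ ≤ δ := by nlinarith
  have hk : α ^ 3 * δ ≤ α ^ 3 := by nlinarith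
  have hk' : α ^ 3 * δ ≤ δ := by nlinarith
  refine ⟨α * δ / 800, by positivity, α ^ 3 * δ / 800, by positivity,
    fun {V} _ G σ A B C h hAB hBC ht eAB eBC ha hb hc => ?_⟩
  have h1 := h.one_le
  have κ0 : 0 ≤ α ^ 3 * δ / 800 := by positivity
  have a0 : (0 : ℝ) < #A := pos_of_mul_pos_right (h1.trans ha |>.trans_lt' zero_lt_one) κ0
  have b0 : (0 : ℝ) < #B := pos_of_mul_pos_right (h1.trans hb |>.trans_lt' zero_lt_one) κ0
  have c0 : (0 : ℝ) < #C := pos_of_mul_pos_right (h1.trans hc |>.trans_lt' zero_lt_one) κ0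
  have hb0 : 0 < #B := by exact_mod_cast b0
  have hc0 : 0 < #C := by exact_mod_cast c0
  obtain ⟨A', hA', -, -, hA'c, -, -, -, hAA, -⟩ := hα G A B C
    (card_pos.1 (by exact_mod_cast a0)) (card_pos.1 hb0) (card_pos.1 hc0) ht
  have ha₁ : σ ≤ α ^ 3 * #A := ha.trans (mul_le_mul_of_nonneg_right (by linarith) a0.le)
  have ha₂ : σ ≤ α / 800 * #A := ha.trans (mul_le_mul_of_nonneg_right (by linarith) a0.le)
  have hb₁ : σ ≤ 1 / 800 * #B := hb.trans (mul_le_mul_of_nonneg_right (by linarith) b0.le)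
  have hc₁ : σ ≤ δ / 800 * #C := hc.trans (mul_le_mul_of_nonneg_right (by linarith) c0.le)
  set A₂ := A'.filter fun x => ¬ (1 / 10 : ℝ) * #B < #(B.filter (G.Adj x ·)) with hA₂
  have sA₂ : A₂ ⊆ A' := filter_subset _ _
  have sA : A₂ ⊆ A := sA₂.trans hA'
  have dAB : ∀ x ∈ A₂, (#(B.filter (G.Adj x ·)) : ℝ) ≤ 1 / 10 * #B :=
    fun x hx => not_lt.1 (mem_filter.1 hx).2
  have cA₂ : α / 2 * #A ≤ (#A₂ : ℝ) := by
    have k1 := edges_heavy hb0 eAB (by norm_num : (0 : ℝ) < 1 / 10)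
    have k2 : (#(A'.filter fun x => (1 / 10 : ℝ) * #B < #(B.filter (G.Adj x ·))) : ℝ) ≤
        #(A.filter fun x => (1 / 10 : ℝ) * #B < #(B.filter (G.Adj x ·))) := by
      exact_mod_cast card_le_card (filter_subset_filter _ hA')
    have k3 : (#A' : ℝ) ≤ _ := card_le_filter_not_add A'
      (fun x => (1 / 10 : ℝ) * #B < #(B.filter (G.Adj x ·)))
    rw [← hA₂] at k3
    have k4 : α * δ / 800 / (1 / 10) * (#A : ℝ) ≤ α / 2 * #A :=
      mul_le_mul_of_nonneg_right (by linarith) a0.le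
    linarith
  set N : ℝ := ∑ u ∈ A₂, (#(A₂.filter fun x => u < x ∧ G.Adj u x) : ℝ) with hN
  rcases lt_or_ge (2 * α ^ 3 * (#A * #A)) N with hNge | hNle
  · obtain ⟨u, hu, hX⟩ : ∃ u ∈ A₂, α ^ 3 * #A <
        #(A₂.filter fun x => (u < x ∧ G.Adj u x) ∧ δ * #C ≤ codeg G C u x) := by
      by_contra! hno
      have i1 : N ≤ ∑ u ∈ A₂,
          (α ^ 3 * #A + (#(A'.filter fun x => codeg G C u x < δ * #C) : ℝ)) := by
        refine sum_le_sum fun u hu => le_trans ?_ (add_le_add_left (hno u hu) _)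
        norm_cast
        refine (card_le_card fun x hx => mem_union.2 ?_).trans (card_union_le _ _)
        obtain ⟨hx, hx'⟩ := mem_filter.1 hx
        rcases lt_or_ge (codeg G C u x) (δ * #C) with hc | hc
        · exact .inr (mem_filter.2 ⟨sA₂ hx, hc⟩)
        · exact .inl (mem_filter.2 ⟨hx, hx', hc⟩)
      rw [sum_add_distrib, sum_const, nsmul_eq_mul] at i1
      have i2 : ∑ u ∈ A₂, (#(A'.filter fun x => codeg G C u x < δ * #C) : ℝ) ≤
          α ^ 3 * (#A * #A) :=
        (sum_le_sum_of_subset_of_nonneg sA₂ fun _ _ _ => Nat.cast_nonneg _).trans hAA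
      have i3 : #A₂ * (α ^ 3 * #A) ≤ #A * (α ^ 3 * #A) :=
        mul_le_mul_of_nonneg_right (by exact_mod_cast card_le_card sA) (by positivity)
      linarith
    exact h.false_of_common_nonneighbors hδ0 hb0 hc0
      (fun x hx => ⟨(mem_filter.1 hx).2.1.1, (mem_filter.1 hx).2.1.2, (mem_filter.1 hx).2.2,
        dAB x (mem_filter.1 hx).1⟩) (dAB u hu)
      (fun x hx => hAB x (sA (mem_filter.1 hx).1)) hBC
      (eBC.trans (mul_le_mul_of_nonneg_right (by linarith) (mul_nonneg b0.le c0.le)))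
      (ha₁.trans hX.le) hb₁ hc₁
  · obtain ⟨p, hp0, hp1⟩ := exists_split A₂ (by exact_mod_cast (by linarith : (2 : ℝ) ≤ #A₂))
    set X := A₂.filter (· ≤ p)
    set Y := A₂.filter (p < ·)
    have sX : X ⊆ A₂ := filter_subset _ _
    have sY : Y ⊆ A₂ := filter_subset _ _
    have cX : α / 8 * #A ≤ (#X : ℝ) := by linarith
    have cY : α / 8 * #A ≤ (#Y : ℝ) := by linarith
    have eB : ∀ Z ⊆ A₂, α / 8 * #A ≤ (#Z : ℝ) → edges G Z B ≤ 1 / 100 * (#Z * #B) := by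
      intro Z hZ hZc
      calc edges G Z B ≤ α * δ / 800 * (#A * #B) :=
            (edges_mono G (hZ.trans sA) subset_rfl).trans eAB
        _ ≤ α / 800 * (#A * #B) :=
            mul_le_mul_of_nonneg_right (by linarith) (by positivity)
        _ = 1 / 100 * (α / 8 * #A * #B) := by ring
        _ ≤ _ := mul_le_mul_of_nonneg_left
            (mul_le_mul_of_nonneg_right hZc b0.le) (by norm_num)
    refine h.false_of_sparse_triple (A := X) (B := Y) (C := B)
      (fun x hx y hy => (mem_filter.1 hx).2.trans_lt (mem_filter.1 hy).2)
      (fun y hy b hb => hAB y (sA (sY hy)) b hb) (by linarith) (by linarith) (by linarith) ?_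
      (eB X sX cX) (eB Y sY cY)
    calc edges G X Y ≤ ∑ u ∈ X, (#(A₂.filter fun x => u < x ∧ G.Adj u x) : ℝ) := by
          refine sum_le_sum fun u hu => ?_
          norm_cast
          refine card_le_card fun x hx => ?_
          obtain ⟨hx, hux⟩ := mem_filter.1 hx
          obtain ⟨hxA, hpx⟩ := mem_filter.1 hx
          exact mem_filter.2 ⟨hxA, (mem_filter.1 hu).2.trans_lt hpx, hux⟩
      _ ≤ N := sum_le_sum_of_subset_of_nonneg sX fun _ _ _ => Nat.cast_nonneg _
      _ ≤ 2 * α ^ 3 * (#A * #A) := hNle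
      _ = (α * 12800) * (1 / 100 * (α / 8 * #A * (α / 8 * #A))) := by ring
      _ ≤ 1 * (1 / 100 * (α / 8 * #A * (α / 8 * #A))) :=
          mul_le_mul_of_nonneg_right (by linarith) (by positivity)
      _ = 1 / 100 * (α / 8 * #A * (α / 8 * #A)) := by ring
      _ ≤ _ := mul_le_mul_of_nonneg_left
          (mul_le_mul cX cY (by positivity) (by positivity)) (by norm_num)

end

section
open Finset Classical
universe u

theorem edges_le_of_subset {V : Type u} (G : SimpleGraph V) {X Y X' Y' : Finset V} {η θ ρ : ℝ}
    (hX : X' ⊆ X) (hY : Y' ⊆ Y) (h : edges G X Y ≤ η * (#X * #Y)) (hη : η ≤ θ * ρ) (hθ : 0 ≤ θ)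
    (hρ : ρ * (#X * #Y) ≤ #X' * #Y') : edges G X' Y' ≤ θ * (#X' * #Y') :=
  calc edges G X' Y' ≤ η * (#X * #Y) := (edges_mono G hX hY).trans h
    _ ≤ θ * ρ * (#X * #Y) :=
      mul_le_mul_of_nonneg_right hη (mul_nonneg (Nat.cast_nonneg _) (Nat.cast_nonneg _))
    _ = θ * (ρ * (#X * #Y)) := by ring
    _ ≤ _ := mul_le_mul_of_nonneg_left hρ hθ

/-- A tame graph contains no three large consecutive sets with a positive density of non-adjacent
triples. -/
theorem Tame.false_of_tri (ε : ℝ) (hε : 0 < ε) :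
    ∃ κ : ℝ, 0 < κ ∧ ∀ {V : Type u} [LinearOrder V] (G : SimpleGraph V) (σ : ℝ) (A B C : Finset V),
      Tame G σ → (∀ a ∈ A, ∀ b ∈ B, a < b) → (∀ b ∈ B, ∀ c ∈ C, b < c) →
      ε * (#A * #B * #C) ≤ tri G A B C → σ ≤ κ * #A → σ ≤ κ * #B → σ ≤ κ * #C → False := by
  obtain ⟨ε₁, e1, H1⟩ := Tame.exists_sparse_pair.{u} ε hε
  obtain ⟨ε₂, e2, H2⟩ := Tame.exists_sparse_pair_right.{u} ε₁ e1
  obtain ⟨ε₃, e3, H3⟩ := Tame.exists_sparse_pair.{u} ε₂ e2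
  obtain ⟨θ₂, t2, κ₂, k2, F2⟩ := Tame.false_of_sparse_middle.{u} ε₂ e2
  obtain ⟨θ₃, t3, κ₃, k3, F3⟩ := Tame.false_of_sparse_middle.{u} ε₃ e3
  obtain ⟨ρ₃, r3, r3', P3⟩ := H3 (min θ₃ (1 / 100)) (lt_min t3 (by norm_num))
  obtain ⟨ρ₂, r2, r2', P2⟩ := H2 (min θ₂ (θ₃ * ρ₃)) (lt_min t2 (by positivity))
  obtain ⟨ρ₁, r1, r1', P1⟩ := H1 (min (θ₂ * ρ₂) (1 / 100 * ρ₃))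
    (lt_min (by positivity) (by positivity))
  set μ := min (min κ₂ κ₃) (1 / 100) with hμ
  have μ0 : 0 < μ := lt_min (lt_min k2 k3) (by norm_num)
  have μ2 : μ ≤ κ₂ := (min_le_left _ _).trans (min_le_left _ _)
  have μ3 : μ ≤ κ₃ := (min_le_left _ _).trans (min_le_right _ _)
  have μ1 : μ ≤ 1 / 100 := min_le_right _ _
  clear_value μ
  refine ⟨μ * (ρ₃ * (ρ₂ * ρ₁)), by positivity,
    fun {V} _ G σ A B C h hAB hBC ht ha hb hc => ?_⟩
  have h1 := h.one_le
  obtain ⟨M, hM⟩ : ∃ M, σ = μ * (ρ₃ * (ρ₂ * ρ₁)) * M :=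
    ⟨σ / (μ * (ρ₃ * (ρ₂ * ρ₁))), by field_simp⟩
  have hκ : 0 < μ * (ρ₃ * (ρ₂ * ρ₁)) := by positivity
  rw [hM] at ha hb hc
  replace ha := le_of_mul_le_mul_left ha hκ
  replace hb := le_of_mul_le_mul_left hb hκ
  replace hc := le_of_mul_le_mul_left hc hκ
  have M0 : 0 < M := pos_of_mul_pos_right (hM ▸ zero_lt_one.trans_le h1) hκ.le
  obtain ⟨m₁, hm1⟩ : ∃ m, m = ρ₁ * M := ⟨_, rfl⟩
  obtain ⟨m₂, hm2⟩ : ∃ m, m = ρ₂ * m₁ := ⟨_, rfl⟩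
  obtain ⟨m₃, hm3⟩ : ∃ m, m = ρ₃ * m₂ := ⟨_, rfl⟩
  have hσ : σ = μ * m₃ := by rw [hM, hm3, hm2, hm1]; ring
  have p1 : 0 < m₁ := hm1 ▸ mul_pos r1 M0
  have p2 : 0 < m₂ := hm2 ▸ mul_pos r2 p1
  have p3 : 0 < m₃ := hm3 ▸ mul_pos r3 p2
  have l1 : m₁ ≤ M := hm1 ▸ mul_le_of_le_one_left M0.le r1'
  have l2 : m₂ ≤ m₁ := hm2 ▸ mul_le_of_le_one_left p1.le r2'
  have l3 : m₃ ≤ m₂ := hm3 ▸ mul_le_of_le_one_left p2.le r3'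
  have hσ3 : σ ≤ m₃ := hσ ▸ mul_le_of_le_one_left p3.le (by linarith)
  have s1 : ∀ {x : ℝ}, M ≤ x → m₁ ≤ ρ₁ * x := fun hx =>
    hm1 ▸ mul_le_mul_of_nonneg_left hx r1.le
  have s2 : ∀ {x : ℝ}, m₁ ≤ x → m₂ ≤ ρ₂ * x := fun hx =>
    hm2 ▸ mul_le_mul_of_nonneg_left hx r2.le
  have s3 : ∀ {x : ℝ}, m₂ ≤ x → m₃ ≤ ρ₃ * x := fun hx =>
    hm3 ▸ mul_le_mul_of_nonneg_left hx r3.le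
  have sμ : ∀ {κ x : ℝ}, μ ≤ κ → m₃ ≤ x → σ ≤ κ * x := fun hκ hx =>
    hσ ▸ mul_le_mul hκ hx p3.le (μ0.le.trans hκ)
  have q : ∀ {X Y Y' : Finset V} {ρ : ℝ}, ρ * #Y ≤ #Y' → ρ * (#X * #Y : ℝ) ≤ #X * #Y' :=
    fun {X Y Y' ρ} hρ => by
      rw [mul_left_comm]
      exact mul_le_mul_of_nonneg_left hρ (Nat.cast_nonneg _)
  obtain ⟨A₁, hA₁, B₁, hB₁, lt1, cA₁, ed1, tr1⟩ := P1 G σ A B C h hAB hBC ht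
    ((hσ3.trans (l3.trans l2)).trans (s1 ha)) ((hσ3.trans (l3.trans l2)).trans (s1 hb))
    ((hσ3.trans (l3.trans l2)).trans (s1 hc))
  have dA₁ : m₁ ≤ #A₁ := (s1 ha).trans cA₁
  have dB₁ : m₁ ≤ #B₁ := hB₁.elim (fun h => (s1 ha).trans h.2) fun h => (s1 hb).trans h.2
  obtain ⟨b, hb'⟩ : B.Nonempty := card_pos.1 (by exact_mod_cast M0.trans_le hb)
  have hAC : ∀ a ∈ A, ∀ c ∈ C, a < c := fun a ha c hc => (hAB a ha b hb').trans (hBC b hb' c hc)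
  have hB₁C : ∀ b ∈ B₁, ∀ c ∈ C, b < c := fun b hb c hc =>
    hB₁.elim (fun h => hAC b (h.1 hb) c hc) fun h => hBC b (h.1 hb) c hc
  obtain ⟨Z, hZ, Y, hY, lt2, cZ, ed2, tr2⟩ := P2 G σ A₁ B₁ C h lt1 hB₁C tr1
    ((hσ3.trans l3).trans (s2 dA₁)) ((hσ3.trans l3).trans (s2 dB₁))
    ((hσ3.trans l3).trans (s2 (l1.trans hc)))
  have dZ : m₂ ≤ #Z := (s2 (l1.trans hc)).trans cZ
  have dY : m₂ ≤ #Y :=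
    hY.elim (fun h => (s2 (l1.trans hc)).trans h.2) fun h => (s2 dB₁).trans h.2
  rcases hY with ⟨hYC, -⟩ | ⟨hYB, cY⟩
  · obtain ⟨X, hX, W, hW, lt3, cX, ed3, tr3⟩ := P3 G σ A₁ Y Z h
      (fun a ha y hy => hAC a (hA₁ ha) y (hYC hy)) lt2 tr2
      (hσ3.trans (s3 (l2.trans dA₁))) (hσ3.trans (s3 dY)) (hσ3.trans (s3 dZ))
    have dX : m₃ ≤ #X := (s3 (l2.trans dA₁)).trans cX
    rcases hW with ⟨hWA, cW⟩ | ⟨hWY, cW⟩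
    · have dW : m₃ ≤ #W := (s3 (l2.trans dA₁)).trans cW
      have ed : ∀ T ⊆ A₁, ρ₃ * #A₁ ≤ #T → edges G T B₁ ≤ 1 / 100 * (#T * #B₁) := fun T hT cT =>
        edges_le_of_subset G hT subset_rfl ed1 (min_le_right _ _) (by norm_num) (by
          rw [← mul_assoc]
          exact mul_le_mul_of_nonneg_right cT (Nat.cast_nonneg _))
      have big : ∀ T : Finset V, m₃ ≤ #T → 100 * σ ≤ #T := fun T hT => by
        linarith [sμ μ1 hT]
      exact h.false_of_sparse_triple lt3 (fun w hw b hb => lt1 w (hWA hw) b hb) (big X dX)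
        (big W dW) (big B₁ ((l3.trans l2).trans dB₁))
        (ed3.trans (mul_le_mul_of_nonneg_right (min_le_right _ _)
          (mul_nonneg (Nat.cast_nonneg _) (Nat.cast_nonneg _)))) (ed X hX cX) (ed W hWA cW)
    · exact F3 G σ X W Z h lt3 (fun w hw z hz => lt2 w (hWY hw) z hz) tr3
        (ed3.trans (mul_le_mul_of_nonneg_right (min_le_left _ _)
          (mul_nonneg (Nat.cast_nonneg _) (Nat.cast_nonneg _))))
        (edges_le_of_subset G hWY subset_rfl ed2 (min_le_right _ _) t3.le (by
          rw [← mul_assoc]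
          exact mul_le_mul_of_nonneg_right cW (Nat.cast_nonneg _)))
        (sμ μ3 dX) (sμ μ3 ((s3 dY).trans cW)) (sμ μ3 (l3.trans dZ))
  · exact F2 G σ A₁ Y Z h (fun a ha y hy => lt1 a ha y (hYB hy)) lt2 tr2
      (edges_le_of_subset G subset_rfl hYB ed1 (min_le_left _ _) t2.le (q cY))
      (ed2.trans (mul_le_mul_of_nonneg_right (min_le_left _ _)
        (mul_nonneg (Nat.cast_nonneg _) (Nat.cast_nonneg _))))
      (sμ μ2 ((l3.trans l2).trans dA₁)) (sμ μ2 (l3.trans dY)) (sμ μ2 (l3.trans dZ))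

end

section
open Finset Classical

theorem card_filter_le_tri {V : Type*} (G : SimpleGraph V) (A B C : Finset V)
    (S : Finset (V × V × V)) (hS : ∀ x ∈ S, x.1 ∈ A ∧ x.2.1 ∈ B ∧ x.2.2 ∈ C ∧
      ¬ G.Adj x.1 x.2.1 ∧ ¬ G.Adj x.1 x.2.2 ∧ ¬ G.Adj x.2.1 x.2.2) : (#S : ℝ) ≤ tri G A B C := by
  have : (#((A ×ˢ B ×ˢ C).filter fun x => ¬ G.Adj x.1 x.2.1 ∧ ¬ G.Adj x.1 x.2.2 ∧
      ¬ G.Adj x.2.1 x.2.2) : ℝ) = tri G A B C := by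
    rw [card_filter, sum_product]
    simp only [sum_product, tri]
    push_cast
    rfl
  rw [← this]
  exact_mod_cast card_le_card fun x hx => by
    obtain ⟨h1, h2, h3, h4⟩ := hS x hx
    exact mem_filter.2 ⟨mem_product.2 ⟨h1, mem_product.2 ⟨h2, h3⟩⟩, h4⟩

theorem tri_le_card {V : Type*} (G : SimpleGraph V) (A B C : Finset V) :
    tri G A B C ≤ #A * #B * #C := by
  calc tri G A B C ≤ ∑ a ∈ A, ∑ b ∈ B, ∑ c ∈ C, (1 : ℝ) :=
        sum_le_sum fun _ _ => sum_le_sum fun _ _ => sum_le_sum fun _ _ => by split_ifs <;> norm_num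
    _ = _ := by simp; ring

theorem card_filter_div_eq_le {n m : ℕ} (hm : 0 < m) (i : ℕ) :
    #((univ : Finset (Fin n)).filter fun b : Fin n => (b : ℕ) / m = i) ≤ m := by
  have h := card_le_card_of_injOn
    (s := (univ : Finset (Fin n)).filter fun b : Fin n => (b : ℕ) / m = i)
    (t := range m) (fun b : Fin n => (b : ℕ) % m) (fun b _ => by simpa using Nat.mod_lt _ hm)
    (fun b hb b' hb' h => by
      simp only [coe_filter, mem_univ, true_and, Set.mem_ofPred_eq] at hb hb'
      rw [Fin.ext_iff, ← Nat.div_add_mod (b : ℕ) m, ← Nat.div_add_mod (b' : ℕ) m, hb, hb']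
      exact congrArg _ h)
  simpa using h

theorem cliqueCount_le_card_filter {n : ℕ} (G : SimpleGraph (Fin n)) :
    cliqueCount Gᶜ 3 ≤ #((univ : Finset (Fin n × Fin n × Fin n)).filter fun x =>
      (x.1 < x.2.1 ∧ x.2.1 < x.2.2) ∧
      ¬ G.Adj x.1 x.2.1 ∧ ¬ G.Adj x.1 x.2.2 ∧ ¬ G.Adj x.2.1 x.2.2) := by
  refine le_trans (le_trans (Set.ncard_le_ncard ?_ (finite_toSet _)) (Set.ncard_coe_finset _).le)
    (card_image_le (f := fun x : Fin n × Fin n × Fin n => ({x.1, x.2.1, x.2.2} : Finset (Fin n))))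
  rintro s ⟨hs, hc⟩
  set e := s.orderEmbOfFin hs
  have he : ∀ i, e i ∈ s := fun i => s.orderEmbOfFin_mem hs i
  have hadj : ∀ i j, i < j → ¬ G.Adj (e i) (e j) := fun i j hij =>
    ((SimpleGraph.compl_adj ..).1 (hc (he i) (he j) (e.strictMono hij).ne)).2
  refine mem_coe.2 (mem_image.2 ⟨(e 0, e 1, e 2), mem_filter.2 ⟨mem_univ _,
    ⟨e.strictMono (by decide), e.strictMono (by decide)⟩, hadj 0 1 (by decide),
    hadj 0 2 (by decide), hadj 1 2 (by decide)⟩, ?_⟩)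
  have hse : univ.image e = s := s.image_orderEmbOfFin_univ hs
  clear_value e
  ext x
  simp [← hse, Fin.exists_fin_succ, eq_comm (a := x)]

theorem card_triples_le {n m : ℕ} (hm : 0 < m) (T : Finset (Fin n × Fin n × Fin n))
    (hT : ∀ x ∈ T, x.1 < x.2.1 ∧ x.2.1 < x.2.2) :
    #T ≤ #(T.filter fun x => (x.1 : ℕ) / m < (x.2.1 : ℕ) / m ∧ (x.2.1 : ℕ) / m < (x.2.2 : ℕ) / m) +
      2 * (n * n * m) := by
  have h1 : #((univ : Finset (Fin n × Fin n × Fin n)).filter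
      fun x => (x.2.1 : ℕ) / m = (x.1 : ℕ) / m) ≤ n * n * m := by
    rw [card_filter, Fintype.sum_prod_type]
    simp only [Fintype.sum_prod_type]
    calc _ ≤ ∑ _a : Fin n, n * m := sum_le_sum fun a _ => by
          rw [sum_comm]
          simp only [← card_filter, sum_const, smul_eq_mul, card_univ, Fintype.card_fin]
          exact Nat.mul_le_mul_left _ (card_filter_div_eq_le hm _)
      _ = _ := by simp; ring
  have h2 : #((univ : Finset (Fin n × Fin n × Fin n)).filter
      fun x => (x.2.2 : ℕ) / m = (x.2.1 : ℕ) / m) ≤ n * n * m := by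
    rw [card_filter, Fintype.sum_prod_type]
    simp only [Fintype.sum_prod_type]
    calc _ ≤ ∑ _a : Fin n, ∑ _b : Fin n, m := sum_le_sum fun a _ => sum_le_sum fun b _ => by
          rw [← card_filter]
          exact card_filter_div_eq_le hm _
      _ = _ := by simp; ring
  have h3 : T ⊆ T.filter (fun x => (x.1 : ℕ) / m < (x.2.1 : ℕ) / m ∧
      (x.2.1 : ℕ) / m < (x.2.2 : ℕ) / m) ∪
      (((univ : Finset (Fin n × Fin n × Fin n)).filter
      fun x => (x.2.1 : ℕ) / m = (x.1 : ℕ) / m) ∪ ((univ : Finset (Fin n × Fin n × Fin n)).filter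
      fun x => (x.2.2 : ℕ) / m = (x.2.1 : ℕ) / m)) := by
    intro x hx
    have g1 : (x.1 : ℕ) / m ≤ (x.2.1 : ℕ) / m := Nat.div_le_div_right (hT x hx).1.le
    have g2 : (x.2.1 : ℕ) / m ≤ (x.2.2 : ℕ) / m := Nat.div_le_div_right (hT x hx).2.le
    simp only [mem_union, mem_filter, mem_univ, true_and, hx]
    omega
  have h4 := card_le_card h3
  have h5 := card_union_le (T.filter (fun x => (x.1 : ℕ) / m < (x.2.1 : ℕ) / m ∧
      (x.2.1 : ℕ) / m < (x.2.2 : ℕ) / m)) (((univ : Finset (Fin n × Fin n × Fin n)).filter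
      fun x => (x.2.1 : ℕ) / m = (x.1 : ℕ) / m) ∪ ((univ : Finset (Fin n × Fin n × Fin n)).filter
      fun x => (x.2.2 : ℕ) / m = (x.2.1 : ℕ) / m))
  have h6 := card_union_le ((univ : Finset (Fin n × Fin n × Fin n)).filter
      fun x => (x.2.1 : ℕ) / m = (x.1 : ℕ) / m) ((univ : Finset (Fin n × Fin n × Fin n)).filter
      fun x => (x.2.2 : ℕ) / m = (x.2.1 : ℕ) / m)
  omega

/-- Many triangles in the complement yield three consecutive sets spanning many of them. -/
theorem exists_consecutive_tri (ε : ℝ) (hε : 0 < ε) :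
    ∃ δ : ℝ, 0 < δ ∧ ∀ n : ℕ, 4 / ε ≤ n → ∀ G : SimpleGraph (Fin n),
      ε * (n : ℝ) ^ 3 ≤ cliqueCount Gᶜ 3 → ∃ A B C : Finset (Fin n),
      (∀ a ∈ A, ∀ b ∈ B, a < b) ∧ (∀ b ∈ B, ∀ c ∈ C, b < c) ∧
      δ * (n : ℝ) ^ 3 ≤ tri G A B C := by
  refine ⟨ε / 2 / (8 / ε + 1) ^ 3, by positivity, fun n hn G hG => ?_⟩
  have hn0 : (0 : ℝ) < n := (by positivity : 0 < 4 / ε).trans_le hn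
  have hx : 1 ≤ ε / 4 * n := by
    rw [div_le_iff₀ hε] at hn
    linarith
  obtain ⟨m, hm⟩ : ∃ m, m = ⌊ε / 4 * n⌋₊ := ⟨_, rfl⟩
  have hm1 : 1 ≤ m := hm ▸ Nat.one_le_floor_iff _ |>.2 hx
  have hm2 : (m : ℝ) ≤ ε / 4 * n := hm ▸ Nat.floor_le (by linarith)
  have hm3 : ε / 8 * n ≤ m := by
    have h1 : ε / 4 * n < m + 1 := hm ▸ Nat.lt_floor_add_one _
    have h2 : (1 : ℝ) ≤ m := by exact_mod_cast hm1
    linarith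
  have m0 : (0 : ℝ) < m := by exact_mod_cast hm1
  set T := (univ : Finset (Fin n × Fin n × Fin n)).filter fun x =>
      (x.1 < x.2.1 ∧ x.2.1 < x.2.2) ∧
      ¬ G.Adj x.1 x.2.1 ∧ ¬ G.Adj x.1 x.2.2 ∧ ¬ G.Adj x.2.1 x.2.2 with hT
  set S := T.filter fun x => (x.1 : ℕ) / m < (x.2.1 : ℕ) / m ∧ (x.2.1 : ℕ) / m < (x.2.2 : ℕ) / m
    with hS
  have hTS : (#T : ℝ) ≤ #S + 2 * (n * n * m) := by
    exact_mod_cast card_triples_le hm1 T fun x hx => (mem_filter.1 hx).2.1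
  have hTG : ε * (n : ℝ) ^ 3 ≤ #T :=
    hG.trans (by exact_mod_cast cliqueCount_le_card_filter G)
  have hSc : ε / 2 * (n : ℝ) ^ 3 ≤ #S := by
    have : (n : ℝ) * n * m ≤ n * n * (ε / 4 * n) := mul_le_mul_of_nonneg_left hm2 (by positivity)
    nlinarith
  set R := n / m + 1 with hR
  have hRK : (R : ℝ) ≤ 8 / ε + 1 := by
    have h1 : ((n / m : ℕ) : ℝ) ≤ n / m := Nat.cast_div_le
    have h2 : (n : ℝ) / m ≤ 8 / ε := by
      rw [div_le_div_iff₀ m0 hε]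
      linarith
    rw [hR]
    push_cast
    linarith
  have hmaps : ∀ x ∈ S, ((x.1 : ℕ) / m, (x.2.1 : ℕ) / m, (x.2.2 : ℕ) / m) ∈
      range R ×ˢ range R ×ˢ range R := by
    intro x _
    simp only [mem_product, mem_range, hR, Nat.lt_succ_iff]
    exact ⟨Nat.div_le_div_right x.1.2.le, Nat.div_le_div_right x.2.1.2.le,
      Nat.div_le_div_right x.2.2.2.le⟩
  obtain ⟨⟨i, j, k⟩, -, hF⟩ := exists_le_card_fiber_of_nsmul_le_card_of_maps_to
    (b := ε / 2 / (8 / ε + 1) ^ 3 * (n : ℝ) ^ 3) hmaps (by simp [hR]) (by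
      rw [nsmul_eq_mul]
      refine le_trans ?_ hSc
      simp only [card_product, card_range]
      push_cast
      calc (R * (R * R) : ℝ) * (ε / 2 / (8 / ε + 1) ^ 3 * n ^ 3)
          = R ^ 3 / (8 / ε + 1) ^ 3 * (ε / 2 * n ^ 3) := by ring
        _ ≤ 1 * (ε / 2 * n ^ 3) := by
          refine mul_le_mul_of_nonneg_right ?_ (by positivity)
          rw [div_le_one (by positivity)]
          exact pow_le_pow_left₀ (Nat.cast_nonneg _) hRK 3
        _ = _ := one_mul _)
  obtain ⟨x, hx⟩ : (S.filter fun x => ((x.1 : ℕ) / m, (x.2.1 : ℕ) / m, (x.2.2 : ℕ) / m) =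
      (i, j, k)).Nonempty :=
    card_pos.1 (by exact_mod_cast (by positivity : 0 < ε / 2 / (8 / ε + 1) ^ 3 *
      (n : ℝ) ^ 3).trans_le hF)
  simp only [mem_filter, hS, Prod.mk.injEq] at hx
  have hlt : ∀ {i j : ℕ}, i < j →
      ∀ a ∈ (univ : Finset (Fin n)).filter (fun b : Fin n => (b : ℕ) / m = i),
      ∀ b ∈ (univ : Finset (Fin n)).filter (fun b : Fin n => (b : ℕ) / m = j), a < b := by
    intro i j hij a ha b hb
    by_contra! hba
    have := Nat.div_le_div_right (c := m) (Fin.le_def.1 hba)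
    simp only [mem_filter, mem_univ, true_and] at ha hb
    omega
  refine ⟨_, _, _, hlt (i := i) (j := j) (by omega), hlt (i := j) (j := k) (by omega),
    hF.trans (card_filter_le_tri G _ _ _ _ fun x hx => ?_)⟩
  simp only [mem_filter, Prod.mk.injEq, hS, hT] at hx
  simp only [mem_filter, mem_univ, true_and]
  tauto

theorem holeFree_of_not_containsBlowup {n t : ℕ} {G : SimpleGraph (Fin n)}
    (h : ¬ ContainsBlowup Gᶜ 2 t) : HoleFree G t := by
  intro X Y hXY hX hY
  by_contra! hno
  obtain ⟨X', hX', cX⟩ := exists_subset_card_eq hX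
  obtain ⟨Y', hY', cY⟩ := exists_subset_card_eq hY
  have hadj : ∀ x ∈ X', ∀ y ∈ Y', Gᶜ.Adj x y := fun x hx y hy =>
    (SimpleGraph.compl_adj ..).2 ⟨(hXY x (hX' hx) y (hY' hy)).ne, hno x (hX' hx) y (hY' hy)⟩
  have hd : Disjoint X' Y' :=
    disjoint_left.2 fun x hx hy => (hadj x hx x hy).ne rfl
  refine h ⟨![X', Y'], ?_, ?_, ?_⟩
  · simp [Fin.forall_fin_two, cX, cY]
  · simp [Fin.forall_fin_two, hd, hd.symm]
  · simp only [Fin.forall_fin_two]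
    simp only [ne_eq, not_true_eq_false, false_implies, true_and, and_true, Matrix.cons_val_zero,
      Matrix.cons_val_one]
    exact ⟨fun _ => hadj, fun _ y hy x hx => (hadj x hx y hy).symm⟩

theorem tame_of_not_hasIndMonPath {n t L : ℕ} {G : SimpleGraph (Fin n)} {σ : ℝ}
    (h : ¬ HasIndMonPath G 5) (ht : 1 ≤ t) (hL : n ≤ 2 ^ L) (hole : HoleFree G t)
    (hσ : ((3 * L + 1) * t : ℝ) ≤ σ) : Tame G σ where
  noPath a b c d e hab hbc hcd hde h1 h2 h3 h4 n1 n2 n3 n4 n5 n6 := by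
    refine h ⟨![a, b, c, d, e], ?_, ?_⟩
    · refine Fin.strictMono_iff_lt_succ.2 fun i => ?_
      fin_cases i <;> assumption
    · intro i j
      fin_cases i <;> fin_cases j <;> simp [*, G.adj_comm]
  exists_holeFree := ⟨t, L, ht, fun X => (card_le_univ X).trans (by simpa using hL), hole, hσ⟩

end

theorem three_mul_log_mul_ceil_le {n : ℕ} (hn : 1 ≤ Real.log n) {c : ℝ} (hc : 0 < c) :
    (3 * (Nat.log 2 n + 1 : ℕ) + 1) * (⌈c * n / Real.log n⌉₊ : ℝ) ≤ 9 * c * n + 9 * Real.log n := by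
  have hn0 : n ≠ 0 := by
    rintro rfl
    norm_num at hn
  have hL : (Nat.log 2 n : ℝ) * Real.log 2 ≤ Real.log n := by
    rw [← Real.log_pow]
    exact Real.log_le_log (by positivity) (by exact_mod_cast Nat.pow_log_le_self 2 hn0)
  have h2 := Real.log_two_gt_d9
  have hL' : (3 * (Nat.log 2 n + 1 : ℕ) + 1 : ℝ) ≤ 9 * Real.log n := by
    push_cast
    nlinarith [(Nat.cast_nonneg (Nat.log 2 n) : (0 : ℝ) ≤ _)]
  have ht : (⌈c * n / Real.log n⌉₊ : ℝ) ≤ c * n / Real.log n + 1 :=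
    (Nat.ceil_lt_add_one (by positivity)).le
  calc _ ≤ 9 * Real.log n * (c * n / Real.log n + 1) :=
        mul_le_mul hL' ht (Nat.cast_nonneg _) (by linarith)
    _ = _ := by field_simp

theorem stmt_0 (ε : ℝ) (hε : 0 < ε) :
    ∃ c : ℝ, 0 < c ∧ ∃ n₀ : ℕ, ∀ n : ℕ, n₀ ≤ n →
      ∀ G : SimpleGraph (Fin n),
        ¬ HasIndMonPath G 5 →
        ε * (n : ℝ) ^ 3 ≤ (cliqueCount Gᶜ 3 : ℝ) →
        ContainsBlowup Gᶜ 2 ⌈c * (n : ℝ) / Real.log n⌉₊ := by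
  obtain ⟨δ, hδ, hd⟩ := exists_consecutive_tri ε hε
  obtain ⟨κ, hκ, hk⟩ := Tame.false_of_tri.{0} δ hδ
  have hlog : ∀ᶠ x : ℝ in Filter.atTop, Real.log x ≤ κ * δ / 18 * x := by
    filter_upwards [Real.isLittleO_log_id_atTop.bound (by positivity : 0 < κ * δ / 18),
      Filter.eventually_ge_atTop 0] with x hx hx0
    simpa [abs_of_nonneg hx0] using (le_abs_self _).trans hx
  have hev : ∀ᶠ n : ℕ in Filter.atTop, Real.log n ≤ κ * δ / 18 * n ∧ 1 ≤ Real.log n ∧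
      4 / ε ≤ (n : ℝ) :=
    tendsto_natCast_atTop_atTop.eventually (hlog.and
      ((Real.tendsto_log_atTop.eventually_ge_atTop 1).and (Filter.eventually_ge_atTop (4 / ε))))
  obtain ⟨n₀, h₀⟩ := Filter.eventually_atTop.1 hev
  refine ⟨κ * δ / 18, by positivity, n₀, fun n hn G hG hcl => ?_⟩
  obtain ⟨hl, h1, hn'⟩ := h₀ n hn
  by_contra hblow
  obtain ⟨A, B, C, hAB, hBC, ht⟩ := hd n hn' G hcl
  have n0 : (0 : ℝ) < n := (by positivity : 0 < 4 / ε).trans_le hn'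
  have hT : Tame G _ := tame_of_not_hasIndMonPath hG
    (Nat.one_le_ceil_iff.2 (div_pos (by positivity) (by linarith)))
    (Nat.lt_pow_succ_log_self one_lt_two n).le (holeFree_of_not_containsBlowup hblow)
    (three_mul_log_mul_ceil_le h1 (by positivity))
  have le : ∀ X : Finset (Fin n), (X.card : ℝ) ≤ n := fun X => by
    exact_mod_cast (Finset.card_le_univ X).trans_eq (Fintype.card_fin n)
  have hABC := ht.trans (tri_le_card G A B C)
  have n2 : (0 : ℝ) < n * n := by positivity
  have big : ∀ X Y Z : Finset (Fin n), (A.card * B.card * C.card : ℝ) = X.card * (Y.card * Z.card) →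
      δ * n ≤ X.card := by
    intro X Y Z h
    have : (X.card * (Y.card * Z.card) : ℝ) ≤ X.card * (n * n) := mul_le_mul_of_nonneg_left
      (mul_le_mul (le Y) (le Z) (Nat.cast_nonneg _) n0.le) (Nat.cast_nonneg _)
    refine le_of_mul_le_mul_right ?_ n2
    linarith
  have hσ : ∀ X : Finset (Fin n), δ * n ≤ X.card →
      9 * (κ * δ / 18) * n + 9 * Real.log n ≤ κ * X.card := fun X hX => by
    linarith [mul_le_mul_of_nonneg_left hX hκ.le]
  refine hk G _ A B C hT hAB hBC (le_trans (mul_le_mul_of_nonneg_left ?_ hδ.le) ht)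
    (hσ A (big A B C (by ring))) (hσ B (big B A C (by ring))) (hσ C (big C A B (by ring)))
  calc (A.card * B.card * C.card : ℝ) ≤ n * n * n := mul_le_mul
        (mul_le_mul (le A) (le B) (Nat.cast_nonneg _) n0.le) (le C) (Nat.cast_nonneg _) n2.le
    _ = _ := by ring
end

section
/- For every ε > 0 there exists c > 0 such that the following holds for all sufficiently large n. Let G be an ordered graph on n vertices containing no induced monotone path P_7. If the complement Ḡ of G contains at least ε·n⁵ copies of K_5, then Ḡ contains the complete bipartite graph K_2[t] with t = ⌈c·n/log n⌉. -/
/-- The proportion of elements of a finite type satisfying a predicate. -/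
noncomputable def dens {α : Type*} [Fintype α] (p : α → Prop) : ℝ :=
  (Nat.card {x // p x} : ℝ) / Fintype.card α

section dens

variable {α β : Type*} [Fintype α] [Fintype β]

open Classical in
theorem dens_eq_sum (p : α → Prop) :
    dens p = (∑ x, if p x then (1 : ℝ) else 0) / Fintype.card α := by
  simp [dens, Fintype.card_subtype]

theorem dens_nonneg (p : α → Prop) : 0 ≤ dens p := by unfold dens; positivity

theorem dens_mono {p q : α → Prop} (h : ∀ x, p x → q x) : dens p ≤ dens q := by
  unfold dens
  gcongr
  exact Nat.card_le_card_of_injective (fun x : {x // p x} => (⟨x.1, h _ x.2⟩ : {x // q x}))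
    fun x y hxy => by simpa [Subtype.ext_iff] using hxy

theorem dens_le_one (p : α → Prop) : dens p ≤ 1 := by
  refine div_le_one_of_le₀ ?_ (by positivity)
  rw [← Nat.card_eq_fintype_card]
  exact_mod_cast Finite.card_subtype_le p

theorem exists_of_dens_pos {p : α → Prop} (h : 0 < dens p) : ∃ x, p x := by
  by_contra! hp
  have : IsEmpty {x // p x} := ⟨fun x => hp _ x.2⟩
  simp [dens] at h

theorem dens_equiv (e : α ≃ β) (p : β → Prop) : dens (fun x => p (e x)) = dens p := by
  unfold dens
  rw [Fintype.card_congr e, Nat.card_congr (e.subtypeEquiv fun _ => Iff.rfl)]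

theorem dens_prod (p : α → β → Prop) :
    dens (fun x : α × β => p x.1 x.2) = (∑ a, dens (p a)) / Fintype.card α := by
  classical
  simp only [dens_eq_sum, Fintype.sum_prod_type, Fintype.card_prod, Nat.cast_mul,
    ← Finset.sum_div]
  rw [div_div, mul_comm]

theorem dens_swap (p : α → β → Prop) :
    dens (fun x : β × α => p x.2 x.1) = dens (fun x : α × β => p x.1 x.2) :=
  dens_equiv (Equiv.prodComm β α) fun x : α × β => p x.1 x.2

theorem dens_prod_le {p : α → β → Prop} {δ : ℝ} (hδ : 0 ≤ δ) (h : ∀ a, dens (p a) ≤ δ) :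
    dens (fun x : α × β => p x.1 x.2) ≤ δ := by
  rw [dens_prod]
  refine div_le_of_le_mul₀ (by positivity) hδ ?_
  calc ∑ a, dens (p a) ≤ ∑ _a : α, δ := Finset.sum_le_sum fun a _ => h a
    _ = δ * Fintype.card α := by simp [mul_comm]

theorem exists_le_dens {p : α → β → Prop} {δ : ℝ} (hδ : 0 < δ)
    (h : δ ≤ dens (fun x : α × β => p x.1 x.2)) : ∃ a, δ ≤ dens (p a) := by
  by_contra! hp
  rw [dens_prod] at h
  rcases isEmpty_or_nonempty α with hα | hα
  · simp at h; linarith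
  · have : ∑ a, dens (p a) < ∑ _a : α, δ :=
      Finset.sum_lt_sum_of_nonempty Finset.univ_nonempty fun a _ => hp a
    rw [le_div_iff₀ (by positivity)] at h
    simp only [Finset.sum_const, Finset.card_univ, nsmul_eq_mul] at this
    linarith

/-- Products of densities: many `a`, each with many `b`. -/
theorem mul_le_dens {q : α → Prop} {p : α → β → Prop} {δ δ' : ℝ} (hδ' : 0 ≤ δ')
    (hq : δ ≤ dens q) (h : ∀ a, q a → δ' ≤ dens (p a)) :
    δ * δ' ≤ dens (fun x : α × β => q x.1 ∧ p x.1 x.2) := by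
  classical
  rw [dens_prod fun a b => q a ∧ p a b]
  rw [dens_eq_sum] at hq
  calc δ * δ' ≤ ((∑ x, if q x then (1 : ℝ) else 0) / Fintype.card α) * δ' := by gcongr
    _ = (∑ x, if q x then δ' else 0) / Fintype.card α := by
        rw [div_mul_eq_mul_div, Finset.sum_mul]; simp
    _ ≤ _ := by
        gcongr with a
        split_ifs with ha
        · simpa [ha] using h a ha
        · exact dens_nonneg _

theorem half_le_dens {p : α → β → Prop} {δ : ℝ}
    (h : δ ≤ dens (fun x : α × β => p x.1 x.2)) :
    δ / 2 ≤ dens (fun a => δ / 2 ≤ dens (p a)) := by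
  classical
  rcases isEmpty_or_nonempty α with hα | hα
  · simp [dens] at h ⊢; linarith
  rcases lt_or_ge δ 0 with h0 | h0
  · exact (by linarith : δ / 2 ≤ 0).trans (dens_nonneg _)
  rw [dens_prod, le_div_iff₀ (by positivity)] at h
  rw [dens_eq_sum, le_div_iff₀ (by positivity)]
  have key : ∑ a, dens (p a) ≤
      ∑ a, ((if δ / 2 ≤ dens (p a) then (1 : ℝ) else 0) + δ / 2) := by
    gcongr with a
    split_ifs with ha
    · linarith [dens_le_one (p a)]
    · linarith
  rw [Finset.sum_add_distrib] at key
  simp only [Finset.sum_const, Finset.card_univ, nsmul_eq_mul] at key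
  linarith

/-- Cauchy–Schwarz: doubling one coordinate of a dense relation. -/
theorem sq_le_dens {p : α → β → Prop} {δ : ℝ} (h0 : 0 ≤ δ)
    (h : δ ≤ dens (fun x : α × β => p x.1 x.2)) :
    δ ^ 2 ≤ dens (fun x : (α × α) × β => p x.1.1 x.2 ∧ p x.1.2 x.2) := by
  classical
  rw [← dens_swap fun (x : α × α) b => p x.1 b ∧ p x.2 b,
    dens_prod fun b (x : α × α) => p x.1 b ∧ p x.2 b]
  have key : ∀ b, dens (fun x : α × α => p x.1 b ∧ p x.2 b) = dens (fun a => p a b) ^ 2 := by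
    intro b
    simp only [dens_eq_sum, Fintype.sum_prod_type, Fintype.card_prod, Nat.cast_mul]
    rw [div_pow, sq, sq, Finset.sum_mul_sum]
    congr 1
    refine Finset.sum_congr rfl fun x _ => Finset.sum_congr rfl fun y _ => ?_
    by_cases h1 : p x b <;> by_cases h2 : p y b <;> simp [h1, h2]
  simp only [key]
  rw [← dens_swap, dens_prod fun b a => p a b] at h
  rcases isEmpty_or_nonempty β with hβ | hβ
  · simp at h ⊢; nlinarith
  calc δ ^ 2 ≤ ((∑ b, dens (fun a => p a b)) / Fintype.card β) ^ 2 := by gcongr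
    _ = (∑ b, dens (fun a => p a b)) ^ 2 / (Fintype.card β * Fintype.card β) := by
        rw [div_pow]; congr 1; ring
    _ ≤ (Fintype.card β * ∑ b, dens (fun a => p a b) ^ 2) / (Fintype.card β * Fintype.card β) := by
        gcongr
        simpa using sq_sum_le_card_mul_sum_sq (s := Finset.univ) (f := fun b => dens fun a => p a b)
    _ = _ := by field_simp

theorem dens_or_le (p q : α → Prop) : dens (fun x => p x ∨ q x) ≤ dens p + dens q := by
  classical
  simp only [dens_eq_sum]
  rw [← add_div, ← Finset.sum_add_distrib]
  gcongr with x
  by_cases h1 : p x <;> by_cases h2 : q x <;> simp [h1, h2]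

theorem dens_le_and_not_add (p q : α → Prop) :
    dens p ≤ dens (fun x => p x ∧ ¬ q x) + dens q :=
  (dens_mono fun x hx => by tauto).trans (dens_or_le _ q)

variable {ι : Type*} [Fintype ι] [DecidableEq ι]

theorem dens_update (i : ι) (p : (ι → α) → Prop) :
    dens (fun x : α × (ι → α) => p (Function.update x.2 i x.1)) = dens p := by
  have e : Function.Involutive
      (fun x : α × (ι → α) => ((x.2 i, Function.update x.2 i x.1) : α × (ι → α))) := by
    rintro ⟨a, r⟩; simp
  rcases isEmpty_or_nonempty α with hα | hα
  · have : IsEmpty (ι → α) := ⟨fun f => hα.elim (f i)⟩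
    simp [dens]
  have h1 := dens_equiv e.toPerm (fun x : α × (ι → α) => p x.2)
  have h2 := dens_prod (fun (_ : α) (r : ι → α) => p r)
  have h3 : (Fintype.card α : ℝ) ≠ 0 := by positivity
  simp only [Finset.sum_const, Finset.card_univ, nsmul_eq_mul] at h2
  rw [mul_div_cancel_left₀ _ h3] at h2
  rw [← h2, ← h1]
  rfl

theorem dens_apply_le {p : (ι → α) → Prop} {q : α → Prop} (i : ι) (h : ∀ x, p x → q (x i)) :
    dens p ≤ dens q := by
  rw [← dens_update i p]
  refine (dens_swap fun a r => p (Function.update r i a)).symm.trans_le ?_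
  refine dens_prod_le (p := fun r a => p (Function.update r i a)) (dens_nonneg _)
    fun r => dens_mono fun a ha => ?_
  simpa using h _ ha

theorem half_le_dens_update {p : (ι → α) → Prop} {δ : ℝ} (i : ι) (h : δ ≤ dens p) :
    δ / 2 ≤ dens (fun a => δ / 2 ≤ dens (fun r => p (Function.update r i a))) := by
  rw [← dens_update i] at h
  exact half_le_dens h

end dens

theorem ContainsBlowup.mono {V : Type*} [Fintype V] {G : SimpleGraph V} {r s t : ℕ} (hst : s ≤ t)
    (h : ContainsBlowup G r t) : ContainsBlowup G r s := by
  obtain ⟨A, hc, hd, hA⟩ := h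
  choose B hBA hB using fun i => Finset.exists_subset_card_eq (hst.trans_eq (hc i).symm)
  exact ⟨B, hB, fun i j hij => (hd i j hij).mono (hBA i) (hBA j),
    fun i j hij x hx y hy => hA i j hij x (hBA i hx) y (hBA j hy)⟩

/-- Finite graphs on an initial segment of `ℕ`, with its natural order. -/
abbrev OrdGraph := Σ n : ℕ, SimpleGraph (Fin n)

/-- Properties of all sufficiently large ordered graphs which have no induced monotone path on
seven vertices and no biclique of size `c * n / log n` in the complement, for some `c > 0`. -/
def sparseFilter : Filter OrdGraph where
  sets := {s | ∃ c : ℝ, 0 < c ∧ ∃ n₀ : ℕ, ∀ n : ℕ, n₀ ≤ n → ∀ G : SimpleGraph (Fin n),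
    ¬ HasIndMonPath G 7 → ¬ ContainsBlowup Gᶜ 2 ⌈c * (n : ℝ) / Real.log n⌉₊ →
    (⟨n, G⟩ : OrdGraph) ∈ s}
  univ_sets := ⟨1, one_pos, 0, by simp⟩
  sets_of_superset := by
    rintro x y ⟨c, hc, n₀, h⟩ hxy
    exact ⟨c, hc, n₀, fun n hn G h1 h2 => hxy (h n hn G h1 h2)⟩
  inter_sets := by
    rintro x y ⟨c, hc, n₀, h⟩ ⟨c', hc', n₀', h'⟩
    refine ⟨min c c', lt_min hc hc', max n₀ n₀', fun n hn G h1 h2 => ⟨?_, ?_⟩⟩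
    · refine h n (le_of_max_le_left hn) G h1 fun hb => h2 (hb.mono ?_)
      have := Real.log_natCast_nonneg n
      gcongr
      exact min_le_left _ _
    · refine h' n (le_of_max_le_right hn) G h1 fun hb => h2 (hb.mono ?_)
      have := Real.log_natCast_nonneg n
      gcongr
      exact min_le_right _ _

theorem eventually_not_hasIndMonPath : ∀ᶠ g in sparseFilter, ¬ HasIndMonPath g.2 7 :=
  ⟨1, one_pos, 0, fun _ _ _ h _ => h⟩

theorem exists_adj_of_not_containsBlowup {V : Type*} {G : SimpleGraph V} {t : ℕ}
    (h : ¬ ContainsBlowup Gᶜ 2 t) {A B : Finset V} (hAB : Disjoint A B) (hA : t ≤ A.card)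
    (hB : t ≤ B.card) : ∃ a ∈ A, ∃ b ∈ B, G.Adj a b := by
  by_contra! hadj
  obtain ⟨A', hA', hA't⟩ := Finset.exists_subset_card_eq hA
  obtain ⟨B', hB', hB't⟩ := Finset.exists_subset_card_eq hB
  have hd : Disjoint A' B' := hAB.mono hA' hB'
  have hn : ∀ a ∈ A', ∀ b ∈ B', Gᶜ.Adj a b := fun a ha b hb =>
    (SimpleGraph.compl_adj _ _ _).2 ⟨fun hab => Finset.disjoint_left.1 hd ha (hab ▸ hb),
      hadj a (hA' ha) b (hB' hb)⟩
  refine h ⟨![A', B'], ?_, ?_, ?_⟩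
  · simp [Fin.forall_fin_two, hA't, hB't]
  · simp [Fin.forall_fin_two, hd, hd.symm]
  · simp only [Fin.forall_fin_two]
    exact ⟨⟨by simp, by simpa using hn⟩, by simpa using fun b hb a ha => (hn a ha b hb).symm,
      by simp⟩

theorem eventually_exists_adj {ζ : ℝ} (hζ : 0 < ζ) : ∀ᶠ g in sparseFilter, ∃ t : ℕ, 1 ≤ t ∧
    ((3 * t * (Nat.clog 2 g.1 + 2) : ℕ) : ℝ) ≤ ζ * g.1 ∧
    ∀ A B : Finset (Fin g.1), Disjoint A B → t ≤ A.card → t ≤ B.card →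
      ∃ a ∈ A, ∃ b ∈ B, g.2.Adj a b := by
  have h1 : ∀ᶠ n : ℕ in Filter.atTop, Real.log n ≤ ζ / 30 * n := by
    have := (Real.isLittleO_log_id_atTop.comp_tendsto tendsto_natCast_atTop_atTop).bound
      (show 0 < ζ / 30 by positivity)
    filter_upwards [this] with n hn
    simpa [abs_of_nonneg (Real.log_natCast_nonneg n)] using hn
  have h2 : ∀ᶠ n : ℕ in Filter.atTop, 1 ≤ Real.log n :=
    (Real.tendsto_log_atTop.comp tendsto_natCast_atTop_atTop).eventually_ge_atTop 1
  obtain ⟨n₀, hn₀⟩ := Filter.eventually_atTop.1 (h1.and (h2.and (Filter.eventually_ge_atTop 2)))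
  refine ⟨ζ / 30, by positivity, n₀, fun n hn G _ hG => ?_⟩
  obtain ⟨hn1, hn2, hn3⟩ := hn₀ n hn
  have hn0 : (0 : ℝ) < n := by positivity
  refine ⟨_, ?_, ?_, fun A B => exists_adj_of_not_containsBlowup hG⟩
  · rw [Nat.one_le_ceil_iff]; positivity
  have ht : (⌈ζ / 30 * n / Real.log n⌉₊ : ℝ) ≤ ζ / 30 * n / Real.log n + 1 :=
    (Nat.ceil_lt_add_one (by positivity)).le
  have hc : (Nat.clog 2 n : ℝ) ≤ 2 * Real.log n + 1 := by
    have h3 : 2 ^ (Nat.clog 2 n - 1) < n := Nat.pow_pred_clog_lt_self (by norm_num) (by omega)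
    have h4 : ((Nat.clog 2 n - 1 : ℕ) : ℝ) * Real.log 2 ≤ Real.log n := by
      rw [← Real.log_pow]
      exact Real.log_le_log (by positivity) (by exact_mod_cast h3.le)
    have h5 : (Nat.clog 2 n : ℝ) ≤ ((Nat.clog 2 n - 1 : ℕ) : ℝ) + 1 := by
      norm_cast; omega
    nlinarith [Real.log_two_gt_d9, Nat.cast_nonneg (α := ℝ) (Nat.clog 2 n - 1)]
  push_cast
  calc (3 * (⌈ζ / 30 * n / Real.log n⌉₊ : ℝ) * (Nat.clog 2 n + 2))
      ≤ 3 * (ζ / 30 * n / Real.log n + 1) * (2 * Real.log n + 1 + 2) := by gcongr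
    _ ≤ 3 * (ζ / 30 * n / Real.log n + 1) * (5 * Real.log n) := by gcongr; linarith
    _ = 15 * (ζ / 30 * n) + 15 * Real.log n := by field_simp; norm_num
    _ ≤ ζ * n := by linarith

theorem dens_mul_card {α : Type*} [Fintype α] (p : α → Prop) [DecidablePred p] :
    dens p * Fintype.card α = ((Finset.univ.filter p).card : ℝ) := by
  rcases isEmpty_or_nonempty α with h | h
  · simp
  · rw [dens, div_mul_cancel₀ _ (by positivity)]
    simp [Fintype.card_subtype]

theorem eventually_exists_adj_of_dens {δ : ℝ} (hδ : 0 < δ) : ∀ᶠ g in sparseFilter,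
    ∀ p q : Fin g.1 → Prop, (∀ x, p x → ¬ q x) → δ ≤ dens p → δ ≤ dens q →
      ∃ a b, p a ∧ q b ∧ g.2.Adj a b := by
  classical
  filter_upwards [eventually_exists_adj hδ] with g ⟨t, ht1, ht, hg⟩ p q hpq hp hq
  have key : ∀ p : Fin g.1 → Prop, δ ≤ dens p → t ≤ (Finset.univ.filter p).card := by
    intro p hp
    rw [← Nat.cast_le (α := ℝ), ← dens_mul_card]
    calc (t : ℝ) ≤ ((3 * t * (Nat.clog 2 g.1 + 2) : ℕ) : ℝ) := by
          norm_cast; nlinarith [Nat.zero_le (Nat.clog 2 g.1)]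
      _ ≤ δ * g.1 := ht
      _ ≤ _ := by simp only [Fintype.card_fin]; gcongr
  obtain ⟨a, ha, b, hb, hab⟩ := hg (Finset.univ.filter p) (Finset.univ.filter q)
    (Finset.disjoint_left.2 fun x hx hx' => hpq x (by simpa using hx) (by simpa using hx'))
    (key p hp) (key q hq)
  exact ⟨a, b, by simpa using ha, by simpa using hb, hab⟩

/-- A list which is, read from right to left, an induced monotone path. -/
def IsRevIndMonPath {V : Type*} [LT V] (G : SimpleGraph V) : List V → Prop
  | [] => True
  | [_] => True
  | x :: y :: l => y < x ∧ G.Adj y x ∧ (∀ z ∈ l, ¬ G.Adj z x) ∧ IsRevIndMonPath G (y :: l)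

theorem IsRevIndMonPath.hasIndMonPath {n : ℕ} {G : SimpleGraph (Fin n)} {l : List (Fin n)}
    (hl : l.length = 7) (h : IsRevIndMonPath G l) : HasIndMonPath G 7 := by
  obtain ⟨a, b, c, d, e, f, g, rfl⟩ : ∃ a b c d e f g, l = [a, b, c, d, e, f, g] := by
    match l, hl with
    | [a, b, c, d, e, f, g], _ => exact ⟨a, b, c, d, e, f, g, rfl⟩
  simp only [IsRevIndMonPath, List.mem_cons, List.not_mem_nil, or_false, forall_eq_or_imp,
    forall_eq, and_true, false_imp_iff, implies_true] at h
  refine ⟨![g, f, e, d, c, b, a], ?_, ?_⟩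
  · rw [Fin.strictMono_iff_lt_succ]
    intro i
    fin_cases i <;> simp <;> tauto
  · intro i j
    fin_cases i <;> fin_cases j <;> simp <;> tauto

section Reach

variable {V : Type*} [LinearOrder V] {G : SimpleGraph V}

/-- Reachability by monotone paths all of whose vertices after the first lie in `Λ`. -/
def MonReach (G : SimpleGraph V) (Λ : Finset V) : V → V → Prop :=
  Relation.ReflTransGen fun u w => u < w ∧ G.Adj u w ∧ w ∈ Λ

theorem MonReach.le {Λ : Finset V} {u w : V} (h : MonReach G Λ u w) : u ≤ w := by
  induction h with
  | refl => exact le_rfl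
  | tail _ h ih => exact ih.trans h.1.le

theorem exists_card_split {A : Finset V} {m : ℕ} (hm : m ≤ A.card) :
    ∃ B ⊆ A, ∃ C ⊆ A, B.card = m ∧ C.card = A.card - m ∧ ∀ b ∈ B, ∀ c ∈ C, b < c := by
  induction m with
  | zero => exact ⟨∅, by simp, A, subset_rfl, by simp⟩
  | succ m ih =>
    obtain ⟨B, hB, C, hC, hBm, hCm, hBC⟩ := ih (by omega)
    have hne : C.Nonempty := by rw [← Finset.card_pos]; omega
    have hmin := C.min'_mem hne
    refine ⟨insert (C.min' hne) B, Finset.insert_subset (hC hmin) hB, C.erase (C.min' hne),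
      (Finset.erase_subset _ _).trans hC, ?_, ?_, ?_⟩
    · rw [Finset.card_insert_of_notMem fun h => (hBC _ h _ hmin).false, hBm]
    · rw [Finset.card_erase_of_mem hmin]; omega
    · intro b hb c hc
      rw [Finset.mem_erase] at hc
      rcases Finset.mem_insert.1 hb with rfl | hb
      · exact lt_of_le_of_ne (C.min'_le _ hc.2) hc.1.symm
      · exact hBC b hb c hc.2

open Classical in
theorem MonReach.exists_neighbor {Λ : Finset V} {v w : V} (h : MonReach G Λ v w) :
    w = v ∨ ∃ v', v < v' ∧ G.Adj v v' ∧ v' ∈ Λ ∧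
      MonReach G (Λ.filter fun x => ¬ G.Adj v x) v' w := by
  induction h with
  | refl => exact .inl rfl
  | @tail b c hb hc ih =>
    right
    by_cases hvc : G.Adj v c
    · exact ⟨c, (MonReach.le hb).trans_lt hc.1, hvc, hc.2.2, .refl⟩
    rcases ih with rfl | ⟨v', h1, h2, h3, h4⟩
    · exact (hvc hc.2.1).elim
    · exact ⟨v', h1, h2, h3, h4.tail ⟨hc.1, hc.2.1, by simp [hc.2.2, hvc]⟩⟩

variable {t : ℕ}

open Classical in
theorem card_not_reach_lt {Λ U B C : Finset V}
    (hE : ∀ A B : Finset V, Disjoint A B → t ≤ A.card → t ≤ B.card →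
      ∃ a ∈ A, ∃ b ∈ B, G.Adj a b)
    (hB : t ≤ (B.filter fun b => ∃ u ∈ U, MonReach G Λ u b).card)
    (hBC : ∀ b ∈ B, ∀ c ∈ C, b < c) (hC : C ⊆ Λ) :
    (C.filter fun c => ¬ ∃ u ∈ U, MonReach G Λ u c).card < t := by
  by_contra! h
  obtain ⟨b, hb, c, hc, hbc⟩ := hE _ _ (Finset.disjoint_left.2 fun x hx hx' =>
    (hBC x (Finset.filter_subset _ _ hx) x (Finset.filter_subset _ _ hx')).false) hB h
  rw [Finset.mem_filter] at hb hc
  obtain ⟨u, hu, hub⟩ := hb.2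
  exact hc.2 u hu (hub.tail ⟨hBC b hb.1 c hc.1, hbc, hC hc.1⟩)

open Classical in
theorem exists_reach_most
    (hE : ∀ A B : Finset V, Disjoint A B → t ≤ A.card → t ≤ B.card →
      ∃ a ∈ A, ∃ b ∈ B, G.Adj a b)
    (ht : 1 ≤ t) {Λ : Finset V} (k : ℕ) {U B A : Finset V}
    (hU : U.card ≤ 2 ^ k) (hB : t ≤ (B.filter fun b => ∃ u ∈ U, MonReach G Λ u b).card)
    (hBA : ∀ b ∈ B, ∀ a ∈ A, b < a) (hA : A ⊆ Λ) (hAk : 3 * t * k ≤ A.card) :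
    ∃ u ∈ U, ∀ T ⊆ Λ, (∀ b ∈ B, ∀ x ∈ T, b < x) → (∀ a ∈ A, ∀ x ∈ T, a < x) →
      (T.filter fun c => ¬ MonReach G Λ u c).card < t := by
  induction k generalizing U B A with
  | zero =>
    obtain ⟨b, hb⟩ := Finset.card_pos.1 (ht.trans hB)
    obtain ⟨-, u, hu, -⟩ := Finset.mem_filter.1 hb
    have hUu : U = {u} := Finset.eq_singleton_iff_unique_mem.2
      ⟨hu, fun x hx => Finset.card_le_one.1 (by simpa using hU) x hx u hu⟩
    refine ⟨u, hu, fun T hT hBT _ => ?_⟩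
    simpa [hUu] using card_not_reach_lt hE hB hBT hT
  | succ k ih =>
    obtain ⟨A₁, hA₁, A₂, hA₂, hc₁, hc₂, hlt⟩ := exists_card_split (A := A) (m := 3 * t)
      (by nlinarith)
    have h1 := card_not_reach_lt hE hB (fun b hb c hc => hBA b hb c (hA₁ hc)) (hA₁.trans hA)
    have h2 := Finset.card_filter_add_card_filter_not (s := A₁) fun c => ∃ u ∈ U, MonReach G Λ u c
    obtain ⟨U₁, hU₁, hd₁⟩ := Finset.exists_subset_card_eq (min_le_left U.card (2 ^ k))
    have hd₂ := Finset.card_sdiff_of_subset hU₁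
    have hUU : U ⊆ U₁ ∪ U \ U₁ := (Finset.union_sdiff_of_subset hU₁).ge
    have h3 : (A₁.filter fun c => ∃ u ∈ U, MonReach G Λ u c).card ≤
        (A₁.filter fun c => ∃ u ∈ U₁, MonReach G Λ u c).card +
        (A₁.filter fun c => ∃ u ∈ U \ U₁, MonReach G Λ u c).card := by
      refine (Finset.card_le_card fun x hx => ?_).trans (Finset.card_union_le _ _)
      simp only [Finset.mem_union, Finset.mem_filter] at hx ⊢
      obtain ⟨hx, u, hu, hux⟩ := hx
      rcases Finset.mem_union.1 (hUU hu) with hu | hu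
      · exact .inl ⟨hx, u, hu, hux⟩
      · exact .inr ⟨hx, u, hu, hux⟩
    have key : ∀ U' ⊆ U, U'.card ≤ 2 ^ k →
        t ≤ (A₁.filter fun c => ∃ u ∈ U', MonReach G Λ u c).card →
        ∃ u ∈ U, ∀ T ⊆ Λ, (∀ b ∈ B, ∀ x ∈ T, b < x) → (∀ a ∈ A, ∀ x ∈ T, a < x) →
        (T.filter fun c => ¬ MonReach G Λ u c).card < t := by
      intro U' hU' hk hr
      obtain ⟨u, hu, h⟩ := ih hk hr hlt (hA₂.trans hA)
        (by rw [hc₂, Nat.le_sub_iff_add_le] <;> nlinarith)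
      exact ⟨u, hU' hu, fun T hT _ hAT => h T hT (fun b hb => hAT b (hA₁ hb))
        fun a ha => hAT a (hA₂ ha)⟩
    rw [pow_succ] at hU
    by_cases h4 : t ≤ (A₁.filter fun c => ∃ u ∈ U₁, MonReach G Λ u c).card
    · exact key U₁ hU₁ (by omega) h4
    · exact key (U \ U₁) Finset.sdiff_subset (by omega) (by omega)

open Classical in
theorem exists_mem_reach_most
    (hE : ∀ A B : Finset V, Disjoint A B → t ≤ A.card → t ≤ B.card →
      ∃ a ∈ A, ∃ b ∈ B, G.Adj a b)
    (ht : 1 ≤ t) {Λ U A T : Finset V} {k : ℕ} (hUk : U.card ≤ 2 ^ k)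
    (hU : t ≤ U.card) (hUA : ∀ b ∈ U, ∀ a ∈ A, b < a) (hA : A ⊆ Λ) (hAk : 3 * t * k ≤ A.card)
    (hT : T ⊆ Λ) (hUT : ∀ b ∈ U, ∀ x ∈ T, b < x) (hAT : ∀ a ∈ A, ∀ x ∈ T, a < x) :
    ∃ u ∈ U, (T.filter fun c => ¬ MonReach G Λ u c).card < t := by
  obtain ⟨u, hu, h⟩ := exists_reach_most hE ht k hUk (B := U) (hU.trans (Finset.card_le_card
    fun x hx => Finset.mem_filter.2 ⟨hx, x, hx, .refl⟩)) hUA hA hAk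
  exact ⟨u, hu, h T hT hUT hAT⟩

open Classical in
/-- If every vertex of a large set has few later neighbours in it, then there is a long induced
monotone path. -/
theorem exists_isRevIndMonPath [Fintype V]
    (hE : ∀ A B : Finset V, Disjoint A B → t ≤ A.card → t ≤ B.card →
      ∃ a ∈ A, ∃ b ∈ B, G.Adj a b)
    (ht : 1 ≤ t) {Y : Finset V} {d k M : ℕ}
    (hV : Fintype.card V ≤ 2 ^ k)
    (hd : ∀ v ∈ Y, (Y.filter fun w => v < w ∧ G.Adj v w).card ≤ d)
    (hM : d + 2 * t + 3 * t * k ≤ M) (r j : ℕ) (hY : (r + j + 1) * M ≤ Y.card) :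
    ∃ (v : V) (l : List V) (Λ T : Finset V), l.length = j ∧ IsRevIndMonPath G (v :: l) ∧ v ∈ Y ∧
      Λ ⊆ Y ∧ (∀ x ∈ Λ, ∀ z ∈ l, ¬ G.Adj z x) ∧ T ⊆ Λ ∧ (∀ x ∈ T, v < x) ∧
      (T.filter fun c => ¬ MonReach G Λ v c).card < t ∧ r * M ≤ T.card := by
  have hV' : ∀ U : Finset V, U.card ≤ 2 ^ k := fun U => (Finset.card_le_univ U).trans hV
  induction j generalizing r with
  | zero =>
    obtain ⟨U, hU, S, hS, hUt, hSc, hUS⟩ := exists_card_split (A := Y) (m := t) (by nlinarith)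
    obtain ⟨A, hA, T, hT, hAc, hTc, hAT⟩ := exists_card_split (A := S) (m := 3 * t * k)
      (by rw [hSc, Nat.le_sub_iff_add_le] <;> nlinarith)
    obtain ⟨u, hu, h⟩ := exists_mem_reach_most hE ht (hV' U) hUt.ge
      (fun b hb a ha => hUS b hb a (hA ha)) (hA.trans hS) hAc.ge (hT.trans hS)
      (fun b hb a ha => hUS b hb a (hT ha)) hAT
    refine ⟨u, [], Y, T, rfl, trivial, hU hu, subset_rfl, by simp, hT.trans hS,
      fun x hx => hUS u hu x (hT hx), h, ?_⟩
    rw [hTc, hSc]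
    rw [add_zero, add_mul, one_mul] at hY
    omega
  | succ j ih =>
    obtain ⟨v, l, Λ, T, hl, hp, hv, hΛ, hΛl, hTΛ, hvT, hvr, hT⟩ := ih (r + 1) (by
      rwa [show r + 1 + j + 1 = r + (j + 1) + 1 by ring])
    have hTd : (T.filter fun w => G.Adj v w).card ≤ d := by
      refine (Finset.card_le_card fun x hx => ?_).trans (hd v hv)
      rw [Finset.mem_filter] at hx ⊢
      exact ⟨hΛ (hTΛ hx.1), hvT x hx.1, hx.2⟩
    have hT0 := Finset.card_filter_add_card_filter_not (s := T) fun w => G.Adj v w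
    set T₀ := T.filter fun w => ¬ G.Adj v w with hT₀
    have hT₀T : T₀ ⊆ T := Finset.filter_subset _ _
    rw [add_mul, one_mul] at hT
    obtain ⟨T₁, hT₁, S, hS, hT₁c, hSc, hTS⟩ := exists_card_split (A := T₀) (m := 2 * t) (by omega)
    obtain ⟨A, hA, T₃, hT₃, hAc, hTc, hAT⟩ := exists_card_split (A := S) (m := 3 * t * k)
      (by omega)
    set Λ' := Λ.filter fun x => ¬ G.Adj v x with hΛ'
    have hSΛ' : S ⊆ Λ' := fun x hx => by
      have := Finset.mem_filter.1 (hS hx)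
      exact Finset.mem_filter.2 ⟨hTΛ this.1, this.2⟩
    have hU := Finset.card_filter_add_card_filter_not (s := T₁) fun c => MonReach G Λ v c
    have hU' : (T₁.filter fun c => ¬ MonReach G Λ v c).card < t :=
      (Finset.card_le_card (Finset.filter_subset_filter _ (hT₁.trans hT₀T))).trans_lt hvr
    obtain ⟨w, hw, hwr⟩ := exists_mem_reach_most hE ht (Λ := Λ')
      (U := T₁.filter fun c => MonReach G Λ v c) (A := A) (T := T₃) (hV' _) (by omega)
      (fun b hb a ha => hTS b (Finset.filter_subset _ _ hb) a (hA ha)) (hA.trans hSΛ') hAc.ge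
      (hT₃.trans hSΛ') (fun b hb a ha => hTS b (Finset.filter_subset _ _ hb) a (hT₃ ha)) hAT
    rw [Finset.mem_filter] at hw
    rcases hw.2.exists_neighbor with rfl | ⟨v', hvv', hadj, hv'Λ, hv'w⟩
    · exact ((hvT _ (hT₀T (hT₁ hw.1))).false).elim
    refine ⟨v', v :: l, Λ', T₃, by simp [hl], ⟨hvv', hadj, hΛl v' hv'Λ, hp⟩, hΛ hv'Λ,
      (Finset.filter_subset _ _).trans hΛ, ?_, hT₃.trans hSΛ',
      fun x hx => hv'w.le.trans_lt (hTS w hw.1 x (hT₃ hx)), ?_, by omega⟩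
    · intro x hx z hz
      rw [Finset.mem_filter] at hx
      rcases List.mem_cons.1 hz with rfl | hz
      · exact hx.2
      · exact hΛl x hx.1 z hz
    · refine (Finset.card_le_card fun x hx => ?_).trans_lt hwr
      rw [Finset.mem_filter] at hx ⊢
      exact ⟨hx.1, fun h => hx.2 (hv'w.trans h)⟩

end Reach

open Classical in
/-- Dense vertex sets span many edges. -/
theorem exists_eventually_le_dens_adj {ε : ℝ} (hε : 0 < ε) : ∃ ψ > 0, ∀ᶠ g in sparseFilter,
    ∀ Y : Fin g.1 → Prop, ε ≤ dens Y →
      ψ ≤ dens fun x : Fin g.1 × Fin g.1 => Y x.1 ∧ Y x.2 ∧ x.1 < x.2 ∧ g.2.Adj x.1 x.2 := by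
  have hκ : 0 < ε / 28 := by positivity
  refine ⟨ε / 28 * (ε / 2), by positivity, ?_⟩
  filter_upwards [eventually_exists_adj hκ, eventually_not_hasIndMonPath]
    with g ⟨t, ht1, ht, hE⟩ hP Y hY
  by_contra! hlt
  set p : Fin g.1 → Fin g.1 → Prop := fun a b => Y a ∧ Y b ∧ a < b ∧ g.2.Adj a b with hp
  have hq : dens (fun a => ε / 28 ≤ dens (p a)) ≤ ε / 2 := by
    have h := mul_le_dens (q := fun a => ε / 28 ≤ dens (p a)) (p := p) hκ.le le_rfl fun a ha => ha
    have h' : dens (fun x : Fin g.1 × Fin g.1 => ε / 28 ≤ dens (p x.1) ∧ p x.1 x.2) ≤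
      dens (fun x : Fin g.1 × Fin g.1 => p x.1 x.2) := dens_mono fun x hx => hx.2
    have h'' := (h.trans h').trans hlt.le
    rw [mul_comm (ε / 28)] at h''
    exact le_of_mul_le_mul_right h'' hκ
  have hZ := dens_le_and_not_add Y fun a => ε / 28 ≤ dens (p a)
  set Z := Finset.univ.filter fun a => Y a ∧ ¬ ε / 28 ≤ dens (p a) with hZdef
  have hZc : ε / 2 * g.1 ≤ Z.card := by
    rw [hZdef, ← dens_mul_card, Fintype.card_fin]
    gcongr
    linarith
  obtain ⟨v, l, Λ, T, hl, hpath, -⟩ := exists_isRevIndMonPath hE ht1 (Y := Z) (k := Nat.clog 2 g.1)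
    (d := ⌊ε / 28 * g.1⌋₊) (by simpa using Nat.le_pow_clog (by norm_num) _) (by
      intro v hv
      rw [hZdef, Finset.mem_filter] at hv
      refine Nat.le_floor ?_
      calc _ ≤ ((Finset.univ.filter (p v)).card : ℝ) := by
            refine Nat.cast_le.2 (Finset.card_le_card fun x hx => ?_)
            rw [Finset.mem_filter, hZdef, Finset.mem_filter] at hx
            simpa [hp] using ⟨hv.2.1, hx.1.2.1, hx.2⟩
        _ ≤ _ := by
            rw [← dens_mul_card, Fintype.card_fin]
            gcongr
            exact (not_le.1 hv.2.2).le) le_rfl 0 6 (by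
      have := Nat.floor_le (show 0 ≤ ε / 28 * g.1 by positivity)
      rw [← Nat.cast_le (α := ℝ)]
      push_cast at ht ⊢
      linarith)
  exact hP (hpath.hasIndMonPath (by simp [hl]))

theorem le_dens_of_forall {α : Type*} [Fintype α] {p q : α → Prop} {δ : ℝ} (h : δ ≤ dens p)
    (hpq : ∀ x, p x → q x) : δ ≤ dens q :=
  h.trans (dens_mono hpq)

theorem sub_le_dens {α : Type*} [Fintype α] {p : α → Prop} (q : α → Prop) {δ θ : ℝ}
    (hp : δ ≤ dens p) (hq : dens q ≤ θ) : δ - θ ≤ dens fun x => p x ∧ ¬ q x := by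
  linarith [dens_le_and_not_add p q]

theorem dens_le_of_sq {α β : Type*} [Fintype α] [Fintype β] {p : α → β → Prop} {θ : ℝ}
    (hθ : 0 < θ) (h : dens (fun x : α × β => p x.1 x.2) ≤ θ ^ 2) :
    dens (fun a => θ ≤ dens (p a)) ≤ θ := by
  have h1 := mul_le_dens (q := fun a => θ ≤ dens (p a)) (p := p) hθ.le le_rfl fun a ha => ha
  have h2 : dens (fun x : α × β => θ ≤ dens (p x.1) ∧ p x.1 x.2) ≤
      dens (fun x : α × β => p x.1 x.2) := dens_mono fun x hx => hx.2
  nlinarith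

theorem dens_update_update {α ι : Type*} [Fintype α] [Fintype ι] [DecidableEq ι] (i j : ι)
    (p : (ι → α) → Prop) :
    dens (fun x : (α × (ι → α)) × α =>
      p (Function.update (Function.update x.1.2 i x.1.1) j x.2)) = dens p := by
  rw [← dens_update j p]
  refine (dens_swap fun (a : α) (x : α × (ι → α)) =>
    p (Function.update (Function.update x.2 i x.1) j a)).trans ?_
  rw [dens_prod fun (a : α) (x : α × (ι → α)) =>
    p (Function.update (Function.update x.2 i x.1) j a),
    dens_prod fun (a : α) (r : ι → α) => p (Function.update r j a)]
  congr 1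
  exact Finset.sum_congr rfl fun a _ => dens_update i fun r => p (Function.update r j a)

section Zones

variable {V : Type*}

/-- The transversal `x` of the family `X` is an independent set of `G`. -/
def IsIndepTransversal (G : SimpleGraph V) (X : Fin 5 → V → Prop) (x : Fin 5 → V) : Prop :=
  (∀ i, X i (x i)) ∧ ∀ i j, ¬ G.Adj (x i) (x j)

/-- The sets of the family `X` follow one another. -/
def ZonesOrdered [LT V] (X : Fin 5 → V → Prop) : Prop :=
  ∀ i j, i < j → ∀ x y, X i x → X j y → x < y

theorem ZonesOrdered.mono [LT V] {X X' : Fin 5 → V → Prop} (h : ZonesOrdered X)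
    (hX : ∀ k y, X' k y → X k y) : ZonesOrdered X' :=
  fun i j hij x y hx hy => h i j hij x y (hX i x hx) (hX j y hy)

variable [Fintype V]

/-- The density of the edges between two vertex sets. -/
noncomputable def edgeDens (G : SimpleGraph V) (A B : V → Prop) : ℝ :=
  dens fun x : V × V => A x.1 ∧ B x.2 ∧ G.Adj x.1 x.2

theorem edgeDens_mono (G : SimpleGraph V) {A B A' B' : V → Prop} (hA : ∀ x, A' x → A x)
    (hB : ∀ x, B' x → B x) : edgeDens G A' B' ≤ edgeDens G A B :=
  dens_mono fun _ hx => ⟨hA _ hx.1, hB _ hx.2.1, hx.2.2⟩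

variable {G : SimpleGraph V} {X : Fin 5 → V → Prop} {ε : ℝ}

theorem le_dens_zone (h : ε ≤ dens (IsIndepTransversal G X)) (k : Fin 5) : ε ≤ dens (X k) :=
  h.trans (dens_apply_le k fun _ hx => hx.1 k)

theorem half_le_dens_zone (hε : 0 < ε) (h : ε ≤ dens (IsIndepTransversal G X)) (i : Fin 5) :
    ε / 2 ≤ dens fun b => X i b ∧ ∀ k, k ≠ i → ε / 2 ≤ dens fun y => X k y ∧ ¬ G.Adj b y := by
  refine le_dens_of_forall (half_le_dens_update i h) fun b hb => ?_
  obtain ⟨r, hr⟩ := exists_of_dens_pos ((half_pos hε).trans_le hb)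
  refine ⟨by simpa using hr.1 i, fun k hk => hb.trans (dens_apply_le k fun r hr => ?_)⟩
  have h1 := hr.1 k
  have h2 := hr.2 i k
  simp only [Function.update_self, Function.update_of_ne hk] at h1 h2
  exact ⟨h1, h2⟩

end Zones

theorem exists_eventually_initial {ε : ℝ} (hε : 0 < ε) : ∃ ε' > 0, ∀ᶠ g in sparseFilter,
    ∀ (i : Fin 5) (X : Fin 5 → Fin g.1 → Prop), ε ≤ dens (IsIndepTransversal g.2 X) →
      ∃ (a : Fin g.1) (X' : Fin 5 → Fin g.1 → Prop), (∀ k y, X' k y → X k y) ∧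
        (∀ y, X' i y → a < y ∧ g.2.Adj a y) ∧ (∀ k, k ≠ i → ∀ y, X' k y → ¬ g.2.Adj a y) ∧
        ε' ≤ dens (IsIndepTransversal g.2 X') := by
  obtain ⟨ψ, hψ, hD⟩ := exists_eventually_le_dens_adj (half_pos hε)
  refine ⟨ε / 2 * ψ, by positivity, ?_⟩
  filter_upwards [hD] with g hD i X hX
  let K : (Fin 5 → Fin g.1) → Fin g.1 → Prop := fun r a =>
    IsIndepTransversal g.2 X (Function.update r i a)
  have hK : ε ≤ dens fun x : (Fin 5 → Fin g.1) × Fin g.1 => K x.1 x.2 := by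
    rwa [← dens_swap K, dens_update i (IsIndepTransversal g.2 X)]
  let P : (Fin 5 → Fin g.1) → Fin g.1 × Fin g.1 → Prop := fun r x =>
    K r x.1 ∧ K r x.2 ∧ x.1 < x.2 ∧ g.2.Adj x.1 x.2
  have h1 := mul_le_dens (p := P) hψ.le (half_le_dens hK) fun r hr => hD (K r) hr
  let e : Fin g.1 × (Fin g.1 × (Fin 5 → Fin g.1)) ≃ (Fin 5 → Fin g.1) × (Fin g.1 × Fin g.1) :=
    ⟨fun x => (x.2.2, (x.1, x.2.1)), fun y => (y.2.1, (y.2.2, y.1)), fun _ => rfl, fun _ => rfl⟩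
  rw [← dens_equiv e] at h1
  obtain ⟨a, ha⟩ := exists_le_dens (p := fun a (x : Fin g.1 × (Fin 5 → Fin g.1)) =>
    ε / 2 ≤ dens (K x.2) ∧ P x.2 (a, x.1)) (by positivity) h1
  refine ⟨a, fun k y => X k y ∧ (k = i → a < y ∧ g.2.Adj a y) ∧ (k ≠ i → ¬ g.2.Adj a y),
    fun k y h => h.1, fun y h => h.2.1 rfl, fun k hk y h => h.2.2 hk, ?_⟩
  rw [← dens_update i]
  refine le_dens_of_forall ha ?_
  rintro ⟨a', r⟩ ⟨-, ha1, ha2, hlt, hadj⟩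
  dsimp only [K] at ha1 ha2 hlt hadj
  refine ⟨fun k => ?_, ha2.2⟩
  rcases eq_or_ne k i with rfl | hk
  · have := ha2.1 k
    simp only [Function.update_self] at this ⊢
    exact ⟨this, fun _ => ⟨hlt, hadj⟩, fun h => (h rfl).elim⟩
  · have h1 := ha2.1 k
    have h2 := ha1.2 i k
    simp only [Function.update_self, Function.update_of_ne hk] at h1 h2 ⊢
    exact ⟨h1, fun h => (hk h).elim, fun _ => h2⟩

/-- In every ordered dense family of zones, one of the pairs in `S` spans many edges. -/
def SomePairDense (S : Finset (Fin 5 × Fin 5)) : Prop :=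
  ∀ ε : ℝ, 0 < ε → ∃ η > 0, ∀ᶠ g in sparseFilter, ∀ X : Fin 5 → Fin g.1 → Prop,
    ZonesOrdered X → ε ≤ dens (IsIndepTransversal g.2 X) →
      ∃ p ∈ S, η < edgeDens g.2 (X p.1) (X p.2)

theorem SomePairDense.exists_transition {S : Finset (Fin 5 × Fin 5)} {i j : Fin 5}
    (h : SomePairDense (insert (i, j) S)) (hij : i ≠ j) {ε : ℝ} (hε : 0 < ε) :
    ∃ ε' > 0, ∃ η > 0, ∀ᶠ g in sparseFilter, ∀ X : Fin 5 → Fin g.1 → Prop,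
      ZonesOrdered X → ε ≤ dens (IsIndepTransversal g.2 X) →
      (∀ p ∈ S, edgeDens g.2 (X p.1) (X p.2) ≤ η) →
      ∃ (b a : Fin g.1) (X' : Fin 5 → Fin g.1 → Prop), X i b ∧ X j a ∧ g.2.Adj b a ∧
        (∀ k y, X' k y → X k y) ∧ (∀ y, X' j y → a < y ∧ g.2.Adj a y ∧ ¬ g.2.Adj b y) ∧
        (∀ k, k ≠ i → k ≠ j → ∀ y, X' k y → ¬ g.2.Adj a y ∧ ¬ g.2.Adj b y) ∧
        ε' ≤ dens (IsIndepTransversal g.2 X') := by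
  obtain ⟨ψ, hψ, hD⟩ := exists_eventually_le_dens_adj (show 0 < (ε ^ 2) ^ 2 / 2 by positivity)
  set σ := (ε ^ 2) ^ 2 / 2 * ψ / 2 with hσ
  have hσ0 : 0 < σ := by positivity
  obtain ⟨η, hη, hη'⟩ := h σ hσ0
  refine ⟨σ * η, by positivity, η, hη, ?_⟩
  filter_upwards [hD, hη'] with g hD hη' X hXo hX hXS
  clear_value σ
  let V := Fin g.1
  let R := Fin 5 → V
  have ui : ∀ (r : R) (c a : V), Function.update (Function.update r i c) j a i = c := by simp [hij]
  have uj : ∀ (r : R) (c a : V), Function.update (Function.update r i c) j a j = a := by simp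
  have uk : ∀ k, k ≠ i → k ≠ j → ∀ (r : R) (c a : V),
      Function.update (Function.update r i c) j a k = r k := fun k hi hj => by simp [hi, hj]
  let K : V → R → V → Prop := fun c r a =>
    IsIndepTransversal g.2 X (Function.update (Function.update r i c) j a)
  have hK : ε ≤ dens fun x : V × (R × V) => K x.1 x.2.1 x.2.2 := by
    rw [← dens_update_update i j] at hX
    rwa [← dens_equiv (Equiv.prodAssoc V R V) fun x : V × (R × V) => K x.1 x.2.1 x.2.2]
  have h1 := sq_le_dens hε.le (p := fun c (x : R × V) => K c x.1 x.2) hK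
  let e₁ : R × ((V × V) × V) ≃ (V × V) × (R × V) :=
    ⟨fun x => (x.2.1, (x.1, x.2.2)), fun y => (y.2.1, (y.1, y.2.2)), fun _ => rfl, fun _ => rfl⟩
  rw [← dens_equiv e₁] at h1
  have h2 := sq_le_dens (by positivity) (p := fun r (x : (V × V) × V) =>
    K x.1.1 r x.2 ∧ K x.1.2 r x.2) h1
  let e₂ : ((R × R) × (V × V)) × V ≃ (R × R) × ((V × V) × V) := Equiv.prodAssoc _ _ _
  rw [← dens_equiv e₂] at h2
  let P : (R × R) × (V × V) → V → Prop := fun w a =>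
    (K w.2.1 w.1.1 a ∧ K w.2.2 w.1.1 a) ∧ (K w.2.1 w.1.2 a ∧ K w.2.2 w.1.2 a)
  have h3 := half_le_dens (p := P) h2
  have h4 := mul_le_dens (p := fun w (x : V × V) => P w x.1 ∧ P w x.2 ∧ x.1 < x.2 ∧ g.2.Adj x.1 x.2)
    hψ.le h3 fun w hw => hD (P w) hw
  let e₃ : ((V × R) × V) × ((V × R) × V) ≃ ((R × R) × (V × V)) × (V × V) :=
    ⟨fun x => (((x.1.1.2, x.2.1.2), (x.1.1.1, x.2.1.1)), (x.2.2, x.1.2)),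
      fun y => (((y.1.2.1, y.1.1.1), y.2.2), ((y.1.2.2, y.1.1.2), y.2.1)),
      fun _ => rfl, fun _ => rfl⟩
  rw [← dens_equiv e₃] at h4
  let F : (V × R) × V → (V × R) × V → Prop := fun x y =>
    P ((x.1.2, y.1.2), (x.1.1, y.1.1)) y.2 ∧ P ((x.1.2, y.1.2), (x.1.1, y.1.1)) x.2 ∧
      y.2 < x.2 ∧ g.2.Adj y.2 x.2
  have h5 : σ ≤ dens fun x => σ ≤ dens (F x) := by
    rw [hσ]
    exact half_le_dens (p := F) (le_dens_of_forall h4 fun x hx => hx.2)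
  let A : (V × R) × V → V → Prop := fun x b =>
    X i b ∧ ¬ g.2.Adj b x.2 ∧ ∀ k, k ≠ i → k ≠ j → ¬ g.2.Adj b (x.1.2 k)
  let B : (V × R) × V → V → Prop := fun x a =>
    X j a ∧ a < x.2 ∧ g.2.Adj a x.2 ∧ ∀ k, k ≠ i → k ≠ j → ¬ g.2.Adj a (x.1.2 k)
  have h6 : ∀ x, σ ≤ dens (F x) → η ≤ edgeDens g.2 (A x) (B x) := by
    intro x hx
    let Z : Fin 5 → V → Prop := Function.update (Function.update X i (A x)) j (B x)
    have hZi : Z i = A x := by simp [Z, hij]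
    have hZj : Z j = B x := by simp [Z]
    have hZk : ∀ k, k ≠ i → k ≠ j → Z k = X k := fun k hi hj => by simp [Z, hi, hj]
    have hZX : ∀ k y, Z k y → X k y := by
      intro k y hy
      rcases eq_or_ne k i with rfl | hki
      · rw [hZi] at hy; exact hy.1
      rcases eq_or_ne k j with rfl | hkj
      · rw [hZj] at hy; exact hy.1
      · rwa [hZk k hki hkj] at hy
    have hZd : σ ≤ dens (IsIndepTransversal g.2 Z) := by
      rw [← dens_update_update i j]
      refine le_dens_of_forall hx ?_
      rintro y ⟨⟨hy1, hy2⟩, hy3, hlt, hadj⟩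
      refine ⟨fun k => ?_, hy2.2.2⟩
      have hZk' := hy2.2.1 k
      by_cases hki : k = i
      · subst hki
        have h1 := hy3.1.2.2 k j
        rw [ui, uj] at h1
        rw [ui] at hZk' ⊢
        rw [hZi]
        refine ⟨hZk', h1, fun l hl hl' => ?_⟩
        have h2 := hy3.1.2.2 k l
        rwa [ui, uk l hl hl'] at h2
      by_cases hkj : k = j
      · subst hkj
        rw [uj] at hZk' ⊢
        rw [hZj]
        refine ⟨hZk', hlt, hadj, fun l hl hl' => ?_⟩
        have h2 := hy1.1.2 k l
        rwa [uj, uk l hl hl'] at h2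
      · rwa [hZk k hki hkj]
    obtain ⟨p, hp, hpη⟩ := hη' Z (hXo.mono hZX) hZd
    rcases Finset.mem_insert.1 hp with rfl | hp
    · rw [← hZi, ← hZj]; exact hpη.le
    · exact absurd ((edgeDens_mono g.2 (hZX _) (hZX _)).trans (hXS p hp)) (not_le.2 hpη)
  have h7 := mul_le_dens (p := fun x (y : V × V) => A x y.1 ∧ B x y.2 ∧ g.2.Adj y.1 y.2) hη.le h5 h6
  rw [← dens_swap fun x (y : V × V) => σ ≤ dens (F x) ∧ A x y.1 ∧ B x y.2 ∧ g.2.Adj y.1 y.2] at h7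
  obtain ⟨⟨b, a⟩, hba⟩ := exists_le_dens (p := fun (y : V × V) x =>
    σ ≤ dens (F x) ∧ A x y.1 ∧ B x y.2 ∧ g.2.Adj y.1 y.2) (by positivity) h7
  obtain ⟨x₀, -, hA₀, hB₀, hadj₀⟩ := exists_of_dens_pos ((by positivity : 0 < σ * η).trans_le hba)
  refine ⟨b, a, fun k y => X k y ∧ (k = j → a < y ∧ g.2.Adj a y ∧ ¬ g.2.Adj b y) ∧
    (k ≠ i → k ≠ j → ¬ g.2.Adj a y ∧ ¬ g.2.Adj b y), hA₀.1, hB₀.1, hadj₀, fun k y h => h.1,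
    fun y h => h.2.1 rfl, fun k hki hkj y h => h.2.2 hki hkj, ?_⟩
  rw [← dens_update_update i j]
  refine le_dens_of_forall hba ?_
  rintro ⟨⟨c, r⟩, a'⟩ ⟨hx, hA, hB, hadj⟩
  obtain ⟨y, -, hy, -⟩ := exists_of_dens_pos (hσ0.trans_le hx)
  have hH := hy.1.1
  refine ⟨fun k => ?_, hH.2⟩
  have hHk := hH.1 k
  by_cases hki : k = i
  · exact ⟨hHk, fun h => (hij (hki.symm.trans h)).elim, fun h => (h hki).elim⟩
  by_cases hkj : k = j
  · subst hkj
    rw [uj] at hHk ⊢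
    exact ⟨hHk, fun _ => ⟨hB.2.1, hB.2.2.1, hA.2.1⟩, fun _ h => (h rfl).elim⟩
  · rw [uk k hki hkj] at hHk ⊢
    exact ⟨hHk, fun h => (hkj h).elim, fun _ _ => ⟨hB.2.2.2 k hki hkj, hA.2.2 k hki hkj⟩⟩

/-- If the sets `Y₃`, `Y₄` have few edges between them and to the left of `Y₃`, then a final
segment of an induced monotone path may start in any dense set of suitable vertices `B`. -/
theorem exists_final_segment {δ : ℝ} (hδ : 0 < δ) : ∃ η > 0, ∀ᶠ g in sparseFilter,
    ∀ B Y₃ Y₄ : Fin g.1 → Prop, (∀ x y, B x → Y₃ y → x < y) → (∀ x y, Y₃ x → Y₄ y → x < y) →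
      δ ≤ dens B → (∀ b, B b → δ ≤ dens fun y => Y₄ y ∧ ¬ g.2.Adj b y) → δ ≤ dens Y₃ →
      edgeDens g.2 B Y₃ ≤ η → edgeDens g.2 Y₃ Y₄ ≤ η →
      ∃ b a b' a', B b ∧ Y₃ a ∧ Y₃ b' ∧ Y₄ a' ∧ IsRevIndMonPath g.2 [a', b', a, b] := by
  obtain ⟨ψ, hψ, hD⟩ := exists_eventually_le_dens_adj hδ
  set θ := min ψ δ / 8 with hθ
  have hθ0 : 0 < θ := by positivity
  have hθψ : 8 * θ ≤ ψ := by rw [hθ]; linarith [min_le_left ψ δ]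
  have hθδ : 8 * θ ≤ δ := by rw [hθ]; linarith [min_le_right ψ δ]
  refine ⟨θ ^ 2, by positivity, ?_⟩
  filter_upwards [hD, eventually_exists_adj_of_dens hθ0]
    with g hD hL B Y₃ Y₄ hB3 h34 hB hB4 hY₃ hη₃ hη₄
  have h1 := half_le_dens (p := fun a b => Y₃ a ∧ Y₃ b ∧ a < b ∧ g.2.Adj a b) (hD Y₃ hY₃)
  have h2 := sub_le_dens _ h1
    (dens_le_of_sq (p := fun a y => Y₃ a ∧ Y₄ y ∧ g.2.Adj a y) hθ0 hη₄)
  have h3 := sub_le_dens _ hB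
    (dens_le_of_sq (p := fun b y => B b ∧ Y₃ y ∧ g.2.Adj b y) hθ0 hη₃)
  have hY₃pos : ∀ a, ψ / 2 ≤ dens (fun b => Y₃ a ∧ Y₃ b ∧ a < b ∧ g.2.Adj a b) → Y₃ a := by
    intro a ha
    obtain ⟨b, hb⟩ := exists_of_dens_pos ((half_pos hψ).trans_le ha)
    exact hb.1
  obtain ⟨b, a, ⟨hb, hbd⟩, ⟨ha, had⟩, hba⟩ := hL _ _
    (fun x hx hx' => (hB3 x x hx.1 (hY₃pos x hx'.1)).false)
    ((by linarith : θ ≤ δ - θ).trans h3) ((by linarith : θ ≤ ψ / 2 - θ).trans h2)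
  have ha3 := hY₃pos a ha
  have h4 := sub_le_dens _ ha (not_le.1 hbd).le
  have h5 := sub_le_dens _ (hB4 b hb) (not_le.1 had).le
  obtain ⟨b', a', ⟨⟨-, hb'3, hlt, hab'⟩, hbb'⟩, ⟨⟨ha'4, hba'⟩, haa'⟩, hb'a'⟩ := hL _ _
    (fun x hx hx' => (h34 x x hx.1.2.1 hx'.1.1).false)
    ((by linarith : θ ≤ ψ / 2 - θ).trans h4) ((by linarith : θ ≤ δ - θ).trans h5)
  refine ⟨b, a, b', a', hb, ha3, hb'3, ha'4, h34 _ _ hb'3 ha'4, hb'a', ?_, hlt, hab', ?_,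
    hB3 _ _ hb ha3, hba, by simp, trivial⟩
  · simp only [List.forall_mem_cons, List.not_mem_nil, false_imp_iff, implies_true, and_true]
    exact ⟨fun h => haa' ⟨ha3, ha'4, h⟩, hba'⟩
  · simp only [List.forall_mem_cons, List.not_mem_nil, false_imp_iff, implies_true, and_true]
    exact fun h => hbb' ⟨hb, hb'3, h⟩

section Transitions

variable {S : Finset (Fin 5 × Fin 5)} {z₁ z₂ z₃ z₄ : Fin 5}

theorem somePairDense_of_two_transitions (h12 : z₁ < z₂) (h23 : z₂ < z₃) (h34 : z₃ < z₄)
    (hS₁ : SomePairDense (insert (z₁, z₂) S)) (hS₂ : SomePairDense (insert (z₂, z₃) S)) :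
    SomePairDense S := by
  intro ε hε
  obtain ⟨ε₁, hε₁, h₁⟩ := exists_eventually_initial hε
  obtain ⟨ε₂, hε₂, η₂, hη₂, h₂⟩ := hS₁.exists_transition h12.ne hε₁
  obtain ⟨ε₃, hε₃, η₃, hη₃, h₃⟩ := hS₂.exists_transition h23.ne hε₂
  refine ⟨min η₂ η₃, lt_min hη₂ hη₃, ?_⟩
  filter_upwards [h₁, h₂, h₃, eventually_exists_adj_of_dens hε₃, eventually_not_hasIndMonPath]
    with g h₁ h₂ h₃ h₄ hP X hXo hX
  by_contra! hS
  obtain ⟨a₁, X₁, hX₁, hX₁z, hX₁k, hX₁d⟩ := h₁ z₁ X hX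
  obtain ⟨b₁, a₂, X₂, hb₁, ha₂, hba₁, hX₂, hX₂z, hX₂k, hX₂d⟩ := h₂ X₁ (hXo.mono hX₁) hX₁d
    fun p hp => ((edgeDens_mono _ (hX₁ _) (hX₁ _)).trans (hS p hp)).trans (min_le_left _ _)
  have hX₂o := (hXo.mono hX₁).mono hX₂
  obtain ⟨b₂, a₃, X₃, hb₂, ha₃, hba₂, hX₃, hX₃z, hX₃k, hX₃d⟩ := h₃ X₂ hX₂o hX₂d
    fun p hp => ((edgeDens_mono _ (fun x h => hX₁ _ x (hX₂ _ x h))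
      (fun x h => hX₁ _ x (hX₂ _ x h))).trans (hS p hp)).trans (min_le_right _ _)
  have hX₃o := hX₂o.mono hX₃
  obtain ⟨b₃, a₄, hb₃, ha₄, hba₃⟩ := h₄ (X₃ z₃) (X₃ z₄)
    (fun x hx hx' => (hX₃o z₃ z₄ h34 x x hx hx').false)
    (le_dens_zone hX₃d z₃) (le_dens_zone hX₃d z₄)
  have hb₃2 := hX₃ _ _ hb₃
  have ha₄2 := hX₃ _ _ ha₄
  have h13 := h12.trans h23
  have h24 := h23.trans h34
  have h14 := h12.trans h24
  refine hP (IsRevIndMonPath.hasIndMonPath (l := [a₄, b₃, a₃, b₂, a₂, b₁, a₁]) rfl ?_)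
  simp only [IsRevIndMonPath, List.mem_cons, List.not_mem_nil, or_false, forall_eq_or_imp,
    forall_eq, and_true, false_imp_iff, implies_true]
  refine ⟨hX₃o _ _ h34 _ _ hb₃ ha₄, hba₃, ⟨?_, ?_, ?_, ?_, ?_⟩, (hX₃z _ hb₃).1, (hX₃z _ hb₃).2.1,
    ⟨?_, ?_, ?_, ?_⟩, hX₂o _ _ h23 _ _ hb₂ ha₃, hba₂, ⟨?_, ?_, ?_⟩, (hX₂z _ hb₂).1,
    (hX₂z _ hb₂).2.1, ⟨?_, ?_⟩, (hXo.mono hX₁) _ _ h12 _ _ hb₁ ha₂, hba₁, ?_,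
    (hX₁z _ hb₁).1, (hX₁z _ hb₁).2⟩
  · exact (hX₃k _ h24.ne' h34.ne' _ ha₄).1
  · exact (hX₃k _ h24.ne' h34.ne' _ ha₄).2
  · exact (hX₂k _ h14.ne' h24.ne' _ ha₄2).1
  · exact (hX₂k _ h14.ne' h24.ne' _ ha₄2).2
  · exact hX₁k _ h14.ne' _ (hX₂ _ _ ha₄2)
  · exact (hX₃z _ hb₃).2.2
  · exact (hX₂k _ h13.ne' h23.ne' _ hb₃2).1
  · exact (hX₂k _ h13.ne' h23.ne' _ hb₃2).2
  · exact hX₁k _ h13.ne' _ (hX₂ _ _ hb₃2)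
  · exact (hX₂k _ h13.ne' h23.ne' _ ha₃).1
  · exact (hX₂k _ h13.ne' h23.ne' _ ha₃).2
  · exact hX₁k _ h13.ne' _ (hX₂ _ _ ha₃)
  · exact (hX₂z _ hb₂).2.2
  · exact hX₁k _ h12.ne' _ (hX₂ _ _ hb₂)
  · exact hX₁k _ h12.ne' _ ha₂

theorem somePairDense_of_one_transition (h12 : z₁ < z₂) (h23 : z₂ < z₃) (h34 : z₃ < z₄)
    (hS₁ : SomePairDense (insert (z₁, z₂) S)) (h23S : (z₂, z₃) ∈ S) (h34S : (z₃, z₄) ∈ S) :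
    SomePairDense S := by
  intro ε hε
  obtain ⟨ε₁, hε₁, h₁⟩ := exists_eventually_initial hε
  obtain ⟨ε₂, hε₂, η₂, hη₂, h₂⟩ := hS₁.exists_transition h12.ne hε₁
  obtain ⟨η₃, hη₃, h₃⟩ := exists_final_segment (half_pos hε₂)
  refine ⟨min η₂ η₃, lt_min hη₂ hη₃, ?_⟩
  filter_upwards [h₁, h₂, h₃, eventually_not_hasIndMonPath] with g h₁ h₂ h₃ hP X hXo hX
  by_contra! hS
  obtain ⟨a₁, X₁, hX₁, hX₁z, hX₁k, hX₁d⟩ := h₁ z₁ X hX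
  obtain ⟨b₁, a₂, X₂, hb₁, ha₂, hba₁, hX₂, hX₂z, hX₂k, hX₂d⟩ := h₂ X₁ (hXo.mono hX₁) hX₁d
    fun p hp => ((edgeDens_mono _ (hX₁ _) (hX₁ _)).trans (hS p hp)).trans (min_le_left _ _)
  have hX₂X : ∀ k y, X₂ k y → X k y := fun k y h => hX₁ k y (hX₂ k y h)
  have hX₂o := hXo.mono hX₂X
  have h13 := h12.trans h23
  have h24 := h23.trans h34
  have h14 := h12.trans h24
  obtain ⟨b₂, a₃, b₃, a₄, ⟨hb₂, -⟩, ha₃, hb₃, ha₄, h⟩ := h₃ _ (X₂ z₃) (X₂ z₄)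
    (fun x y hx hy => hX₂o z₂ z₃ h23 x y hx.1 hy) (hX₂o z₃ z₄ h34)
    (half_le_dens_zone hε₂ hX₂d z₂) (fun b hb => hb.2 z₄ h24.ne')
    (by linarith [le_dens_zone hX₂d z₃])
    (((edgeDens_mono _ (fun x hx => hX₂X _ x hx.1) (hX₂X _)).trans (hS _ h23S)).trans
      (min_le_right _ _))
    (((edgeDens_mono _ (hX₂X _) (hX₂X _)).trans (hS _ h34S)).trans (min_le_right _ _))
  refine hP (IsRevIndMonPath.hasIndMonPath (l := [a₄, b₃, a₃, b₂, a₂, b₁, a₁]) rfl ?_)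
  simp only [IsRevIndMonPath, List.mem_cons, List.not_mem_nil, or_false, forall_eq_or_imp,
    forall_eq, and_true, false_imp_iff, implies_true] at h ⊢
  obtain ⟨p1, p2, ⟨p3, p4⟩, p5, p6, p7, p8, p9⟩ := h
  refine ⟨p1, p2, ⟨p3, p4, ?_, ?_, ?_⟩, p5, p6, ⟨p7, ?_, ?_, ?_⟩, p8, p9, ⟨?_, ?_, ?_⟩,
    (hX₂z _ hb₂).1, (hX₂z _ hb₂).2.1, ⟨?_, ?_⟩, (hXo.mono hX₁) _ _ h12 _ _ hb₁ ha₂, hba₁, ?_,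
    (hX₁z _ hb₁).1, (hX₁z _ hb₁).2⟩
  · exact (hX₂k _ h14.ne' h24.ne' _ ha₄).1
  · exact (hX₂k _ h14.ne' h24.ne' _ ha₄).2
  · exact hX₁k _ h14.ne' _ (hX₂ _ _ ha₄)
  · exact (hX₂k _ h13.ne' h23.ne' _ hb₃).1
  · exact (hX₂k _ h13.ne' h23.ne' _ hb₃).2
  · exact hX₁k _ h13.ne' _ (hX₂ _ _ hb₃)
  · exact (hX₂k _ h13.ne' h23.ne' _ ha₃).1
  · exact (hX₂k _ h13.ne' h23.ne' _ ha₃).2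
  · exact hX₁k _ h13.ne' _ (hX₂ _ _ ha₃)
  · exact (hX₂z _ hb₂).2.2
  · exact hX₁k _ h12.ne' _ (hX₂ _ _ hb₂)
  · exact hX₁k _ h12.ne' _ ha₂

theorem somePairDense_of_no_transition (h12 : z₁ < z₂) (h23 : z₂ < z₃) (h34 : z₃ < z₄)
    (h12S : (z₁, z₂) ∈ S) (h23S : (z₂, z₃) ∈ S) (h24S : (z₂, z₄) ∈ S) (h34S : (z₃, z₄) ∈ S) :
    SomePairDense S := by
  intro ε hε
  obtain ⟨ε₁, hε₁, h₁⟩ := exists_eventually_initial hε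
  obtain ⟨ψ, hψ, hD⟩ := exists_eventually_le_dens_adj hε₁
  obtain ⟨θ, hθ0, hθψ, hθε⟩ : ∃ θ : ℝ, 0 < θ ∧ 16 * θ ≤ ψ ∧ 16 * θ ≤ ε₁ :=
    ⟨min ψ ε₁ / 16, by positivity, by linarith [min_le_left ψ ε₁], by linarith [min_le_right ψ ε₁]⟩
  obtain ⟨η, hη, h₂⟩ := exists_final_segment hθ0
  refine ⟨min η (θ ^ 2), lt_min hη (pow_pos hθ0 2), ?_⟩
  filter_upwards [h₁, hD, h₂, eventually_exists_adj_of_dens hθ0, eventually_not_hasIndMonPath]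
    with g h₁ hD h₂ hL hP X hXo hX
  by_contra! hS
  obtain ⟨a₁, Y, hY, hYz, hYk, hYd⟩ := h₁ z₁ X hX
  have hYo := hXo.mono hY
  have hSY : ∀ i j, (i, j) ∈ S → edgeDens g.2 (Y i) (Y j) ≤ min η (θ ^ 2) := fun i j hij =>
    (edgeDens_mono _ (hY i) (hY j)).trans (hS (i, j) hij)
  have hSη := fun i j hij => (hSY i j hij).trans (min_le_left _ _)
  have few : ∀ i j, (i, j) ∈ S →
      dens (fun a => θ ≤ dens fun y => Y i a ∧ Y j y ∧ g.2.Adj a y) ≤ θ := fun i j hij =>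
    dens_le_of_sq (p := fun a y => Y i a ∧ Y j y ∧ g.2.Adj a y) hθ0
      ((hSY i j hij).trans (min_le_right _ _))
  have h13 := h12.trans h23
  have h24 := h23.trans h34
  have h14 := h12.trans h24
  have hB := sub_le_dens _ (half_le_dens_zone hε₁ hYd z₁) (few _ _ h12S)
  have hA := sub_le_dens _ (sub_le_dens _ (half_le_dens (p := fun a b => Y z₂ a ∧ Y z₂ b ∧ a < b ∧
    g.2.Adj a b) (hD (Y z₂) (le_dens_zone hYd z₂))) (few _ _ h23S)) (few _ _ h24S)
  have hpos : ∀ a, ψ / 2 ≤ dens (fun b => Y z₂ a ∧ Y z₂ b ∧ a < b ∧ g.2.Adj a b) → Y z₂ a := by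
    intro a ha
    obtain ⟨b, hb⟩ := exists_of_dens_pos ((half_pos hψ).trans_le ha)
    exact hb.1
  obtain ⟨b₁, a₂, ⟨⟨hb₁, hb₁d⟩, hb₁2⟩, ⟨⟨ha₂d, ha₂3⟩, ha₂4⟩, hba₁⟩ := hL _ _
    (fun x hx hx' => (hYo z₁ z₂ h12 x x hx.1.1 (hpos x hx'.1.1)).false)
    ((by linarith : θ ≤ ε₁ / 2 - θ).trans hB) ((by linarith : θ ≤ ψ / 2 - θ - θ).trans hA)
  have ha₂ := hpos a₂ ha₂d
  let B : Fin g.1 → Prop := fun b => (Y z₂ b ∧ a₂ < b ∧ g.2.Adj a₂ b ∧ ¬ g.2.Adj b₁ b) ∧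
    ¬ θ ≤ dens fun y => Y z₂ b ∧ Y z₄ y ∧ g.2.Adj b y
  let Y' : Fin 5 → Fin g.1 → Prop := fun k y => Y k y ∧ ¬ g.2.Adj b₁ y ∧ ¬ g.2.Adj a₂ y
  have hB : θ ≤ dens B := by
    have h := sub_le_dens _ (sub_le_dens _ ha₂d (not_le.1 hb₁2).le) (few _ _ h24S)
    refine le_dens_of_forall ((by linarith : θ ≤ ψ / 2 - θ - θ).trans h) ?_
    rintro x ⟨⟨⟨-, h1, h2, h3⟩, h4⟩, h5⟩
    exact ⟨⟨h1, h2, h3, fun h => h4 ⟨hb₁, h1, h⟩⟩, h5⟩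
  have hY' : ∀ k, k ≠ z₁ → ¬ θ ≤ dens (fun y => Y z₂ a₂ ∧ Y k y ∧ g.2.Adj a₂ y) →
      ε₁ / 2 - θ ≤ dens (Y' k) := by
    intro k hk hka
    have h := sub_le_dens _ (hb₁d k hk) (not_le.1 hka).le
    refine le_dens_of_forall h ?_
    rintro x ⟨⟨h1, h2⟩, h3⟩
    exact ⟨h1, h2, fun h => h3 ⟨ha₂, h1, h⟩⟩
  have hBY : ∀ b, B b → θ ≤ dens fun y => Y' z₄ y ∧ ¬ g.2.Adj b y := by
    rintro b ⟨⟨hb, -⟩, hbd⟩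
    have h := sub_le_dens _ (hY' z₄ h14.ne' ha₂4) (not_le.1 hbd).le
    refine le_dens_of_forall ((by linarith : θ ≤ ε₁ / 2 - θ - θ).trans h) ?_
    rintro y ⟨h1, h2⟩
    exact ⟨h1, fun h => h2 ⟨hb, h1.1, h⟩⟩
  obtain ⟨b₂, a₃, b₃, a₄, ⟨⟨hb₂, hb₂lt, hb₂a, hb₂b⟩, -⟩, ⟨ha₃, ha₃b, ha₃a⟩, ⟨hb₃, hb₃b, hb₃a⟩,
      ⟨ha₄, ha₄b, ha₄a⟩, h⟩ := h₂ B (Y' z₃) (Y' z₄)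
    (fun x y hx hy => hYo z₂ z₃ h23 x y hx.1.1 hy.1)
    (fun x y hx hy => hYo z₃ z₄ h34 x y hx.1 hy.1) hB hBY
    ((by linarith : θ ≤ ε₁ / 2 - θ).trans (hY' z₃ h13.ne' ha₂3))
    ((edgeDens_mono _ (fun x hx => hx.1.1) (fun x hx => hx.1)).trans (hSη _ _ h23S))
    ((edgeDens_mono _ (fun x hx => hx.1) (fun x hx => hx.1)).trans (hSη _ _ h34S))
  refine hP (IsRevIndMonPath.hasIndMonPath (l := [a₄, b₃, a₃, b₂, a₂, b₁, a₁]) rfl ?_)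
  simp only [IsRevIndMonPath, List.mem_cons, List.not_mem_nil, or_false, forall_eq_or_imp,
    forall_eq, and_true, false_imp_iff, implies_true] at h ⊢
  obtain ⟨p1, p2, ⟨p3, p4⟩, p5, p6, p7, p8, p9⟩ := h
  refine ⟨p1, p2, ⟨p3, p4, ?_, ?_, ?_⟩, p5, p6, ⟨p7, ?_, ?_, ?_⟩, p8, p9, ⟨?_, ?_, ?_⟩,
    hb₂lt, hb₂a, ⟨?_, ?_⟩, hYo _ _ h12 _ _ hb₁ ha₂, hba₁, ?_, hYz _ hb₁⟩
  · exact ha₄a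
  · exact ha₄b
  · exact hYk _ h14.ne' _ ha₄
  · exact hb₃a
  · exact hb₃b
  · exact hYk _ h13.ne' _ hb₃
  · exact ha₃a
  · exact ha₃b
  · exact hYk _ h13.ne' _ ha₃
  · exact hb₂b
  · exact hYk _ h12.ne' _ hb₂
  · exact hYk _ h12.ne' _ ha₂

/-- The ordered graph with the order of its vertices reversed. -/
def OrdGraph.reverse (g : OrdGraph) : OrdGraph := ⟨g.1, g.2.comap Fin.rev⟩

theorem tendsto_reverse : Filter.Tendsto OrdGraph.reverse sparseFilter sparseFilter := by
  rintro s ⟨c, hc, n₀, h⟩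
  refine ⟨c, hc, n₀, fun n hn G hP hB => h n hn _ (fun ⟨v, hv, hvG⟩ => hP ?_)
    fun ⟨A, hA, hd, hAG⟩ => hB ?_⟩
  · refine ⟨fun i => (v i.rev).rev, fun i j hij => Fin.rev_lt_rev.2 (hv (Fin.rev_lt_rev.2 hij)), ?_⟩
    intro i j
    have h1 := hvG i.rev j.rev
    rw [SimpleGraph.comap_adj] at h1
    rw [h1, Fin.val_rev, Fin.val_rev]
    omega
  · refine ⟨fun i => (A i).map Fin.revPerm.toEmbedding, by simpa using hA,
      fun i j hij => (Finset.disjoint_map _).2 (hd i j hij), ?_⟩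
    intro i j hij x hx y hy
    obtain ⟨x, hx', rfl⟩ := Finset.mem_map.1 hx
    obtain ⟨y, hy', rfl⟩ := Finset.mem_map.1 hy
    simpa [SimpleGraph.compl_adj] using hAG i j hij x hx' y hy'

/-- The pairs of indices after reversing the order of the zones. -/
def reversePairs (S : Finset (Fin 5 × Fin 5)) : Finset (Fin 5 × Fin 5) :=
  S.image fun p => (p.2.rev, p.1.rev)

theorem reversePairs_reversePairs (S : Finset (Fin 5 × Fin 5)) :
    reversePairs (reversePairs S) = S := by
  simp [reversePairs, Finset.image_image, Function.comp_def]

theorem mem_reversePairs {i j : Fin 5} : (j.rev, i.rev) ∈ reversePairs S ↔ (i, j) ∈ S := by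
  simp [reversePairs]

theorem SomePairDense.reverse (h : SomePairDense S) : SomePairDense (reversePairs S) := by
  intro ε hε
  obtain ⟨η, hη, hη'⟩ := h ε hε
  refine ⟨η, hη, ?_⟩
  filter_upwards [tendsto_reverse.eventually hη'] with g hg X hXo hX
  obtain ⟨p, hp, hpη⟩ := hg (fun k y => X k.rev (Fin.rev y)) (fun i j hij x y hx hy =>
    Fin.rev_lt_rev.1 (hXo _ _ (Fin.rev_lt_rev.2 hij) _ _ hy hx)) (by
      let e : (Fin 5 → Fin g.1) ≃ (Fin 5 → Fin g.1) := Equiv.arrowCongr Fin.revPerm Fin.revPerm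
      have he : ∀ x k, e x k = (x k.rev).rev := fun _ _ => rfl
      rw [← dens_equiv e] at hX
      refine le_dens_of_forall hX fun (x : Fin 5 → Fin g.1) hx => ⟨fun i => ?_, fun i j => ?_⟩
      · have := hx.1 i.rev
        rwa [he, Fin.rev_rev] at this
      · have := hx.2 i.rev j.rev
        rwa [he, he, Fin.rev_rev, Fin.rev_rev] at this)
  refine ⟨_, Finset.mem_image_of_mem _ hp, hpη.trans_le ?_⟩
  let e : Fin g.1 × Fin g.1 ≃ Fin g.1 × Fin g.1 :=
    (Equiv.prodComm _ _).trans (Equiv.prodCongr Fin.revPerm Fin.revPerm)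
  unfold edgeDens
  conv_rhs => rw [← dens_equiv e]
  exact dens_mono fun x hx => ⟨hx.2.1, hx.1, hx.2.2.symm⟩

theorem exists_increasing_pattern (p : Fin 5 → Fin 5 → Prop) : ∃ z₁ z₂ z₃ z₄, z₁ < z₂ ∧ z₂ < z₃ ∧
    z₃ < z₄ ∧ (¬ p z₁ z₂ ∧ ¬ p z₂ z₃ ∨ ¬ p z₁ z₂ ∧ p z₂ z₃ ∧ p z₃ z₄ ∨ ¬ p z₃ z₄ ∧ ¬ p z₂ z₃ ∨
      ¬ p z₃ z₄ ∧ p z₂ z₃ ∧ p z₁ z₂ ∨ p z₁ z₂ ∧ p z₂ z₃ ∧ p z₂ z₄ ∧ p z₃ z₄) := by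
  by_contra! h
  have h1 := h 0 1 2 3 (by decide) (by decide) (by decide)
  have h2 := h 0 1 2 4 (by decide) (by decide) (by decide)
  have h3 := h 0 1 3 4 (by decide) (by decide) (by decide)
  have h4 := h 0 2 3 4 (by decide) (by decide) (by decide)
  have h5 := h 1 2 3 4 (by decide) (by decide) (by decide)
  clear h
  grind +splitImp

theorem somePairDense (S : Finset (Fin 5 × Fin 5)) : SomePairDense S := by
  induction hk : Sᶜ.card using Nat.strong_induction_on generalizing S with
  | _ k ih =>
    have ins : ∀ p ∉ S, SomePairDense (insert p S) := fun p hp => ih _ (by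
      rw [← hk]
      refine Finset.card_lt_card ?_
      rw [Finset.compl_ssubset_compl]
      exact Finset.ssubset_insert hp) _ rfl
    have ins' : ∀ i j, (i, j) ∉ S →
        SomePairDense (insert (j.rev, i.rev) (reversePairs S)) := fun i j hij => by
      simpa [reversePairs] using (ins _ hij).reverse
    obtain ⟨z₁, z₂, z₃, z₄, h12, h23, h34, h | h | h | h | h⟩ :=
      exists_increasing_pattern fun i j => (i, j) ∈ S
    · exact somePairDense_of_two_transitions h12 h23 h34 (ins _ h.1) (ins _ h.2)
    · exact somePairDense_of_one_transition h12 h23 h34 (ins _ h.1) h.2.1 h.2.2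
    · rw [← reversePairs_reversePairs S]
      exact (somePairDense_of_two_transitions (Fin.rev_lt_rev.2 h34) (Fin.rev_lt_rev.2 h23)
        (Fin.rev_lt_rev.2 h12) (ins' _ _ h.1) (ins' _ _ h.2)).reverse
    · rw [← reversePairs_reversePairs S]
      exact (somePairDense_of_one_transition (Fin.rev_lt_rev.2 h34) (Fin.rev_lt_rev.2 h23)
        (Fin.rev_lt_rev.2 h12) (ins' _ _ h.1) (mem_reversePairs.2 h.2.1)
        (mem_reversePairs.2 h.2.2)).reverse
    · exact somePairDense_of_no_transition h12 h23 h34 h.1 h.2.1 h.2.2.1 h.2.2.2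

end Transitions

theorem dens_exists_le {α κ : Type*} [Fintype α] [Fintype κ] (p : κ → α → Prop) :
    dens (fun x => ∃ i, p i x) ≤ ∑ i, dens (p i) := by
  classical
  simp only [dens_eq_sum]
  rw [← Finset.sum_div, Finset.sum_comm]
  gcongr with x
  split_ifs with h
  · obtain ⟨i, hi⟩ := h
    refine le_of_eq_of_le (by simp [hi]) (Finset.single_le_sum (f := fun i => if p i x then (1 : ℝ)
      else 0) (fun i _ => ?_) (Finset.mem_univ i))
    positivity
  · positivity

/-- Some value of `f` is popular on the set defined by `p`. -/
theorem exists_le_dens_fiber {α κ : Type*} [Fintype α] [Fintype κ] [Nonempty κ] {p : α → Prop}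
    (f : α → κ) {δ : ℝ} (hδ : 0 < δ) (h : δ ≤ dens p) :
    ∃ z, δ * (1 / Fintype.card κ) ≤ dens fun x => p x ∧ f x = z := by
  refine exists_le_dens (p := fun z x => p x ∧ f x = z) (by positivity) ?_
  rw [dens_swap fun x z => p x ∧ f x = z]
  refine mul_le_dens (p := fun x z => f x = z) (by positivity) h fun a _ => ?_
  simp [dens]

theorem dens_window_le {n : ℕ} {ι : Type*} [Fintype ι] [DecidableEq ι] {i j : ι} (hij : i ≠ j)
    (m : ℕ) : dens (fun x : ι → Fin n => (x i : ℕ) ≤ x j ∧ (x j : ℕ) ≤ x i + m) ≤ (m + 1) / n := by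
  classical
  rw [← dens_update j, dens_swap fun (r : ι → Fin n) a =>
    (Function.update r j a i : ℕ) ≤ Function.update r j a j ∧
      (Function.update r j a j : ℕ) ≤ Function.update r j a i + m]
  refine dens_prod_le (p := fun (r : ι → Fin n) a =>
    (Function.update r j a i : ℕ) ≤ Function.update r j a j ∧
      (Function.update r j a j : ℕ) ≤ Function.update r j a i + m) (by positivity) fun r => ?_
  simp only [Function.update_self, Function.update_of_ne hij, dens, Fintype.card_fin,
    Fin.val_fin_le]
  gcongr
  have := Nat.card_le_card_of_injective
    (fun a : {a : Fin n // r i ≤ a ∧ (a : ℕ) ≤ r i + m} =>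
      (⟨a.1, Finset.mem_Icc.2 a.2⟩ : Finset.Icc (r i : ℕ) (r i + m)))
    fun a b hab => by simpa [Subtype.ext_iff, Fin.ext_iff] using hab
  rw [Nat.card_eq_fintype_card (α := Finset.Icc _ _), Fintype.card_coe, Nat.card_Icc] at this
  exact_mod_cast (by omega)

theorem cliqueCount_le_dens {n : ℕ} (G : SimpleGraph (Fin n)) (r : ℕ) : (cliqueCount Gᶜ r : ℝ) ≤
    dens (fun x : Fin r → Fin n => StrictMono x ∧ ∀ i j, ¬ G.Adj (x i) (x j)) * n ^ r := by
  classical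
  have hcard : (Fintype.card (Fin r → Fin n) : ℝ) = n ^ r := by simp
  rw [← hcard, dens_mul_card, ← Fintype.card_subtype, ← Nat.card_eq_fintype_card, cliqueCount,
    ← Nat.card_coe_set_eq, Nat.cast_le]
  refine Nat.card_le_card_of_injective (fun s => ⟨s.1.orderEmbOfFin s.2.1,
    (s.1.orderEmbOfFin s.2.1).strictMono, fun i j hij => ?_⟩) fun s t hst => ?_
  · exact ((SimpleGraph.compl_adj _ _ _).1 (s.2.2 (s.1.orderEmbOfFin_mem s.2.1 i)
      (s.1.orderEmbOfFin_mem s.2.1 j) hij.ne)).2 hij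
  · refine Subtype.ext (Finset.coe_injective ?_)
    rw [← s.1.range_orderEmbOfFin s.2.1, ← t.1.range_orderEmbOfFin t.2.1]
    exact congrArg Set.range (Subtype.ext_iff.1 hst)

theorem eventually_dens_increasing_lt {ε : ℝ} (hε : 0 < ε) : ∀ᶠ g in sparseFilter,
    dens (fun x : Fin 5 → Fin g.1 => StrictMono x ∧ ∀ i j, ¬ g.2.Adj (x i) (x j)) < ε := by
  obtain ⟨K, hK⟩ := exists_nat_gt (16 / ε)
  have hK0 : (0 : ℝ) < K := (by positivity : 0 < 16 / ε).trans hK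
  have hK0' : 0 < K := by exact_mod_cast hK0
  have : NeZero K := ⟨hK0'.ne'⟩
  obtain ⟨η, hη, h⟩ := somePairDense ∅ (ε / 2 * (1 / Fintype.card (Fin 5 → Fin K))) (by positivity)
  have hlarge : ∀ᶠ g in sparseFilter, 16 / ε < g.1 := by
    obtain ⟨N, hN⟩ := exists_nat_gt (16 / ε)
    exact ⟨1, one_pos, N, fun n hn _ _ _ => hN.trans_le (Nat.cast_le.2 hn)⟩
  filter_upwards [h, hlarge] with ⟨n, G⟩ h hn
  dsimp only at h hn ⊢
  by_contra! hd
  have hn0 : (0 : ℝ) < n := (by positivity : 0 < 16 / ε).trans hn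
  have hn0' : 0 < n := by exact_mod_cast hn0
  let f : Fin n → Fin K := fun v =>
    ⟨v * K / n, Nat.div_lt_of_lt_mul (Nat.mul_lt_mul_of_pos_right v.2 hK0')⟩
  have hf : Monotone f := fun u v huv => Nat.div_le_div_right (Nat.mul_le_mul_right K huv)
  have hfm : ∀ u v, f u = f v → (v : ℕ) ≤ u + n / K := by
    intro u v huv
    have h1 : (u : ℕ) * K / n = v * K / n := Fin.ext_iff.1 huv
    have h2 := Nat.div_add_mod (u * K) n
    have h3 := Nat.div_add_mod (v * K) n
    have h4 := Nat.mod_lt (v * K) hn0'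
    rw [h1] at h2
    rw [← Nat.sub_le_iff_le_add', Nat.le_div_iff_mul_le hK0', Nat.sub_mul]
    omega
  have hbad : dens (fun x : Fin 5 → Fin n => ∃ i : Fin 4,
      (x i.castSucc : ℕ) ≤ x i.succ ∧ (x i.succ : ℕ) ≤ x i.castSucc + n / K) ≤ ε / 2 := by
    have h1 : ((n / K : ℕ) : ℝ) ≤ n / K := Nat.cast_div_le
    have h2 : 1 / (K : ℝ) ≤ ε / 16 := by
      rw [div_lt_iff₀ hε] at hK
      rw [div_le_iff₀ hK0]
      linarith
    have h3 : 1 / (n : ℝ) ≤ ε / 16 := by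
      rw [div_lt_iff₀ hε] at hn
      rw [div_le_iff₀ hn0]
      linarith
    calc _ ≤ ∑ _i : Fin 4, ((n / K : ℕ) + 1 : ℝ) / n :=
          (dens_exists_le _).trans (Finset.sum_le_sum fun i _ =>
            dens_window_le (Fin.castSucc_lt_succ (i := i)).ne _)
      _ ≤ 4 * ((n / K + 1) / n) := by
          simp only [Finset.sum_const, Finset.card_univ, Fintype.card_fin, nsmul_eq_mul]
          push_cast
          gcongr
      _ = 4 * (1 / K + 1 / n) := by field_simp
      _ ≤ ε / 2 := by linarith
  have hgood := sub_le_dens _ hd hbad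
  rw [sub_half] at hgood
  obtain ⟨z, hz⟩ := exists_le_dens_fiber (fun x i => f (x i)) (half_pos hε) hgood
  obtain ⟨x, ⟨⟨hx, -⟩, hxb⟩, hxz⟩ := exists_of_dens_pos (hz.trans_lt' (by positivity))
  have hzm : StrictMono z := by
    refine Fin.strictMono_iff_lt_succ.2 fun i => ?_
    rw [← hxz]
    have hlt := hx (Fin.castSucc_lt_succ (i := i))
    exact (hf hlt.le).lt_of_ne fun he => hxb ⟨i, hlt.le, hfm _ _ he⟩
  obtain ⟨p, hp, -⟩ := h (fun i v => f v = z i)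
    (fun i j hij u v hu hv => hf.reflect_lt (by rw [hu, hv]; exact hzm hij))
    (le_dens_of_forall hz fun y hy => ⟨fun i => congrFun hy.2 i, hy.1.1.2⟩)
  exact Finset.notMem_empty p hp

theorem stmt_1 (ε : ℝ) (hε : 0 < ε) :
    ∃ c : ℝ, 0 < c ∧ ∃ n₀ : ℕ, ∀ n : ℕ, n₀ ≤ n →
      ∀ G : SimpleGraph (Fin n),
        ¬ HasIndMonPath G 7 →
        ε * (n : ℝ) ^ 5 ≤ (cliqueCount Gᶜ 5 : ℝ) →
        ContainsBlowup Gᶜ 2 ⌈c * (n : ℝ) / Real.log n⌉₊ := by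
  obtain ⟨c, hc, n₀, h⟩ := eventually_dens_increasing_lt hε
  refine ⟨c, hc, max n₀ 1, fun n hn G hP hG => ?_⟩
  by_contra hB
  have hn0 : (0 : ℝ) < n := by exact_mod_cast le_of_max_le_right hn
  have hlt := h n (le_of_max_le_left hn) G hP hB
  exact (hG.trans (cliqueCount_le_dens G 5)).not_gt (mul_lt_mul_of_pos_right hlt (by positivity))
end
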